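/- Let K be a number field, fix an embedding of K into the complex numbers, and let f(z) = ∑_{n≥0} a_n z^n ∈ K[[z]] be a D-finite power series whose radius of convergence r (of the complex series ∑ a_n z^n) satisfies 0 < r < ∞. Then at least one of the following holds: (i) there is c > 0 such that {n ∈ ℕ : h(a_n) ≥ c·n} has positive upper density; (ii) there is c > 0 such that {n ∈ ℕ : den(a_n) ≥ c·n} has positive upper density, and there is a constant C such that {n ∈ ℕ : h(a_n) > (1/[K:ℚ])·log n − C} has positive upper density; (iii) there exist nonnegative integers M, N such that (1 − z^M)^N · f(z) is a polynomial, i.e. f is a rational function all of whose finite poles are roots of unity. -/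

import Mathlib

/-!
Suppose that (i) and the first half of (ii) fail; the second half of (ii) follows from the first
because `log (den α) ≤ [K : ℚ] h(α)` (`height_of_den`). Then, outside a set of density zero, `a n`
has denominator at most `ε n` and all its conjugates are at most `exp (ε n)`: the sequence is mostly
tame (`mostlyTame_of_not_pos`). The point is that a mostly tame D-finite sequence has a rational
generating function with poles at roots of unity (`rational_of_mostlyTame`).

*Analysis.* A solution of the differential equation that converges in the unit disc continues
analytically a fixed distance across the arcs of the unit circle that avoid the zeros of the leading
coefficient (`global_extension`). Pushing the Cauchy contour outwards there (`contour_bound`) shows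
that, if `E` is the shift and `χ` vanishes at the reciprocals of the singular points on the circle,
then `χ(E)^s (P a)` is very small for every polynomial `P` of low degree (`smallness`). The estimate
is used twice.

*Radius.* If the radius of convergence were less than one, then after rescaling the coefficients
would be exponentially small at the tame indices. Taking for `P` a polynomial that vanishes at the
other indices near `m`, one isolates the coefficient of index `m`, so all coefficients are
exponentially small (`exp_decay`), a contradiction (`one_le_radius`).

*Vanishing.* The Thue-Siegel lemma, in the basis of binomial coefficients, gives a nonzero `P` of
small degree and small size that vanishes at all non-tame indices up to `4 N`. The terms of
`χ(E)^s (P a)` are then cleared of denominators by `lcm (1, …, ε N)`, have moderate conjugates and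
are tiny at the given embedding, so the product formula forces them to vanish on `[N, 3 N]`
(`key_window`). The polynomials attached to the windows `N = 2^k N₀` are compared on the overlaps,
and the polynomial recurrence satisfied by `a` (`recurrence_of_ode`) yields one nonzero `P` for
which `P a` satisfies a constant coefficient recurrence on a half-line (`endgame`).

*Arithmetic.* Take a minimal multiset of characteristic roots. Removing a root `α` leaves a nonzero
geometric sequence of ratio `α`, whose height grows like `n h(α)`; tameness gives `h(α) = 0`, and
`α` is a root of unity by Northcott's theorem (`roots_of_unity`). Hence for some `M` the sequence
`a` agrees on each residue class modulo `M` with a rational function of `n`. Its proper part has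
conjugates `O(1/n)` and denominators `o(n)`, so it vanishes (`dvd_of_tame`), and `a` is eventually
polynomial on each class. Therefore `(1 - z ^ M) ^ N` times the series is a polynomial
(`rational_of_ann`).
-/

open Filter Polynomial PowerSeries

/-- The upper density of a set of natural numbers. -/
noncomputable def upperDensity (S : Set ℕ) : ℝ :=
  Filter.limsup (fun n => ((S ∩ Set.Icc 1 n).ncard : ℝ) / n) Filter.atTop

/-- `S ⊆ ℕ` has positive upper density. -/
def HasPosUpperDensity (S : Set ℕ) : Prop := 0 < upperDensity S

/-- `S ⊆ ℕ` has zero density. -/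
def HasZeroDensity (S : Set ℕ) : Prop := upperDensity S = 0
open NumberField in
/-- The denominator ideal of `α ∈ K`: the ideal of `x ∈ 𝓞 K` with `x • α` integral. -/
noncomputable def denIdeal (K : Type*) [Field K] [NumberField K] (α : K) : Ideal (𝓞 K) :=
  (1 : Submodule (𝓞 K) K).colon (Submodule.span (𝓞 K) {α})

open NumberField in
/-- The absolute logarithmic Weil height of `α ∈ K`:
`h(α) = (log N(𝔡_α) + ∑_{σ : K →+* ℂ} log⁺ |σ α|) / [K:ℚ]`, which agrees with
`∑_{w ∈ M_K} log max(|α|_w, 1)` for the standard normalized absolute values. -/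
noncomputable def weilHeight (K : Type*) [Field K] [NumberField K] (α : K) : ℝ :=
  (Real.log (Ideal.absNorm (denIdeal K α)) +
    ∑ σ : K →+* ℂ, Real.log (max 1 ‖σ α‖)) / (Module.finrank ℚ K)
/-- The denominator of an algebraic number `α ∈ K`: the smallest positive integer `d`
such that `d α` is an algebraic integer. -/
noncomputable def den (K : Type*) [Field K] [NumberField K] (α : K) : ℕ :=
  sInf {d : ℕ | 0 < d ∧ IsIntegral ℤ ((d : K) * α)}
/-- The formal derivative of a power series. -/
noncomputable def psDeriv {k : Type*} [Field k] : PowerSeries k → PowerSeries k :=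
  PowerSeries.derivativeFun

/-- A power series is D-finite if it satisfies a nontrivial linear homogeneous
differential equation `A₀ f⁽ᵖ⁾ + A₁ f⁽ᵖ⁻¹⁾ + ⋯ + A_p f = 0` with polynomial
coefficients and `A₀ ≠ 0`. -/
def IsDFinite {k : Type*} [Field k] (f : PowerSeries k) : Prop :=
  ∃ (p : ℕ) (A : Fin (p + 1) → Polynomial k), A 0 ≠ 0 ∧
    ∑ i : Fin (p + 1), (A i : PowerSeries k) * (psDeriv^[p - i.val] f) = 0
/-- The radius of convergence of the complex power series `∑ a_n z^n`. -/
noncomputable def seriesRadius (a : ℕ → ℂ) : ENNReal :=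
  ⨆ (r : NNReal) (_ : ∃ C : ℝ, ∀ n, ‖a n‖ * (r : ℝ) ^ n ≤ C), (r : ENNReal)

/-! ### Shift operators and constant coefficient recurrences -/

section Sequences
variable {K : Type*} [Field K]

/-- The shift operator `(y n) ↦ (y (n+1))` on sequences. -/
def shiftE (K : Type*) [Field K] : Module.End K (ℕ → K) where
  toFun y := fun n => y (n + 1)
  map_add' _ _ := rfl
  map_smul' _ _ := rfl

/-- Multiplication of a sequence by the values of a polynomial at the naturals. -/
def polyMul (P : K[X]) (y : ℕ → K) : ℕ → K := fun n => P.eval (n : K) * y n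

lemma shiftE_pow_apply (i : ℕ) (y : ℕ → K) (n : ℕ) : ((shiftE K) ^ i) y n = y (n + i) := by
  induction i generalizing n with
  | zero => simp
  | succ i ih =>
    rw [pow_succ']
    change ((shiftE K) ^ i) y (n + 1) = _
    rw [ih]; congr 1; ring

lemma aeval_shiftE_apply (c : K[X]) (y : ℕ → K) (n : ℕ) :
    aeval (shiftE K) c y n = ∑ i ∈ Finset.range (c.natDegree + 1), c.coeff i * y (n + i) := by
  rw [aeval_eq_sum_range]
  simp [shiftE_pow_apply]

lemma aeval_shiftE_apply' (c : K[X]) (y : ℕ → K) (n D : ℕ) (hD : c.natDegree ≤ D) :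
    aeval (shiftE K) c y n = ∑ i ∈ Finset.range (D + 1), c.coeff i * y (n + i) := by
  rw [aeval_eq_sum_range' (Nat.lt_succ_of_le hD)]
  simp [shiftE_pow_apply]

lemma aeval_shiftE_monomial (i : ℕ) (a : K) (y : ℕ → K) (n : ℕ) :
    aeval (shiftE K) (Polynomial.monomial i a) y n = a * y (n + i) := by
  rw [aeval_monomial]
  simp [shiftE_pow_apply]

/-- The commutation rule between a recurrence operator and multiplication by `n`. -/
lemma aeval_shiftE_mul_nat (c : K[X]) (y : ℕ → K) :
    aeval (shiftE K) c (polyMul Polynomial.X y) =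
      polyMul Polynomial.X (aeval (shiftE K) c y) + aeval (shiftE K) (Polynomial.X * derivative c) y := by
  induction c using Polynomial.induction_on' with
  | add p q hp hq =>
    simp only [map_add, LinearMap.add_apply, hp, hq, mul_add]
    ext n; simp [polyMul]; ring
  | monomial i a =>
    ext n
    rw [Pi.add_apply, aeval_shiftE_monomial]
    have : Polynomial.X * derivative (Polynomial.monomial i a) = Polynomial.monomial i (a * (i : K)) := by
      rcases i with _ | i
      · simp
      · rw [derivative_monomial, X_mul_monomial]; simp
    rw [this, aeval_shiftE_monomial]
    simp only [polyMul, eval_X, aeval_shiftE_monomial]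
    push_cast; ring

lemma aeval_mul_apply_zero (b c : K[X]) (y : ℕ → K) (h : aeval (shiftE K) c y = 0) :
    aeval (shiftE K) (b * c) y = 0 := by
  rw [map_mul, Module.End.mul_apply, h, map_zero]

lemma aeval_dvd_apply_zero {b c : K[X]} {y : ℕ → K} (hd : c ∣ b)
    (h : aeval (shiftE K) c y = 0) : aeval (shiftE K) b y = 0 := by
  obtain ⟨e, rfl⟩ := hd
  rw [mul_comm]; exact aeval_mul_apply_zero _ _ _ h

lemma ann_nat_mul (χ : K[X]) (s : ℕ) (y : ℕ → K) (h : aeval (shiftE K) (χ ^ s) y = 0) :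
    aeval (shiftE K) (χ ^ (s + 1)) (polyMul Polynomial.X y) = 0 := by
  rw [aeval_shiftE_mul_nat]
  have h1 : aeval (shiftE K) (χ ^ (s + 1)) y = 0 := aeval_dvd_apply_zero (pow_dvd_pow _ (by omega)) h
  have h2 : aeval (shiftE K) (Polynomial.X * derivative (χ ^ (s + 1))) y = 0 := by
    apply aeval_dvd_apply_zero _ h
    rw [derivative_pow_succ]
    exact Dvd.intro_left (Polynomial.X * (Polynomial.C ((s : K) + 1)) * derivative χ) (by ring)
  rw [h1, h2]
  ext n; simp [polyMul]

/-- Multiplying by a polynomial of degree at most `t` raises the order of annihilation by at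
most `t`. -/
lemma ann_polyMul (χ : K[X]) (s t : ℕ) (P : K[X]) (hP : P.natDegree ≤ t) (y : ℕ → K)
    (h : aeval (shiftE K) (χ ^ s) y = 0) :
    aeval (shiftE K) (χ ^ (s + t)) (polyMul P y) = 0 := by
  have hpow : ∀ i : ℕ, aeval (shiftE K) (χ ^ (s + i)) (polyMul (Polynomial.X ^ i) y) = 0 := by
    intro i
    induction i with
    | zero =>
      have e : polyMul (Polynomial.X ^ 0) y = y := by funext n; simp [polyMul]
      rw [e]; exact h
    | succ i ih =>
      have := ann_nat_mul χ (s + i) _ ih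
      have e : polyMul (Polynomial.X ^ (i + 1)) y =
          polyMul Polynomial.X (polyMul (Polynomial.X ^ i) y) := by
        funext n; simp only [polyMul, eval_pow, eval_X]; ring
      rw [e]; exact this
  have hrep : polyMul P y = ∑ i ∈ Finset.range (t + 1), P.coeff i • polyMul (Polynomial.X ^ i) y := by
    ext n
    simp only [polyMul, Finset.sum_apply, Pi.smul_apply, smul_eq_mul]
    rw [eval_eq_sum_range' (Nat.lt_succ_of_le hP), Finset.sum_mul]
    apply Finset.sum_congr rfl; intro i _; simp; ring
  rw [hrep, map_sum]
  apply Finset.sum_eq_zero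
  intro i hi
  rw [map_smul, aeval_dvd_apply_zero (pow_dvd_pow χ (by simp at hi; omega)) (hpow i), smul_zero]

lemma ann_shift (c : K[X]) (y : ℕ → K) (k : ℕ) (h : aeval (shiftE K) c y = 0) :
    aeval (shiftE K) c (fun n => y (n + k)) = 0 := by
  ext n
  have := congrFun h (n + k)
  rw [aeval_shiftE_apply] at this ⊢
  simp only [Pi.zero_apply] at this ⊢
  rw [← this]
  apply Finset.sum_congr rfl; intro i _
  rw [show n + i + k = n + k + i by ring]

/-- A solution of a constant coefficient recurrence whose initial window vanishes is zero. -/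
lemma ann_zero_forward (c : K[X]) (hc : c ≠ 0) (y : ℕ → K) (h : aeval (shiftE K) c y = 0)
    (h0 : ∀ n < c.natDegree, y n = 0) : y = 0 := by
  ext n
  induction n using Nat.strong_induction_on with
  | _ n ih =>
    rcases lt_or_ge n c.natDegree with hn | hn
    · exact h0 n hn
    · have := congrFun h (n - c.natDegree)
      rw [aeval_shiftE_apply, Finset.sum_range_succ] at this
      rw [Finset.sum_eq_zero, zero_add, Nat.sub_add_cancel hn] at this
      · simpa [hc] using this
      · intro i hi
        simp at hi
        rw [ih _ (by omega)]; simp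

/-- If the constant coefficient does not vanish, solutions are determined by their tails. -/
lemma ann_zero_backward (c : K[X]) (hc : c.coeff 0 ≠ 0) (y : ℕ → K)
    (h : aeval (shiftE K) c y = 0) (M : ℕ) (h0 : ∀ n ≥ M, y n = 0) : y = 0 := by
  induction M with
  | zero => ext n; exact h0 n (by omega)
  | succ M ih =>
    apply ih
    intro n hn
    rcases Nat.lt_or_ge M n with h1 | h1
    · exact h0 n h1
    · have := congrFun h n
      rw [aeval_shiftE_apply, Finset.sum_range_succ'] at this
      rw [Finset.sum_eq_zero, zero_add] at this
      · simpa [hc] using this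
      · intro i _
        rw [h0 _ (by omega)]; simp

/-- Existence of a solution with prescribed initial window. -/
lemma ann_exists (c : K[X]) (hc : c ≠ 0) (b : ℕ → K) :
    ∃ u : ℕ → K, aeval (shiftE K) c u = 0 ∧ ∀ n < c.natDegree, u n = b n := by
  let R : LinearRecurrence K :=
    ⟨c.natDegree, fun i => - c.coeff i / c.leadingCoeff⟩
  refine ⟨R.mkSol (fun i => b i), ?_, ?_⟩
  · ext n
    have hs := R.is_sol_mkSol (fun i => b i) n
    rw [aeval_shiftE_apply, Finset.sum_range_succ]
    change R.mkSol (fun i => b i) (n + c.natDegree) = ∑ i : Fin c.natDegree, _ at hs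
    rw [hs, Finset.mul_sum, Finset.sum_range, ← Finset.sum_add_distrib]
    apply Finset.sum_eq_zero
    intro i _
    have : c.leadingCoeff ≠ 0 := leadingCoeff_ne_zero.mpr hc
    simp only [R]
    change _ + c.leadingCoeff * _ = _
    field_simp
    ring
  · intro n hn
    exact R.mkSol_eq_init (fun i => b i) ⟨n, hn⟩

end Sequences

/-! ### From annihilation on windows to annihilation on a half-line -/

section Endgame
variable {K : Type*} [Field K]

/-- If the recurrence holds on `[A, B]` and the first window at `A` vanishes, the sequence vanishes
on the whole range that the recurrence reaches. -/
lemma ann_zero_forward_local (c : K[X]) (hc : c ≠ 0) (y : ℕ → K) (A B : ℕ)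
    (h : ∀ n, A ≤ n → n ≤ B → aeval (shiftE K) c y n = 0)
    (h0 : ∀ n, A ≤ n → n < A + c.natDegree → y n = 0) :
    ∀ n, A ≤ n → n ≤ B + c.natDegree → y n = 0 := by
  intro n
  induction n using Nat.strong_induction_on with
  | _ n ih =>
    intro hA hB
    rcases lt_or_ge n (A + c.natDegree) with hn | hn
    · exact h0 n hA hn
    · have := h (n - c.natDegree) (by omega) (by omega)
      rw [aeval_shiftE_apply, Finset.sum_range_succ] at this
      rw [Finset.sum_eq_zero, zero_add, Nat.sub_add_cancel (by omega)] at this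
      · simpa [hc] using this
      · intro i hi
        simp at hi
        rw [ih _ (by omega) (by omega) (by omega)]; simp

/-- With nonzero constant coefficient, a solution vanishing on a long enough window is zero. -/
lemma ann_zero_of_window (c : K[X]) (hc : c.coeff 0 ≠ 0) (y : ℕ → K)
    (h : aeval (shiftE K) c y = 0) (A : ℕ)
    (h0 : ∀ n, A ≤ n → n < A + c.natDegree → y n = 0) : y = 0 := by
  have hc0 : c ≠ 0 := by rintro rfl; simp at hc
  refine ann_zero_backward c hc y h A fun n hn => ?_
  exact ann_zero_forward_local c hc0 y A n (fun m _ _ => congrFun h m) h0 n hn (by omega)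

/-- With nonzero constant coefficient, a solution extends one step to the left. -/
lemma ann_unshift (c : K[X]) (hc : c.coeff 0 ≠ 0) (u : ℕ → K)
    (h : aeval (shiftE K) c u = 0) :
    ∃ v : ℕ → K, aeval (shiftE K) c v = 0 ∧ ∀ n, v (n + 1) = u n := by
  let v0 : K := - (∑ i ∈ Finset.range c.natDegree, c.coeff (i + 1) * u i) / c.coeff 0
  refine ⟨fun n => Nat.casesOn n v0 u, ?_, fun n => rfl⟩
  ext n
  rw [aeval_shiftE_apply]
  rcases n with _ | n
  · rw [Finset.sum_range_succ']
    have hv : c.coeff 0 * v0 = - ∑ i ∈ Finset.range c.natDegree, c.coeff (i + 1) * u i := by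
      simp only [v0]; field_simp
    simp only [zero_add, Pi.zero_apply]
    change _ + c.coeff 0 * v0 = 0
    rw [hv]; exact add_neg_cancel _
  · have := congrFun h n
    rw [aeval_shiftE_apply] at this
    refine Eq.trans ?_ this
    apply Finset.sum_congr rfl
    intro i _
    rw [show n + 1 + i = (n + i) + 1 by ring]

/-- A solution with a prescribed window starting at `N`. -/
lemma ann_exists_window (c : K[X]) (hc : c.coeff 0 ≠ 0) (N : ℕ) :
    ∀ b : ℕ → K, ∃ u : ℕ → K, aeval (shiftE K) c u = 0 ∧
      ∀ n, N ≤ n → n < N + c.natDegree → u n = b n := by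
  have hc0 : c ≠ 0 := by rintro rfl; simp at hc
  induction N with
  | zero =>
    intro b
    obtain ⟨u, h1, h2⟩ := ann_exists c hc0 b
    exact ⟨u, h1, fun n _ hn => h2 n (by omega)⟩
  | succ N ih =>
    intro b
    obtain ⟨u, h1, h2⟩ := ih (fun n => b (n + 1))
    obtain ⟨v, h3, h4⟩ := ann_unshift c hc u h1
    refine ⟨v, h3, fun n hn hn' => ?_⟩
    obtain ⟨m, rfl⟩ : ∃ m, n = m + 1 := ⟨n - 1, by omega⟩
    rw [h4, h2 m (by omega) (by omega)]

lemma coeff_zero_pow_ne {χ : K[X]} (h : χ.coeff 0 ≠ 0) (s : ℕ) : (χ ^ s).coeff 0 ≠ 0 := by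
  rw [coeff_zero_eq_eval_zero] at h ⊢
  rw [eval_pow]; exact pow_ne_zero _ h

lemma eventually_eval_ne_zero [CharZero K] (P : K[X]) (hP : P ≠ 0) :
    ∃ n₀ : ℕ, ∀ n ≥ n₀, P.eval (n : K) ≠ 0 := by
  classical
  have hfin : {n : ℕ | P.eval (n : K) = 0}.Finite := by
    refine Set.Finite.of_finite_image (f := fun n : ℕ => (n : K)) ?_ Nat.cast_injective.injOn
    refine (P.roots.toFinset.finite_toSet).subset ?_
    rintro _ ⟨n, hn, rfl⟩
    simpa [hP] using hn
  obtain ⟨b, hb⟩ := hfin.bddAbove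
  refine ⟨b + 1, fun n hn h0 => ?_⟩
  have := hb h0
  omega

/-- Some block of `d` consecutive integers in `[N, N + d (t + 1))` avoids the zeros of a
polynomial of degree at most `t`. -/
lemma exists_block [CharZero K] (P : K[X]) (hP : P ≠ 0) (t d N : ℕ) (ht : P.natDegree ≤ t) :
    ∃ q, q ≤ t ∧ ∀ i < d, P.eval ((N + d * q + i : ℕ) : K) ≠ 0 := by
  classical
  by_contra! hcon
  choose! f hf hf' using hcon
  have hinj : Set.InjOn (fun q => ((N + d * q + f q : ℕ) : K)) (Finset.range (t + 1)) := by
    intro q hq q' hq' h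
    simp only [Finset.coe_range, Set.mem_Iio] at hq hq'
    have h1 := hf q (by omega)
    have h2 := hf q' (by omega)
    have h3 : N + d * q + f q = N + d * q' + f q' := Nat.cast_injective (R := K) h
    have hd : 0 < d := by omega
    have e1 : (d * q + f q) / d = q := by
      rw [Nat.mul_add_div hd, Nat.div_eq_of_lt h1]; rfl
    have e2 : (d * q' + f q') / d = q' := by
      rw [Nat.mul_add_div hd, Nat.div_eq_of_lt h2]; rfl
    rw [← e1, ← e2]; congr 1; omega
  have hsub : (Finset.range (t + 1)).image (fun q => ((N + d * q + f q : ℕ) : K)) ⊆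
      P.roots.toFinset := by
    intro x hx
    simp only [Finset.mem_image, Finset.mem_range] at hx
    obtain ⟨q, hq, rfl⟩ := hx
    simp only [Multiset.mem_toFinset, mem_roots hP, IsRoot.def]
    exact hf' q (by omega)
  have h1 := Finset.card_le_card hsub
  rw [Finset.card_image_of_injOn hinj, Finset.card_range] at h1
  have h2 := (Multiset.toFinset_card_le P.roots).trans (P.card_roots')
  omega

/-- From annihilation on all large finite windows, with multipliers of small relative degree,
to annihilation on a half-line with one fixed multiplier. -/
lemma endgame [CharZero K] (a : ℕ → K) (χ : K[X]) (hχ : χ.coeff 0 ≠ 0)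
    (d : ℕ) (Q : ℕ → K[X]) (hQ : Q d ≠ 0)
    (hrec : ∀ n : ℕ, ∑ j ∈ Finset.range (d + 1), (Q j).eval (n : K) * a (n + j) = 0)
    (key : ∀ q : ℕ, ∀ᶠ N : ℕ in atTop, ∃ (P : K[X]) (s : ℕ), P ≠ 0 ∧
      q * P.natDegree ≤ N ∧ q * s ≤ N ∧
      ∀ m, N ≤ m → m ≤ 3 * N → aeval (shiftE K) (χ ^ s) (polyMul P a) m = 0) :
    ∃ (P : K[X]) (s N₀ : ℕ), P ≠ 0 ∧
      ∀ m ≥ N₀, aeval (shiftE K) (χ ^ s) (polyMul P a) m = 0 := by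
  have hχ0 : χ ≠ 0 := by rintro rfl; simp at hχ
  set e := χ.natDegree with he
  obtain ⟨D, hD⟩ : ∃ D, ∀ j ∈ Finset.range (d + 1), (Q j).natDegree ≤ D :=
    ⟨(Finset.range (d + 1)).sup fun j => (Q j).natDegree,
      fun j hj => Finset.le_sup (f := fun j => (Q j).natDegree) hj⟩
  set q := 6 * (e + 1) * (d + 2) with hq
  obtain ⟨N₁, hN₁⟩ := eventually_atTop.mp (key q)
  set N₀ := N₁ + 2 * e * D + 4 * d + 4 with hN₀
  let Nk : ℕ → ℕ := fun k => 2 ^ k * N₀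
  have hNk : ∀ k, N₀ ≤ Nk k := fun k => Nat.le_mul_of_pos_left _ (by positivity)
  have hNk1 : ∀ k, Nk (k + 1) = 2 * Nk k := fun k => by simp only [Nk]; ring
  choose P s hP0 hPd hs hPs using fun k => hN₁ (Nk k) (by have := hNk k; omega)
  -- a solution on all of `ℕ` agreeing with `P k * a` on the window
  have hu : ∀ k, ∃ u : ℕ → K, aeval (shiftE K) (χ ^ s k) u = 0 ∧
      ∀ n, Nk k ≤ n → n ≤ 3 * Nk k → u n = polyMul (P k) a n := by
    intro k
    obtain ⟨u, h1, h2⟩ := ann_exists_window (χ ^ s k) (coeff_zero_pow_ne hχ _) (Nk k)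
      (polyMul (P k) a)
    refine ⟨u, h1, fun n hn hn' => ?_⟩
    have := ann_zero_forward_local (χ ^ s k) (pow_ne_zero _ hχ0) (u - polyMul (P k) a)
      (Nk k) (3 * Nk k) (fun m hm hm' => by
        rw [map_sub, h1, Pi.sub_apply, hPs k m hm hm']; simp)
      (fun m hm hm' => by rw [Pi.sub_apply, h2 m hm hm', sub_self]) n hn (by omega)
    exact sub_eq_zero.mp this
  choose u hu1 hu2 using hu
  -- cross differences are annihilated globally, so they vanish once they vanish on a long block
  have hcross : ∀ j k, aeval (shiftE K) (χ ^ (s k + (s j + (P j).natDegree + (P k).natDegree)))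
      (polyMul (P j) (u k) - polyMul (P k) (u j)) = 0 := by
    intro j k
    rw [map_sub]
    rw [aeval_dvd_apply_zero (pow_dvd_pow χ (by omega))
      (ann_polyMul χ _ _ (P j) le_rfl _ (hu1 k)),
      aeval_dvd_apply_zero (pow_dvd_pow χ (by omega))
      (ann_polyMul χ _ _ (P k) le_rfl _ (hu1 j)), sub_zero]
  have hsmall : ∀ x N : ℕ, q * x ≤ N → 6 * (e * x) ≤ N := by
    intro x N h
    refine le_trans ?_ h
    rw [hq]
    nlinarith [Nat.zero_le (e * x), Nat.zero_le x, Nat.zero_le (e*x*d), Nat.zero_le (x * d)]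
  -- the windows `[N_k, 3 N_k]` and `[2 N_k, 6 N_k]` share `[2 N_k, 3 N_k]`, which is longer than
  -- the order of the annihilator
  have hstep : ∀ k, polyMul (P (k + 1)) (u k) = polyMul (P k) (u (k + 1)) := by
    intro k
    have := ann_zero_of_window _ (coeff_zero_pow_ne hχ _) _ (hcross (k + 1) k) (Nk (k + 1)) ?_
    · exact sub_eq_zero.mp this
    · intro n hn hn'
      rw [natDegree_pow] at hn'
      have b1 := hsmall _ _ (hs k)
      have b2 := hsmall _ _ (hs (k + 1))
      have b3 := hsmall _ _ (hPd k)
      have b4 := hsmall _ _ (hPd (k + 1))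
      have b5 : (s k + (s (k + 1) + (P (k + 1)).natDegree + (P k).natDegree)) * e =
        e * s k + e * s (k + 1) + e * (P (k + 1)).natDegree + e * (P k).natDegree := by ring
      rw [← he, b5] at hn'
      rw [hNk1] at b2 b4 hn hn'
      simp only [Pi.sub_apply, polyMul]
      rw [hu2 k n (by omega) (by omega), hu2 (k + 1) n (by rw [hNk1]; omega)
        (by rw [hNk1]; omega)]
      simp only [polyMul]; ring
  have hchain : ∀ k, polyMul (P k) (u 0) = polyMul (P 0) (u k) := by
    intro k
    induction k with
    | zero => rfl
    | succ k ih =>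
      obtain ⟨n₀, hn₀⟩ := eventually_eval_ne_zero (P k) (hP0 k)
      have := ann_zero_backward _ (coeff_zero_pow_ne hχ _) _ (hcross (k + 1) 0) n₀ ?_
      · exact sub_eq_zero.mp this
      · intro n hn
        have h1 := congrFun ih n
        have h2 := congrFun (hstep k) n
        simp only [polyMul, Pi.sub_apply] at h1 h2 ⊢
        apply (mul_eq_zero.mp (_ : (P k).eval (n : K) * _ = 0)).resolve_left (hn₀ n hn)
        linear_combination (P (k + 1)).eval (n : K) * h1 + (P 0).eval (n : K) * h2
  -- the recurrence carries over to `u 0`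
  set t := (P 0).natDegree with ht
  let W : ℕ → K[X] := fun j => Q j *
    ∏ i ∈ (Finset.range (d + 1)).erase j, (P 0).comp (Polynomial.X + Polynomial.C (i : K))
  have hWeval : ∀ j (n : ℕ), (W j).eval (n : K) = (Q j).eval (n : K) *
      ∏ i ∈ (Finset.range (d + 1)).erase j, (P 0).eval ((n + i : ℕ) : K) := by
    intro j n
    simp only [W, eval_mul, eval_prod, eval_comp, eval_add, eval_X, eval_C, Nat.cast_add]
  have hWdeg : ∀ j ∈ Finset.range (d + 1), (W j).natDegree ≤ D + d * t := by
    intro j hj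
    refine natDegree_mul_le.trans (add_le_add (hD j hj) ?_)
    refine (natDegree_prod_le _ _).trans ?_
    refine (Finset.sum_le_card_nsmul _ _ t fun i _ => ?_).trans ?_
    · refine natDegree_comp_le.trans ?_
      rw [natDegree_X_add_C, mul_one]
    · rw [Finset.card_erase_of_mem hj, Finset.card_range]; simp
  have hJ0 : (fun n : ℕ => ∑ j ∈ Finset.range (d + 1), (W j).eval (n : K) * u 0 (n + j)) = 0 := by
    apply ann_zero_of_window _ (coeff_zero_pow_ne hχ (s 0 + (D + d * t))) _ ?_ (Nk 0)
    · intro n hn hn'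
      rw [natDegree_pow, ← he] at hn'
      have b1 : 6 * (e * s 0) ≤ Nk 0 := hsmall _ _ (hs 0)
      have b3 : 6 * (e * (d * t)) ≤ Nk 0 := by
        refine le_trans ?_ (hPd 0)
        rw [hq]
        nlinarith [Nat.zero_le (e * t), Nat.zero_le t, Nat.zero_le (e*t*d), Nat.zero_le (t * d)]
      have b5 : (s 0 + (D + d * t)) * e = e * s 0 + e * D + e * (d * t) := by ring
      have b6 := hNk 0
      have b7 : 2 * e * D = 2 * (e * D) := by ring
      rw [b5] at hn'
      have : ∀ j ∈ Finset.range (d + 1), (W j).eval (n : K) * u 0 (n + j) =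
          (∏ i ∈ Finset.range (d + 1), (P 0).eval ((n + i : ℕ) : K)) *
            ((Q j).eval (n : K) * a (n + j)) := by
        intro j hj
        rw [hWeval, ← Finset.mul_prod_erase _ _ hj]
        have : j < d + 1 := by simpa using hj
        rw [hu2 0 (n + j) (by omega) (by omega)]
        simp only [polyMul]; ring
      rw [Finset.sum_congr rfl this, ← Finset.mul_sum, hrec, mul_zero]
    · have : (fun n : ℕ => ∑ j ∈ Finset.range (d + 1), (W j).eval (n : K) * u 0 (n + j)) =
          ∑ j ∈ Finset.range (d + 1), polyMul (W j) (fun n => u 0 (n + j)) := by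
        funext n; simp [polyMul]
      rw [this, map_sum]
      exact Finset.sum_eq_zero fun j hj =>
        ann_polyMul χ _ _ (W j) (hWdeg j hj) _ (ann_shift _ _ _ (hu1 0))
  obtain ⟨n₁, hn₁⟩ := eventually_eval_ne_zero (P 0) (hP0 0)
  obtain ⟨n₂, hn₂⟩ := eventually_eval_ne_zero (Q d) hQ
  -- the error of `u 0 / P 0` as a continuation of `a`; it satisfies the recurrence eventually and
  -- vanishes on a block of `d` indices free of zeros of some `P k`
  let w : ℕ → K := fun n => u 0 n / (P 0).eval (n : K) - a n
  have hw : ∀ n, n₁ ≤ n → ∑ j ∈ Finset.range (d + 1), (Q j).eval (n : K) * w (n + j) = 0 := by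
    intro n hn
    have h1 := congrFun hJ0 n
    have hprod : ∏ i ∈ Finset.range (d + 1), (P 0).eval ((n + i : ℕ) : K) ≠ 0 :=
      Finset.prod_ne_zero_iff.mpr fun i _ => hn₁ _ (by omega)
    simp only [w, mul_sub, Finset.sum_sub_distrib, hrec, sub_zero]
    apply (mul_eq_zero.mp (_ : (∏ i ∈ Finset.range (d + 1), (P 0).eval ((n + i : ℕ) : K)) * _
      = 0)).resolve_left hprod
    rw [Pi.zero_apply] at h1
    rw [← h1, Finset.mul_sum]
    apply Finset.sum_congr rfl
    intro j hj
    rw [hWeval, ← Finset.mul_prod_erase _ _ hj]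
    have := hn₁ (n + j) (by omega)
    field_simp
  obtain ⟨k, hk⟩ : ∃ k, n₁ + n₂ ≤ Nk k := ⟨n₁ + n₂, by
    have h1 : n₁ + n₂ < 2 ^ (n₁ + n₂) := Nat.lt_two_pow_self
    have h2 : 2 ^ (n₁ + n₂) ≤ Nk (n₁ + n₂) := Nat.le_mul_of_pos_right _ (by omega)
    omega⟩
  obtain ⟨b, hb, hblock⟩ := exists_block (P k) (hP0 k) _ d (Nk k) le_rfl
  have hw0 : ∀ i < d, w (Nk k + d * b + i) = 0 := by
    intro i hi
    have h1 : d * b ≤ d * (P k).natDegree := Nat.mul_le_mul_left _ hb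
    have h2 : d * (P k).natDegree ≤ Nk k := by
      refine le_trans ?_ (hPd k)
      apply Nat.mul_le_mul_right
      rw [hq]; nlinarith [Nat.zero_le (e * d)]
    have h3 := hNk k
    have h4 := congrFun (hchain k) (Nk k + d * b + i)
    simp only [polyMul] at h4
    rw [hu2 k _ (by omega) (by omega)] at h4
    have h5 := hblock i hi
    have h6 := hn₁ (Nk k + d * b + i) (by omega)
    simp only [w, polyMul] at h4 ⊢
    rw [sub_eq_zero, div_eq_iff h6]
    apply mul_left_cancel₀ h5
    linear_combination h4
  have hw1 : ∀ n, w (Nk k + d * b + n) = 0 := by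
    intro n
    induction n using Nat.strong_induction_on with
    | _ n ih =>
      rcases lt_or_ge n d with hn | hn
      · exact hw0 n hn
      · have h1 := hw (Nk k + d * b + (n - d)) (by omega)
        rw [Finset.sum_range_succ, Finset.sum_eq_zero, zero_add] at h1
        · have h2 := (mul_eq_zero.mp h1).resolve_left (hn₂ _ (by omega))
          rwa [show Nk k + d * b + (n - d) + d = Nk k + d * b + n by omega] at h2
        · intro i hi
          simp at hi
          rw [show Nk k + d * b + (n - d) + i = Nk k + d * b + (n - d + i) by omega,
            ih _ (by omega), mul_zero]
  refine ⟨P 0, s 0, Nk k + d * b, hP0 0, fun m hm => ?_⟩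
  refine Eq.trans ?_ (congrFun (hu1 0) m)
  rw [aeval_shiftE_apply, aeval_shiftE_apply]
  apply Finset.sum_congr rfl
  intro i _
  obtain ⟨n, hn⟩ : ∃ n, m + i = Nk k + d * b + n := ⟨m + i - (Nk k + d * b), by omega⟩
  have h1 := hw1 n
  rw [← hn] at h1
  have h6 := hn₁ (m + i) (by omega)
  simp only [w] at h1
  rw [sub_eq_zero, div_eq_iff h6] at h1
  rw [h1]
  simp only [polyMul]; ring

end Endgame

/-! ### The recurrence attached to a differential equation -/

section Recurrence
variable {K : Type*} [Field K]

lemma coeff_psDeriv (f : PowerSeries K) (n : ℕ) :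
    PowerSeries.coeff n (psDeriv f) = PowerSeries.coeff (n + 1) f * ((n : K) + 1) := by
  change PowerSeries.coeff n (PowerSeries.derivative K f) = _
  exact PowerSeries.coeff_derivative f n

lemma coeff_psDeriv_iter (f : PowerSeries K) (k n : ℕ) :
    PowerSeries.coeff n (psDeriv^[k] f) =
      ((n + k).descFactorial k : K) * PowerSeries.coeff (n + k) f := by
  induction k generalizing n with
  | zero => simp
  | succ k ih =>
    rw [Function.iterate_succ', Function.comp_apply, coeff_psDeriv, ih,
      Nat.descFactorial_succ, show n + 1 + k = n + (k + 1) by ring,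
      show n + (k + 1) - k = n + 1 by omega]
    push_cast; ring

/-- The coefficients of a D-finite series satisfy a linear recurrence with polynomial
coefficients. -/
lemma recurrence_of_ode [CharZero K] (a : ℕ → K) (p : ℕ) (A : Fin (p + 1) → K[X]) (hA : A 0 ≠ 0)
    (h : ∑ i : Fin (p + 1), (A i : PowerSeries K) * (psDeriv^[p - i.val] (PowerSeries.mk a)) = 0) :
    ∃ (d : ℕ) (Q : ℕ → K[X]), Q d ≠ 0 ∧
      ∀ n : ℕ, ∑ j ∈ Finset.range (d + 1), (Q j).eval (n : K) * a (n + j) = 0 := by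
  classical
  obtain ⟨D, hD⟩ : ∃ D, ∀ i, (A i).natDegree ≤ D :=
    ⟨Finset.univ.sup fun i => (A i).natDegree,
      fun i => Finset.le_sup (f := fun i => (A i).natDegree) (Finset.mem_univ i)⟩
  let T : Fin (p + 1) → ℕ → ℕ → K[X] := fun i l j =>
    if D - l + (p - i) = j then Polynomial.C ((A i).coeff l) *
      (descPochhammer K (p - i)).comp (Polynomial.X + Polynomial.C (j : K)) else 0
  let Q : ℕ → K[X] := fun j => ∑ i : Fin (p + 1), ∑ l ∈ Finset.range (D + 1), T i l j
  have hQrec : ∀ n : ℕ, ∑ j ∈ Finset.range (D + p + 1), (Q j).eval (n : K) * a (n + j) = 0 := by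
    intro n
    have h1 := congrArg (PowerSeries.coeff (n + D)) h
    rw [map_sum, map_zero] at h1
    rw [← h1]
    simp only [Q, eval_finsetSum, Finset.sum_mul]
    rw [Finset.sum_comm]
    apply Finset.sum_congr rfl
    intro i _
    rw [Finset.sum_comm, PowerSeries.coeff_mul,
      Finset.Nat.sum_antidiagonal_eq_sum_range_succ (fun x y => PowerSeries.coeff x (A i : PowerSeries K) *
        PowerSeries.coeff y (psDeriv^[p - i.val] (PowerSeries.mk a)))]
    have hsub : Finset.range (D + 1) ⊆ Finset.range (n + D).succ := by
      intro x hx; simp at hx ⊢; omega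
    rw [← Finset.sum_subset hsub]
    · apply Finset.sum_congr rfl
      intro l hl
      simp only [Finset.mem_range] at hl
      rw [Finset.sum_eq_single (D - l + (p - i))]
      · simp only [T, if_true]
        rw [coeff_psDeriv_iter, Polynomial.coeff_coe, PowerSeries.coeff_mk, eval_mul, eval_C,
          eval_comp, eval_add, eval_X, eval_C,
          show n + D - l + (p - i) = n + (D - l + (p - i)) by omega,
          ← descPochhammer_eval_eq_descFactorial]
        push_cast; ring
      · intro j _ hj
        simp only [T]
        rw [if_neg (Ne.symm hj)]; simp
      · intro hj
        simp at hj; omega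
    · intro l _ hl
      simp only [Finset.mem_range, not_lt] at hl
      rw [Polynomial.coeff_coe, coeff_eq_zero_of_natDegree_lt, zero_mul]
      have := hD i; omega
  obtain ⟨l₀, hl₀⟩ : ∃ l, (A 0).coeff l ≠ 0 := by
    by_contra! hcon
    exact hA (Polynomial.ext fun l => by simpa using hcon l)
  have hl₀D : l₀ ≤ D := (le_natDegree_of_ne_zero hl₀).trans (hD 0)
  -- only the top order term `i = 0` contributes to the coefficient of `X ^ p`
  have hQne : Q (D - l₀ + p) ≠ 0 := by
    intro h0
    apply hl₀
    have h1 := congrArg (fun q => Polynomial.coeff q p) h0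
    simp only [Q, finsetSum_coeff, Polynomial.coeff_zero] at h1
    rw [Finset.sum_eq_single 0] at h1
    · rw [Finset.sum_eq_single l₀] at h1
      · simp only [T, Fin.val_zero, Nat.sub_zero, if_true, Polynomial.coeff_C_mul] at h1
        have hm := (monic_descPochhammer K p).comp_X_add_C ((D - l₀ + p : ℕ) : K)
        have hdeg : ((descPochhammer K p).comp (Polynomial.X +
            Polynomial.C ((D - l₀ + p : ℕ) : K))).natDegree = p := by
          rw [natDegree_comp, natDegree_X_add_C, mul_one, descPochhammer_natDegree]
        have h2 := hm.coeff_natDegree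
        rw [hdeg] at h2
        rwa [h2, mul_one] at h1
      · intro l hl hne
        simp only [Finset.mem_range] at hl
        simp only [T]
        rw [if_neg (by simp only [Fin.val_zero]; omega), Polynomial.coeff_zero]
      · intro hl; simp at hl; omega
    · intro i _ hi
      apply Finset.sum_eq_zero
      intro l _
      simp only [T]
      split_ifs
      · rw [Polynomial.coeff_C_mul, mul_eq_zero]
        right
        apply coeff_eq_zero_of_natDegree_lt
        rw [natDegree_comp, natDegree_X_add_C, mul_one, descPochhammer_natDegree]
        have : i.val ≠ 0 := fun h => hi (Fin.ext h)
        omega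
      · simp
    · simp
  let Sx := (Finset.range (D + p + 1)).filter fun j => Q j ≠ 0
  have hS : Sx.Nonempty := ⟨D - l₀ + p, by simp [Sx, hQne]⟩
  refine ⟨Sx.max' hS, Q, ?_, fun n => ?_⟩
  · have := Sx.max'_mem hS
    simp only [Sx, Finset.mem_filter] at this
    exact this.2
  · rw [← hQrec n]
    apply Finset.sum_subset
    · intro x hx
      have := Sx.max'_mem hS
      simp only [Sx, Finset.mem_filter, Finset.mem_range] at this hx ⊢
      omega
    · intro j hj hj'
      by_contra hne
      have hjS : j ∈ Sx := by
        simp only [Sx, Finset.mem_filter]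
        exact ⟨hj, fun h0 => hne (by rw [h0]; simp)⟩
      have := Sx.le_max' j hjS
      exact hj' (Finset.mem_range.mpr (by omega))

end Recurrence

/-! ### Heights, denominators and density -/

section Heights
variable (K : Type*) [Field K] [NumberField K]

lemma den_spec (α : K) : 0 < den K α ∧ IsIntegral ℤ ((den K α : K) * α) := by
  have hne : {d : ℕ | 0 < d ∧ IsIntegral ℤ ((d : K) * α)}.Nonempty := by
    have hAalg : IsAlgebraic ℤ α :=
      (IsFractionRing.isAlgebraic_iff ℤ ℚ K).mpr (Algebra.IsAlgebraic.isAlgebraic α)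
    obtain ⟨x, hx⟩ := hAalg.exists_integral_multiple
    refine ⟨x.natAbs, Int.natAbs_pos.mpr hx.1, ?_⟩
    have h2 : IsIntegral ℤ ((x : K) * α) := by
      have := hx.2; rwa [zsmul_eq_mul] at this
    rcases Int.natAbs_eq x with h | h
    · rw [h] at h2; simpa using h2
    · rw [h] at h2
      have := h2.neg
      simpa using this
  exact Nat.sInf_mem hne

lemma mem_denIdeal (α : K) (x : NumberField.RingOfIntegers K) :
    x ∈ denIdeal K α ↔ IsIntegral ℤ ((x : K) * α) := by
  unfold denIdeal
  rw [Submodule.mem_colon]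
  constructor
  · intro h
    have := h α (Submodule.mem_span_singleton_self α)
    rw [Submodule.mem_one] at this
    obtain ⟨y, hy⟩ := this
    have h2 : (x : K) * α = (y : K) := by
      rw [← Algebra.smul_def x α]; exact hy.symm
    rw [h2]; exact y.isIntegral_coe
  · intro h p hp
    obtain ⟨c, rfl⟩ := Submodule.mem_span_singleton.mp hp
    rw [Submodule.mem_one]
    obtain ⟨y, hy⟩ : ∃ y : NumberField.RingOfIntegers K,
        algebraMap (NumberField.RingOfIntegers K) K y =
          algebraMap (NumberField.RingOfIntegers K) K x * α := ⟨⟨_, h⟩, rfl⟩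
    refine ⟨c * y, ?_⟩
    refine Eq.trans (map_mul (algebraMap (NumberField.RingOfIntegers K) K) c y) ?_
    rw [Algebra.smul_def, Algebra.smul_def, hy]
    ring

/-- The norm of the denominator ideal belongs to the ideal, so it is a positive multiplier that
clears the denominator. -/
lemma absNorm_denIdeal (α : K) :
    Ideal.absNorm (denIdeal K α) ≠ 0 ∧ den K α ≤ Ideal.absNorm (denIdeal K α) := by
  have h0 : Ideal.absNorm (denIdeal K α) ≠ 0 := by
    rw [Ne, Ideal.absNorm_eq_zero_iff]
    intro hbot
    have hmem : ((den K α : ℕ) : NumberField.RingOfIntegers K) ∈ denIdeal K α := by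
      rw [mem_denIdeal]
      simpa using (den_spec K α).2
    rw [hbot, Submodule.mem_bot] at hmem
    have := (den_spec K α).1
    rw [Nat.cast_eq_zero] at hmem
    omega
  refine ⟨h0, Nat.sInf_le ⟨Nat.pos_of_ne_zero h0, ?_⟩⟩
  have := (mem_denIdeal K α _).mp (Ideal.absNorm_mem (denIdeal K α))
  simpa using this

lemma log_den_le (α : K) : Real.log (den K α) ≤ Module.finrank ℚ K * weilHeight K α := by
  have hd : (0 : ℝ) < Module.finrank ℚ K := by exact_mod_cast Module.finrank_pos
  unfold weilHeight
  rw [mul_div_cancel₀ _ hd.ne']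
  have h1 : Real.log (den K α) ≤ Real.log (Ideal.absNorm (denIdeal K α)) :=
    Real.log_le_log (by exact_mod_cast (den_spec K α).1)
      (by exact_mod_cast (absNorm_denIdeal K α).2)
  have h2 : 0 ≤ ∑ σ : K →+* ℂ, Real.log (max 1 ‖σ α‖) :=
    Finset.sum_nonneg fun σ _ => Real.log_nonneg (le_max_left _ _)
  linarith

lemma log_norm_le (α : K) (σ : K →+* ℂ) :
    Real.log (max 1 ‖σ α‖) ≤ Module.finrank ℚ K * weilHeight K α := by
  have hd : (0 : ℝ) < Module.finrank ℚ K := by exact_mod_cast Module.finrank_pos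
  unfold weilHeight
  rw [mul_div_cancel₀ _ hd.ne']
  have h1 : 0 ≤ Real.log (Ideal.absNorm (denIdeal K α)) := Real.log_natCast_nonneg _
  have h2 : Real.log (max 1 ‖σ α‖) ≤ ∑ σ : K →+* ℂ, Real.log (max 1 ‖σ α‖) :=
    Finset.single_le_sum (f := fun σ : K →+* ℂ => Real.log (max 1 ‖σ α‖))
      (fun σ _ => Real.log_nonneg (le_max_left _ _)) (Finset.mem_univ σ)
  linarith

end Heights

section Density

lemma density_ratio_le (S : Set ℕ) (n : ℕ) : ((S ∩ Set.Icc 1 n).ncard : ℝ) / n ≤ 1 := by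
  apply div_le_one_of_le₀ _ (by positivity)
  have h1 : (S ∩ Set.Icc 1 n).ncard ≤ (Set.Icc 1 n).ncard :=
    Set.ncard_le_ncard Set.inter_subset_right (Set.finite_Icc 1 n)
  have h2 : (Set.Icc 1 n).ncard = n := by
    rw [← Finset.coe_Icc, Set.ncard_coe_finset]; simp
  rw [h2] at h1
  exact_mod_cast h1

lemma density_bdd (S : Set ℕ) : IsBoundedUnder (· ≤ ·) atTop
    (fun n : ℕ => ((S ∩ Set.Icc 1 n).ncard : ℝ) / n) :=
  isBoundedUnder_of ⟨1, density_ratio_le S⟩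

lemma density_cobdd (S : Set ℕ) : IsCoboundedUnder (· ≤ ·) atTop
    (fun n : ℕ => ((S ∩ Set.Icc 1 n).ncard : ℝ) / n) :=
  IsBoundedUnder.isCoboundedUnder_le (isBoundedUnder_of ⟨0, fun n => by positivity⟩)

lemma HasPosUpperDensity.mono {S T : Set ℕ} (h : S ⊆ T) (hS : HasPosUpperDensity S) :
    HasPosUpperDensity T := by
  refine lt_of_lt_of_le hS (limsup_le_limsup (Eventually.of_forall fun n => ?_)
    (density_cobdd S) (density_bdd T))
  have : (S ∩ Set.Icc 1 n).ncard ≤ (T ∩ Set.Icc 1 n).ncard :=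
    Set.ncard_le_ncard (Set.inter_subset_inter_left _ h)
      ((Set.finite_Icc 1 n).subset Set.inter_subset_right)
  dsimp only
  gcongr

lemma small_of_not_pos {S : Set ℕ} (h : ¬ HasPosUpperDensity S) {δ : ℝ} (hδ : 0 < δ) :
    ∀ᶠ n : ℕ in atTop, ((S ∩ Set.Icc 1 n).ncard : ℝ) ≤ δ * n := by
  have h1 : upperDensity S < δ := lt_of_le_of_lt (not_lt.mp h) hδ
  filter_upwards [eventually_lt_of_limsup_lt h1 (density_bdd S), eventually_gt_atTop 0]
    with n hn hn0
  have : (0 : ℝ) < n := by exact_mod_cast hn0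
  exact ((div_lt_iff₀ this).mp hn).le

variable (K : Type*) [Field K] [NumberField K]

/-- `α`, placed at index `n`, is `ε`-tame: its denominator is at most `ε n` and all its
conjugates are at most `exp (ε n)`. -/
def Tame (ε : ℝ) (n : ℕ) (α : K) : Prop :=
  (den K α : ℝ) ≤ ε * n ∧ ∀ σ : K →+* ℂ, ‖σ α‖ ≤ Real.exp (ε * n)

open Classical in
/-- For every `ε`, the indices at which the sequence is not `ε`-tame have density zero. -/
def MostlyTame (a : ℕ → K) : Prop :=
  ∀ ε > 0, ∀ δ > 0, ∀ᶠ N : ℕ in atTop,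
    (((Finset.Icc 1 N).filter fun n => ¬ Tame K ε n (a n)).card : ℝ) ≤ δ * N

/-- If heights and denominators are at least linear only along sets of density zero, then the
sequence is mostly tame. -/
lemma mostlyTame_of_not_pos (a : ℕ → K)
    (h1 : ¬ ∃ c : ℝ, 0 < c ∧ HasPosUpperDensity {n : ℕ | c * n ≤ weilHeight K (a n)})
    (h2 : ¬ ∃ c : ℝ, 0 < c ∧ HasPosUpperDensity {n : ℕ | c * n ≤ (den K (a n) : ℝ)}) :
    MostlyTame K a := by
  classical
  push Not at h1 h2
  intro ε hε δ hδ
  have hd : (0 : ℝ) < Module.finrank ℚ K := by exact_mod_cast Module.finrank_pos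
  have e1 := small_of_not_pos (h1 (ε / Module.finrank ℚ K) (by positivity))
    (show 0 < δ / 2 by positivity)
  have e2 := small_of_not_pos (h2 ε hε) (show 0 < δ / 2 by positivity)
  filter_upwards [e1, e2] with N b1 b2
  have hsub : ((Finset.Icc 1 N).filter fun n => ¬ Tame K ε n (a n) : Set ℕ) ⊆
      ({n : ℕ | ε / Module.finrank ℚ K * n ≤ weilHeight K (a n)} ∩ Set.Icc 1 N) ∪
      ({n : ℕ | ε * n ≤ (den K (a n) : ℝ)} ∩ Set.Icc 1 N) := by
    intro n hn
    simp only [Finset.coe_filter, Finset.mem_Icc, Set.mem_ofPred_eq] at hn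
    by_contra hcon
    simp only [Set.mem_union, Set.mem_inter_iff, Set.mem_ofPred_eq, Set.mem_Icc, hn.1, and_true,
      not_or, not_le] at hcon
    apply hn.2
    refine ⟨hcon.2.le, fun σ => ?_⟩
    have h3 := log_norm_le K (a n) σ
    have h4 : Module.finrank ℚ K * weilHeight K (a n) ≤ ε * n := by
      have := mul_le_mul_of_nonneg_left hcon.1.le hd.le
      refine this.trans (le_of_eq ?_)
      field_simp
    have h5 : (0 : ℝ) < max 1 ‖σ (a n)‖ := lt_of_lt_of_le one_pos (le_max_left _ _)
    exact (le_max_right _ _).trans ((Real.log_le_iff_le_exp h5).mp (h3.trans h4))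
  have h3 := Set.ncard_le_ncard hsub (((Set.finite_Icc 1 N).subset Set.inter_subset_right).union
    ((Set.finite_Icc 1 N).subset Set.inter_subset_right))
  have h4 := h3.trans (Set.ncard_union_le _ _)
  rw [Set.ncard_coe_finset] at h4
  have h5 : (((Finset.Icc 1 N).filter fun n => ¬ Tame K ε n (a n)).card : ℝ) ≤
    (({n : ℕ | ε / Module.finrank ℚ K * n ≤ weilHeight K (a n)} ∩ Set.Icc 1 N).ncard : ℝ) +
      (({n : ℕ | ε * n ≤ (den K (a n) : ℝ)} ∩ Set.Icc 1 N).ncard : ℝ) := by exact_mod_cast h4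
  linarith

/-- Since `log (den α) ≤ [K : ℚ] h(α)`, linearly large denominators give logarithmically large
heights at the same indices. -/
lemma height_of_den (a : ℕ → K)
    (h : ∃ c : ℝ, 0 < c ∧ HasPosUpperDensity {n : ℕ | c * n ≤ (den K (a n) : ℝ)}) :
    ∃ C : ℝ, HasPosUpperDensity
        {n : ℕ | (1 / (Module.finrank ℚ K : ℝ)) * Real.log n - C < weilHeight K (a n)} := by
  obtain ⟨c, hc, h⟩ := h
  have hd : (0 : ℝ) < Module.finrank ℚ K := by exact_mod_cast Module.finrank_pos
  refine ⟨|Real.log c| / Module.finrank ℚ K + 1, h.mono fun n hn => ?_⟩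
  simp only [Set.mem_ofPred_eq] at hn ⊢
  have h1 := log_den_le K (a n)
  rw [← div_le_iff₀' hd] at h1
  refine lt_of_lt_of_le ?_ h1
  have h2 : Real.log n - |Real.log c| ≤ Real.log (den K (a n)) := by
    rcases Nat.eq_zero_or_pos n with rfl | hn0
    · have : (0 : ℝ) ≤ Real.log (den K (a 0)) := Real.log_natCast_nonneg _
      simp only [Nat.cast_zero, Real.log_zero]
      linarith [abs_nonneg (Real.log c)]
    · have hn1 : (0 : ℝ) < n := by exact_mod_cast hn0
      have := Real.log_le_log (by positivity) hn
      rw [Real.log_mul hc.ne' hn1.ne'] at this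
      linarith [neg_abs_le (Real.log c)]
  have h3 := div_le_div_of_nonneg_right h2 hd.le
  rw [sub_div] at h3
  rw [one_div_mul_eq_div]
  linarith

end Density

/-! ### Recentring power series -/

section Recentre

/-- The power series converges absolutely in the open unit disc. -/
def SubG (g : PowerSeries ℂ) : Prop :=
  ∀ ρ : ℝ, 0 ≤ ρ → ρ < 1 → Summable fun n => ‖PowerSeries.coeff n g‖ * ρ ^ n

lemma SubG.add {g h : PowerSeries ℂ} (hg : SubG g) (hh : SubG h) : SubG (g + h) := by
  intro ρ h0 h1
  refine Summable.of_nonneg_of_le (fun n => by positivity) (fun n => ?_)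
    ((hg ρ h0 h1).add (hh ρ h0 h1))
  rw [map_add, ← add_mul]
  gcongr
  exact norm_add_le _ _

lemma SubG.zero : SubG 0 := by
  intro ρ _ _
  simp

lemma SubG.sum {κ : Type*} (s : Finset κ) (g : κ → PowerSeries ℂ) (h : ∀ i ∈ s, SubG (g i)) :
    SubG (∑ i ∈ s, g i) := by
  classical
  induction s using Finset.induction_on with
  | empty => simp [SubG.zero]
  | insert i s hi ih =>
    rw [Finset.sum_insert hi]
    exact (h i (by simp)).add (ih fun j hj => h j (by simp [hj]))

lemma SubG.C_mul {g : PowerSeries ℂ} (hg : SubG g) (c : ℂ) : SubG (PowerSeries.C c * g) := by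
  intro ρ h0 h1
  refine ((hg ρ h0 h1).mul_left ‖c‖).congr fun n => ?_
  rw [PowerSeries.coeff_C_mul, norm_mul, mul_assoc]

lemma SubG.X_mul {g : PowerSeries ℂ} (hg : SubG g) : SubG (PowerSeries.X * g) := by
  intro ρ h0 h1
  rw [← summable_nat_add_iff 1]
  refine ((hg ρ h0 h1).mul_left ρ).congr fun n => ?_
  rw [PowerSeries.coeff_succ_X_mul]; ring

lemma SubG.poly_mul {g : PowerSeries ℂ} (hg : SubG g) (P : ℂ[X]) :
    SubG ((P : PowerSeries ℂ) * g) := by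
  induction P using Polynomial.induction_on with
  | C c => rw [Polynomial.coe_C]; exact hg.C_mul c
  | add P Q hP hQ => rw [Polynomial.coe_add, add_mul]; exact hP.add hQ
  | monomial n c ih =>
    have : ((Polynomial.C c * Polynomial.X ^ (n + 1) : ℂ[X]) : PowerSeries ℂ) * g =
        PowerSeries.X * (((Polynomial.C c * Polynomial.X ^ n : ℂ[X]) : PowerSeries ℂ) * g) := by
      simp only [Polynomial.coe_mul, Polynomial.coe_pow, Polynomial.coe_X]; ring
    rw [this]; exact ih.X_mul

lemma SubG.deriv {g : PowerSeries ℂ} (hg : SubG g) : SubG (psDeriv g) := by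
  intro ρ h0 h1
  obtain ⟨ρ', h2, h3⟩ := exists_between h1
  have hρ' : 0 < ρ' := h0.trans_lt h2
  obtain ⟨C, hC⟩ := (hg ρ' hρ'.le h3).tendsto_atTop_zero.bddAbove_range
  have hC' : ∀ n, ‖PowerSeries.coeff n g‖ * ρ' ^ n ≤ C := fun n => hC ⟨n, rfl⟩
  have hq : ρ / ρ' < 1 := (div_lt_one hρ').mpr h2
  have hs : Summable fun n : ℕ => ((n : ℝ) + 1) * (ρ / ρ') ^ n := by
    have e1 := summable_pow_mul_geometric_of_norm_lt_one 1 (r := ρ / ρ')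
      (by rwa [Real.norm_of_nonneg (by positivity)])
    have e2 := summable_geometric_of_lt_one (by positivity) hq
    refine (e1.add e2).congr fun n => ?_
    simp; ring
  refine Summable.of_nonneg_of_le (fun n => by positivity) (fun n => ?_) (hs.mul_left (C / ρ'))
  rw [coeff_psDeriv, norm_mul]
  have e3 : ‖(n : ℂ) + 1‖ = (n : ℝ) + 1 := by
    have : ((n : ℂ) + 1) = ((n + 1 : ℕ) : ℂ) := by push_cast; rfl
    rw [this, Complex.norm_natCast]; push_cast; rfl
  rw [e3, div_pow]
  have e4 := hC' (n + 1)
  rw [← le_div_iff₀ (by positivity)] at e4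
  calc ‖PowerSeries.coeff (n + 1) g‖ * ((n : ℝ) + 1) * ρ ^ n
      ≤ C / ρ' ^ (n + 1) * ((n : ℝ) + 1) * ρ ^ n := by gcongr
    _ = _ := by rw [pow_succ]; field_simp

lemma SubG.deriv_iter {g : PowerSeries ℂ} (hg : SubG g) (k : ℕ) : SubG (psDeriv^[k] g) := by
  induction k with
  | zero => exact hg
  | succ k ih => rw [Function.iterate_succ', Function.comp_apply]; exact ih.deriv

/-- The term of the double series for the expansion of `g` around `z₀`. -/
lemma SubG.summable_double {g : PowerSeries ℂ} (hg : SubG g) {ρ h : ℝ} (hρ : 0 ≤ ρ) (hh : 0 ≤ h)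
    (hlt : ρ + h < 1) :
    Summable fun x : ℕ × ℕ =>
      ((x.1 + x.2).choose x.2 : ℝ) * ‖PowerSeries.coeff (x.1 + x.2) g‖ * ρ ^ x.1 * h ^ x.2 := by
  rw [← Finset.HasAntidiagonal.sigmaAntidiagonalEquivProd.summable_iff]
  have hval : ∀ n : ℕ, ∑ x ∈ Finset.HasAntidiagonal.antidiagonal n,
      ((x.1 + x.2).choose x.2 : ℝ) * ‖PowerSeries.coeff (x.1 + x.2) g‖ * ρ ^ x.1 * h ^ x.2 =
      ‖PowerSeries.coeff n g‖ * (ρ + h) ^ n := by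
    intro n
    rw [Commute.add_pow' (Commute.all ρ h), Finset.mul_sum]
    apply Finset.sum_congr rfl
    intro x hx
    rw [Finset.HasAntidiagonal.mem_antidiagonal] at hx
    rw [hx, nsmul_eq_mul, ← hx, Nat.choose_symm_add]; ring
  rw [summable_sigma_of_nonneg (fun x => by
    simp only [Function.comp_apply]; positivity)]
  refine ⟨fun n => (hasSum_fintype _).summable , ?_⟩
  refine (hg (ρ + h) (by positivity) hlt).congr fun n => ?_
  rw [← hval n, ← Finset.tsum_subtype]
  rfl

lemma SubG.summable_row {g : PowerSeries ℂ} (hg : SubG g) {z₀ : ℂ} (hz : ‖z₀‖ < 1) (k : ℕ) :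
    Summable fun n : ℕ => ((n + k).choose k : ℂ) * PowerSeries.coeff (n + k) g * z₀ ^ n := by
  obtain ⟨h, h1, h2⟩ : ∃ h : ℝ, 0 < h ∧ ‖z₀‖ + h < 1 :=
    ⟨(1 - ‖z₀‖) / 2, by linarith, by linarith⟩
  have := (hg.summable_double (norm_nonneg z₀) h1.le h2).comp_injective
    (i := fun n : ℕ => (n, k)) (fun a b hab => (Prod.mk.inj hab).1)
  refine Summable.of_norm ((this.mul_right ((h ^ k)⁻¹)).congr fun n => ?_)
  simp only [Function.comp_apply, norm_mul, norm_pow, Complex.norm_natCast]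
  field_simp

/-- The power series of `g` expanded around `z₀`. -/
noncomputable def recenter (z₀ : ℂ) (g : PowerSeries ℂ) : PowerSeries ℂ :=
  PowerSeries.mk fun k => ∑' n : ℕ, ((n + k).choose k : ℂ) * PowerSeries.coeff (n + k) g * z₀ ^ n

lemma recenter_add {g h : PowerSeries ℂ} (hg : SubG g) (hh : SubG h) {z₀ : ℂ} (hz : ‖z₀‖ < 1) :
    recenter z₀ (g + h) = recenter z₀ g + recenter z₀ h := by
  ext k
  simp only [recenter, PowerSeries.coeff_mk, map_add]
  rw [← (hg.summable_row hz k).tsum_add (hh.summable_row hz k)]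
  congr 1; ext n; ring

lemma recenter_zero (z₀ : ℂ) : recenter z₀ 0 = 0 := by
  ext k; simp [recenter]

lemma recenter_sum {κ : Type*} (s : Finset κ) (g : κ → PowerSeries ℂ) (h : ∀ i ∈ s, SubG (g i))
    {z₀ : ℂ} (hz : ‖z₀‖ < 1) :
    recenter z₀ (∑ i ∈ s, g i) = ∑ i ∈ s, recenter z₀ (g i) := by
  classical
  induction s using Finset.induction_on with
  | empty => simpa using recenter_zero z₀
  | insert i s hi ih =>
    rw [Finset.sum_insert hi, Finset.sum_insert hi,
      recenter_add (h i (by simp)) (SubG.sum s g fun j hj => h j (by simp [hj])) hz,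
      ih fun j hj => h j (by simp [hj])]

lemma recenter_C_mul (g : PowerSeries ℂ) (z₀ c : ℂ) :
    recenter z₀ (PowerSeries.C c * g) = PowerSeries.C c * recenter z₀ g := by
  ext k
  simp only [recenter, PowerSeries.coeff_mk, PowerSeries.coeff_C_mul]
  rw [← tsum_mul_left]
  congr 1; ext n; ring

lemma recenter_X_mul {g : PowerSeries ℂ} (hg : SubG g) {z₀ : ℂ} (hz : ‖z₀‖ < 1) :
    recenter z₀ (PowerSeries.X * g) = (PowerSeries.X + PowerSeries.C z₀) * recenter z₀ g := by
  ext k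
  rw [add_mul, map_add, PowerSeries.coeff_C_mul]
  rcases k with _ | k
  · rw [PowerSeries.coeff_zero_X_mul, zero_add]
    simp only [recenter, PowerSeries.coeff_mk, add_zero]
    rw [(by simpa using hg.X_mul.summable_row hz 0 : Summable fun n : ℕ => ((n.choose 0 : ℕ) : ℂ) *
      PowerSeries.coeff n (PowerSeries.X * g) * z₀ ^ n).tsum_eq_zero_add, ← tsum_mul_left]
    simp only [PowerSeries.coeff_zero_X_mul, mul_zero, zero_mul, zero_add,
      PowerSeries.coeff_succ_X_mul, Nat.choose_zero_right, Nat.cast_one, one_mul]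
    congr 1; ext n; ring
  · rw [PowerSeries.coeff_succ_X_mul]
    simp only [recenter, PowerSeries.coeff_mk]
    have e1 := hg.summable_row hz k
    have e2 := hg.summable_row hz (k + 1)
    have e3 : Summable fun n : ℕ => ((n + k).choose (k + 1) : ℂ) *
        PowerSeries.coeff (n + k) g * z₀ ^ n := by
      rw [← summable_nat_add_iff 1]
      refine (e2.mul_left z₀).congr fun n => ?_
      rw [show n + 1 + k = n + (k + 1) by ring]; ring
    rw [← tsum_mul_left]
    have e4 : ∑' n : ℕ, z₀ * (((n + (k + 1)).choose (k + 1) : ℂ) *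
        PowerSeries.coeff (n + (k + 1)) g * z₀ ^ n) =
        ∑' n : ℕ, ((n + k).choose (k + 1) : ℂ) * PowerSeries.coeff (n + k) g * z₀ ^ n := by
      rw [e3.tsum_eq_zero_add]
      simp only [zero_add, Nat.choose_succ_self, Nat.cast_zero, zero_mul]
      congr 1; ext n
      rw [show n + 1 + k = n + (k + 1) by ring]; ring
    rw [e4, ← e1.tsum_add e3]
    congr 1; ext n
    rw [← add_assoc, PowerSeries.coeff_succ_X_mul, Nat.choose_succ_succ]
    push_cast; ring

lemma recenter_poly_mul {g : PowerSeries ℂ} (hg : SubG g) {z₀ : ℂ} (hz : ‖z₀‖ < 1) (P : ℂ[X]) :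
    recenter z₀ ((P : PowerSeries ℂ) * g) =
      ((Polynomial.taylor z₀ P : ℂ[X]) : PowerSeries ℂ) * recenter z₀ g := by
  induction P using Polynomial.induction_on with
  | C c => rw [Polynomial.coe_C, recenter_C_mul, taylor_C, Polynomial.coe_C]
  | add P Q hP hQ =>
    rw [Polynomial.coe_add, add_mul, recenter_add (hg.poly_mul P) (hg.poly_mul Q) hz, hP, hQ,
      map_add, Polynomial.coe_add, add_mul]
  | monomial n c ih =>
    have : ((Polynomial.C c * Polynomial.X ^ (n + 1) : ℂ[X]) : PowerSeries ℂ) * g =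
        PowerSeries.X * (((Polynomial.C c * Polynomial.X ^ n : ℂ[X]) : PowerSeries ℂ) * g) := by
      simp only [Polynomial.coe_mul, Polynomial.coe_pow, Polynomial.coe_X]; ring
    rw [this, recenter_X_mul (hg.poly_mul _) hz, ih]
    simp only [taylor_mul, taylor_C, taylor_X_pow, Polynomial.coe_mul, Polynomial.coe_pow,
      Polynomial.coe_add, Polynomial.coe_X, Polynomial.coe_C]
    ring

lemma recenter_deriv (g : PowerSeries ℂ) (z₀ : ℂ) :
    recenter z₀ (psDeriv g) = psDeriv (recenter z₀ g) := by
  ext k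
  rw [coeff_psDeriv]
  simp only [recenter, PowerSeries.coeff_mk, coeff_psDeriv]
  rw [← tsum_mul_right]
  congr 1; ext n
  have := Nat.add_one_mul_choose_eq (n + k) k
  have h2 : ((n : ℂ) + k + 1) * ((n + k).choose k : ℂ) =
      ((n + k + 1).choose (k + 1) : ℂ) * ((k : ℂ) + 1) := by exact_mod_cast this
  rw [← add_assoc]
  push_cast
  linear_combination (PowerSeries.coeff (n + k + 1) g * z₀ ^ n) * h2

lemma recenter_deriv_iter (g : PowerSeries ℂ) (z₀ : ℂ) (k : ℕ) :
    recenter z₀ (psDeriv^[k] g) = psDeriv^[k] (recenter z₀ g) := by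
  induction k with
  | zero => rfl
  | succ k ih =>
    rw [Function.iterate_succ', Function.comp_apply, recenter_deriv, ih]; rfl

/-- Taylor expansion around `z₀`. -/
lemma recenter_hasSum {g : PowerSeries ℂ} (hg : SubG g) {z₀ h : ℂ} (hz : ‖z₀‖ + ‖h‖ < 1) :
    ∑' n : ℕ, PowerSeries.coeff n g * (z₀ + h) ^ n =
      ∑' k : ℕ, PowerSeries.coeff k (recenter z₀ g) * h ^ k := by
  have hs : Summable fun x : ℕ × ℕ => ((x.1 + x.2).choose x.2 : ℂ) *
      PowerSeries.coeff (x.1 + x.2) g * z₀ ^ x.1 * h ^ x.2 := by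
    refine Summable.of_norm ((hg.summable_double (norm_nonneg z₀) (norm_nonneg h) hz).congr
      fun x => ?_)
    simp only [norm_mul, norm_pow, Complex.norm_natCast]
  have h1 : ∑' x : ℕ × ℕ, ((x.1 + x.2).choose x.2 : ℂ) *
      PowerSeries.coeff (x.1 + x.2) g * z₀ ^ x.1 * h ^ x.2 =
      ∑' n : ℕ, PowerSeries.coeff n g * (z₀ + h) ^ n := by
    have hs' := (Finset.HasAntidiagonal.sigmaAntidiagonalEquivProd.summable_iff).mpr hs
    rw [← Finset.HasAntidiagonal.sigmaAntidiagonalEquivProd.tsum_eq]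
    refine Eq.trans (Summable.tsum_sigma' (fun n => (hasSum_fintype _).summable) hs') ?_
    congr 1; ext n
    rw [Commute.add_pow' (Commute.all z₀ h), Finset.mul_sum]
    rw [← Finset.tsum_subtype (Finset.HasAntidiagonal.antidiagonal n)
      (fun x => PowerSeries.coeff n g * n.choose x.1 • (z₀ ^ x.1 * h ^ x.2))]
    congr 1; ext x
    have hx := Finset.HasAntidiagonal.mem_antidiagonal.mp x.2
    have e1 : (Finset.HasAntidiagonal.sigmaAntidiagonalEquivProd ⟨n, x⟩) = (x : ℕ × ℕ) := rfl
    have e2 : n.choose x.1.2 = n.choose x.1.1 := (Nat.choose_symm_of_eq_add hx.symm).symm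
    rw [e1, hx, nsmul_eq_mul, e2]; ring
  rw [← h1]
  have hs2 := (Equiv.prodComm ℕ ℕ).summable_iff.mpr hs
  rw [← (Equiv.prodComm ℕ ℕ).tsum_eq]
  refine Eq.trans hs2.tsum_prod ?_
  congr 1; ext k
  simp only [recenter, PowerSeries.coeff_mk]
  rw [← tsum_mul_right]
  rfl

end Recentre

/-! ### Analytic continuation across regular points of the unit circle -/

section LocalExtension

lemma differentiableOn_ps (g : PowerSeries ℂ) (z₀ : ℂ) (r : ℝ)
    (h : ∀ ρ : ℝ, 0 ≤ ρ → ρ < r → Summable fun n => ‖PowerSeries.coeff n g‖ * ρ ^ n) :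
    DifferentiableOn ℂ (fun w => ∑' n : ℕ, PowerSeries.coeff n g * (w - z₀) ^ n)
      (Metric.ball z₀ r) := by
  intro w hw
  obtain ⟨ρ, h1, h2⟩ := exists_between (mem_ball_iff_norm.mp hw)
  have hd : DifferentiableOn ℂ (fun w => ∑' n : ℕ, PowerSeries.coeff n g * (w - z₀) ^ n)
      (Metric.ball z₀ ρ) := by
    refine Complex.differentiableOn_tsum_of_summable_norm
      (h ρ ((norm_nonneg _).trans h1.le) h2) (fun n => ?_) Metric.isOpen_ball fun n v hv => ?_
    · fun_prop
    · rw [norm_mul, norm_pow]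
      gcongr
      exact (mem_ball_iff_norm.mp hv).le
  exact (hd.differentiableAt (Metric.isOpen_ball.mem_nhds (mem_ball_iff_norm.mpr h1)))
    |>.differentiableWithinAt

/-- Geometric growth, with an explicit ratio, of the coefficients of a power series solution at
an ordinary point. -/
lemma ode_majorant (p d : ℕ) (B : Fin (p + 1) → ℂ[X]) (Y : PowerSeries ℂ) (M μ R : ℝ)
    (hM : ∀ i l, ‖(B i).coeff l‖ ≤ M) (hd : ∀ i, (B i).natDegree ≤ d)
    (hμ0 : 0 < μ) (hμ : μ ≤ ‖(B 0).coeff 0‖) (hR1 : 1 ≤ R)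
    (hR : M / μ * ((p + 1) * (d + 1)) ≤ R)
    (hode : ∑ i : Fin (p + 1), (B i : PowerSeries ℂ) * psDeriv^[p - i.val] Y = 0) :
    ∃ B₀ : ℝ, ∀ k, ‖PowerSeries.coeff k Y‖ ≤ B₀ * R ^ k := by
  classical
  set Bd := ∑ j ∈ Finset.range p, ‖PowerSeries.coeff j Y‖ with hBd
  have hBd0 : 0 ≤ Bd := Finset.sum_nonneg fun _ _ => norm_nonneg _
  have hM0 : 0 ≤ M := (norm_nonneg _).trans (hM 0 0)
  refine ⟨Bd, fun k => ?_⟩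
  induction k using Nat.strong_induction_on with
  | _ k ih =>
    rcases lt_or_ge k p with hk | hk
    · have h1 : ‖PowerSeries.coeff k Y‖ ≤ Bd :=
        Finset.single_le_sum (f := fun j => ‖PowerSeries.coeff j Y‖)
          (fun _ _ => norm_nonneg _) (Finset.mem_range.mpr hk)
      exact h1.trans (le_mul_of_one_le_right hBd0 (one_le_pow₀ hR1))
    · obtain ⟨n, rfl⟩ := Nat.exists_eq_add_of_le' hk
      let T : Fin (p + 1) × ℕ → ℂ := fun x => (B x.1).coeff x.2 *
        (((n - x.2 + (p - x.1)).descFactorial (p - x.1) : ℂ) *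
          PowerSeries.coeff (n - x.2 + (p - x.1)) Y)
      let S : Finset (Fin (p + 1) × ℕ) := Finset.univ ×ˢ Finset.range (n + 1)
      have hsum : ∑ x ∈ S, T x = 0 := by
        have h1 := congrArg (PowerSeries.coeff n) hode
        rw [map_sum, map_zero] at h1
        rw [← h1, Finset.sum_product]
        apply Finset.sum_congr rfl
        intro i _
        rw [PowerSeries.coeff_mul, Finset.Nat.sum_antidiagonal_eq_sum_range_succ (fun x y =>
          PowerSeries.coeff x (B i : PowerSeries ℂ) *
            PowerSeries.coeff y (psDeriv^[p - i.val] Y))]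
        apply Finset.sum_congr rfl
        intro l _
        rw [coeff_psDeriv_iter, Polynomial.coeff_coe]
      have h0S : ((0 : Fin (p + 1)), 0) ∈ S := by simp [S]
      rw [← Finset.add_sum_erase _ _ h0S] at hsum
      set DF : ℝ := ((n + p).descFactorial p : ℝ) with hDF
      have hDF0 : 0 < DF := by
        have : 0 < (n + p).descFactorial p := Nat.descFactorial_pos.mpr (by omega)
        rw [hDF]; exact_mod_cast this
      have hDFle : ∀ (i : Fin (p + 1)) (l : ℕ), l ≤ n →
          ((n - l + (p - i)).descFactorial (p - i) : ℝ) ≤ DF := by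
        intro i l _
        have e1 : (n - l + (p - i)).descFactorial (p - i) ≤ (n + (p - i)).descFactorial (p - i) :=
          Nat.descFactorial_le _ (by omega)
        have e2 : (n + (p - i)).descFactorial (p - i) ≤ (n + p).descFactorial p := by
          have f1 := Nat.factorial_mul_descFactorial (n := n + (p - i)) (k := p - i) (by omega)
          have f2 := Nat.factorial_mul_descFactorial (n := n + p) (k := p) (by omega)
          rw [Nat.add_sub_cancel] at f1 f2
          have f3 : (n + (p - i)).factorial ≤ (n + p).factorial := Nat.factorial_le (by omega)
          rw [← f1, ← f2] at f3
          exact Nat.le_of_mul_le_mul_left f3 (Nat.factorial_pos n)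
        rw [hDF]; exact_mod_cast e1.trans e2
      have hbound : ∀ x ∈ S.erase ((0 : Fin (p + 1)), 0), ‖T x‖ ≤
          if x.2 ≤ d then M * (DF * (Bd * R ^ (n + p - 1))) else 0 := by
        rintro ⟨i, l⟩ hx
        simp only [S, Finset.mem_erase, Finset.mem_product, Finset.mem_univ, true_and,
          Finset.mem_range, Ne, Prod.mk.injEq] at hx
        split_ifs with hl
        · simp only [T, norm_mul, Complex.norm_natCast]
          have hlt : n - l + (p - i) < n + p := by
            by_contra hcon
            apply hx.1
            constructor
            · apply Fin.ext; simp only [Fin.val_zero]; omega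
            · omega
          have e1 := ih _ hlt
          have e2 : R ^ (n - l + (p - i)) ≤ R ^ (n + p - 1) := pow_le_pow_right₀ hR1 (by omega)
          have e3 : ‖PowerSeries.coeff (n - l + (p - i)) Y‖ ≤ Bd * R ^ (n + p - 1) :=
            e1.trans (mul_le_mul_of_nonneg_left e2 hBd0)
          have e4 := hDFle i l (by omega)
          have e5 := hM i l
          gcongr
        · simp only [T]
          rw [coeff_eq_zero_of_natDegree_lt (by have := hd i; simp only at hl; omega)]
          simp
      have hfin : ‖T (0, 0)‖ ≤ ((p + 1) * (d + 1)) * (M * (DF * (Bd * R ^ (n + p - 1)))) := by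
        have e1 : T (0, 0) = - ∑ x ∈ S.erase (0, 0), T x := eq_neg_of_add_eq_zero_left hsum
        rw [e1, norm_neg]
        refine (norm_sum_le _ _).trans ((Finset.sum_le_sum hbound).trans ?_)
        rw [← Finset.sum_filter, Finset.sum_const, nsmul_eq_mul]
        have hR0 : 0 ≤ R := by linarith
        gcongr
        have e2 : ((S.erase (0, 0)).filter fun x => x.2 ≤ d) ⊆
            Finset.univ ×ˢ Finset.range (d + 1) := by
          intro x hx
          simp only [Finset.mem_filter] at hx
          simp only [Finset.mem_product, Finset.mem_univ, true_and, Finset.mem_range]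
          omega
        have e3 := Finset.card_le_card e2
        rw [Finset.card_product, Finset.card_univ, Fintype.card_fin, Finset.card_range] at e3
        exact_mod_cast e3
      have hT0 : ‖T (0, 0)‖ = ‖(B 0).coeff 0‖ * (DF * ‖PowerSeries.coeff (n + p) Y‖) := by
        simp only [T, norm_mul, Complex.norm_natCast, Fin.val_zero, Nat.sub_zero, hDF]
      rw [hT0] at hfin
      have h6 : μ * (DF * ‖PowerSeries.coeff (n + p) Y‖) ≤
          ((p + 1) * (d + 1)) * (M * (DF * (Bd * R ^ (n + p - 1)))) :=
        (mul_le_mul_of_nonneg_right hμ (by positivity)).trans hfin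
      have h7 : ‖PowerSeries.coeff (n + p) Y‖ ≤
          (M / μ * ((p + 1) * (d + 1))) * (Bd * R ^ (n + p - 1)) := by
        have : (μ * DF) * ‖PowerSeries.coeff (n + p) Y‖ ≤
          (μ * DF) * ((M / μ * ((p + 1) * (d + 1))) * (Bd * R ^ (n + p - 1))) := by
          refine le_trans (le_of_eq (by ring)) (h6.trans (le_of_eq ?_))
          field_simp
        exact le_of_mul_le_mul_left this (by positivity)
      rcases Nat.eq_zero_or_pos (n + p) with h0 | hpos
      · -- here `p = 0` and every other coefficient in the recurrence is absent
        have hp : p = 0 := by omega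
        have hn : n = 0 := by omega
        subst hp; subst hn
        have hB : Bd = 0 := by simp [hBd]
        rw [hB] at h7 ⊢
        simpa using h7
      · have hR0 : 0 ≤ R := by linarith
        calc _ ≤ R * (Bd * R ^ (n + p - 1)) := h7.trans (by gcongr)
          _ = Bd * R ^ (n + p) := by
            conv_rhs => rw [show n + p = (n + p - 1) + 1 by omega, pow_succ]
            ring

/-- The sum of a power series, as a function. -/
noncomputable def psSum (g : PowerSeries ℂ) (z : ℂ) : ℂ := ∑' n : ℕ, PowerSeries.coeff n g * z ^ n

lemma SubG.differentiableOn {g : PowerSeries ℂ} (hg : SubG g) :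
    DifferentiableOn ℂ (psSum g) (Metric.ball 0 1) := by
  have := differentiableOn_ps g 0 1 hg
  simpa [psSum] using! this

/-- Uniform radius of continuation of a solution across points where the leading coefficient is
bounded away from zero. -/
lemma local_extension (p : ℕ) (A : Fin (p + 1) → ℂ[X]) (g : PowerSeries ℂ) (hg : SubG g)
    (hode : ∑ i : Fin (p + 1), (A i : PowerSeries ℂ) * psDeriv^[p - i.val] g = 0)
    (μ : ℝ) (hμ : 0 < μ) :
    ∃ c > 0, ∀ z₀ : ℂ, ‖z₀‖ < 1 → μ ≤ ‖(A 0).eval z₀‖ →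
      ∃ F : ℂ → ℂ, DifferentiableOn ℂ F (Metric.ball z₀ c) ∧
        ∀ z ∈ Metric.ball z₀ c, ‖z‖ < 1 → F z = psSum g z := by
  obtain ⟨d, hd⟩ : ∃ D, ∀ i, (A i).natDegree ≤ D :=
    ⟨Finset.univ.sup fun i => (A i).natDegree,
      fun i => Finset.le_sup (f := fun i => (A i).natDegree) (Finset.mem_univ i)⟩
  obtain ⟨M, hM⟩ : ∃ M, ∀ i l, ∀ z₀ : ℂ, ‖z₀‖ ≤ 1 → ‖(Polynomial.taylor z₀ (A i)).coeff l‖ ≤ M := by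
    have hcont : ∀ i l, ∃ C, ∀ z₀ ∈ Metric.closedBall (0 : ℂ) 1,
        ‖(Polynomial.taylor z₀ (A i)).coeff l‖ ≤ C := by
      intro i l
      apply (isCompact_closedBall (0 : ℂ) 1).exists_bound_of_continuousOn
      simp only [taylor_coeff]
      exact (Polynomial.continuous _).continuousOn
    choose C hC using hcont
    refine ⟨∑ i, ∑ l ∈ Finset.range (d + 1), |C i l|, fun i l z₀ hz => ?_⟩
    rcases le_or_gt l d with hl | hl
    · have h1 := (hC i l z₀ (by simpa using hz)).trans (le_abs_self _)
      refine h1.trans ?_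
      have h2 : |C i l| ≤ ∑ l ∈ Finset.range (d + 1), |C i l| :=
        Finset.single_le_sum (f := fun l => |C i l|) (fun _ _ => abs_nonneg _)
          (Finset.mem_range.mpr (by omega))
      exact h2.trans (Finset.single_le_sum (f := fun i => ∑ l ∈ Finset.range (d + 1), |C i l|)
        (fun _ _ => Finset.sum_nonneg fun _ _ => abs_nonneg _) (Finset.mem_univ i))
    · rw [coeff_eq_zero_of_natDegree_lt (by rw [natDegree_taylor]; have := hd i; omega), norm_zero]
      positivity
  set R := max 1 (M / μ * ((p + 1) * (d + 1))) with hR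
  have hR0 : 0 < R := lt_of_lt_of_le one_pos (le_max_left _ _)
  refine ⟨1 / R, by positivity, fun z₀ hz hz' => ?_⟩
  set Y := recenter z₀ g with hY
  have hodeY : ∑ i : Fin (p + 1), ((Polynomial.taylor z₀ (A i) : ℂ[X]) : PowerSeries ℂ) *
      psDeriv^[p - i.val] Y = 0 := by
    have h1 := congrArg (recenter z₀) hode
    rw [recenter_zero, recenter_sum _ _ (fun i _ => (hg.deriv_iter _).poly_mul _) hz] at h1
    rw [← h1]
    apply Finset.sum_congr rfl
    intro i _
    rw [recenter_poly_mul (hg.deriv_iter _) hz, recenter_deriv_iter]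
  obtain ⟨B₀, hB⟩ := ode_majorant p d _ Y M μ R (fun i l => hM i l z₀ hz.le)
    (fun i => by rw [natDegree_taylor]; exact hd i) hμ
    (by rw [taylor_coeff_zero]; exact hz') (le_max_left _ _) (le_max_right _ _) hodeY
  let F : ℂ → ℂ := fun w => ∑' n : ℕ, PowerSeries.coeff n Y * (w - z₀) ^ n
  have hFd : DifferentiableOn ℂ F (Metric.ball z₀ (1 / R)) := by
    apply differentiableOn_ps
    intro ρ h0 h1
    have h2 : R * ρ < 1 := by rwa [lt_div_iff₀' hR0] at h1
    refine Summable.of_nonneg_of_le (fun n => by positivity) (fun n => ?_)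
      ((summable_geometric_of_lt_one (by positivity) h2).mul_left B₀)
    rw [mul_pow, ← mul_assoc]
    gcongr
    exact hB n
  refine ⟨F, hFd, ?_⟩
  -- both functions are analytic on a convex set and agree near `z₀`
  have hU : IsOpen (Metric.ball z₀ (1 / R) ∩ Metric.ball (0 : ℂ) 1) :=
    Metric.isOpen_ball.inter Metric.isOpen_ball
  have hconv : Convex ℝ (Metric.ball z₀ (1 / R) ∩ Metric.ball (0 : ℂ) 1) :=
    (convex_ball _ _).inter (convex_ball _ _)
  have hmem : z₀ ∈ Metric.ball z₀ (1 / R) ∩ Metric.ball (0 : ℂ) 1 :=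
    ⟨Metric.mem_ball_self (by positivity), by simpa using hz⟩
  have heq : Set.EqOn F (psSum g) (Metric.ball z₀ (1 / R) ∩ Metric.ball (0 : ℂ) 1) := by
    refine AnalyticOnNhd.eqOn_of_preconnected_of_eventuallyEq
      ((hFd.mono Set.inter_subset_left).analyticOnNhd hU)
      ((hg.differentiableOn.mono Set.inter_subset_right).analyticOnNhd hU)
      hconv.isPreconnected hmem ?_
    filter_upwards [Metric.ball_mem_nhds z₀ (show 0 < 1 - ‖z₀‖ by linarith)] with w hw
    have hw' : ‖z₀‖ + ‖w - z₀‖ < 1 := by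
      have := mem_ball_iff_norm.mp hw; linarith
    have := recenter_hasSum hg hw'
    simp only [F, psSum]
    rw [← this]
    congr 1; ext n; congr 2; ring
  intro z hz1 hz2
  exact heq ⟨hz1, by simpa using hz2⟩

/-- Continuation across all points of the unit circle that keep a fixed distance from the zeros
of the leading coefficient. -/
lemma global_extension (p : ℕ) (A : Fin (p + 1) → ℂ[X])
    (g : PowerSeries ℂ) (hg : SubG g)
    (hode : ∑ i : Fin (p + 1), (A i : PowerSeries ℂ) * psDeriv^[p - i.val] g = 0)
    (η : ℝ) (hη : 0 < η) :
    ∃ c > 0, ∃ (F : ℂ → ℂ) (U : Set ℂ), IsOpen U ∧ DifferentiableOn ℂ F U ∧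
      Metric.ball 0 1 ⊆ U ∧ (∀ z, ‖z‖ < 1 → F z = psSum g z) ∧
      ∀ ω : ℂ, ‖ω‖ = 1 → (∀ ζ : ℂ, ‖ζ‖ = 1 → (A 0).eval ζ = 0 → η ≤ ‖ω - ζ‖) →
        Metric.ball ω c ⊆ U := by
  classical
  -- a lower bound for the leading coefficient just inside the far part of the circle
  let Far : Set ℂ := {ω | ‖ω‖ = 1 ∧ ∀ ζ : ℂ, ‖ζ‖ = 1 → (A 0).eval ζ = 0 → η ≤ ‖ω - ζ‖}
  have hFarC : IsCompact Far := by
    refine (isCompact_sphere (0 : ℂ) 1).of_isClosed_subset ?_ (fun ω hω => by simpa using hω.1)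
    have : Far = {ω | ‖ω‖ = 1} ∩ ⋂ (ζ : ℂ) (_ : ‖ζ‖ = 1) (_ : (A 0).eval ζ = 0),
        {ω | η ≤ ‖ω - ζ‖} := by
      ext ω; simp [Far]
    rw [this]
    refine (isClosed_eq continuous_norm continuous_const).inter ?_
    refine isClosed_iInter fun ζ => isClosed_iInter fun _ => isClosed_iInter fun _ => ?_
    exact isClosed_le continuous_const (by fun_prop)
  obtain ⟨μ, hμ0, κ, hκ0, hκ⟩ : ∃ μ > 0, ∃ κ > 0, ∀ z, ∀ ω ∈ Far, ‖z - ω‖ < κ →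
      μ ≤ ‖(A 0).eval z‖ := by
    rcases Far.eq_empty_or_nonempty with he | hne
    · exact ⟨1, one_pos, 1, one_pos, fun z ω hω => by rw [he] at hω; exact hω.elim⟩
    · have hc : ContinuousOn (fun z => ‖(A 0).eval z‖) Far :=
        ((A 0).continuous.norm).continuousOn
      obtain ⟨ω₀, hω₀, hmin⟩ := hFarC.exists_isMinOn hne hc
      have hpos : 0 < ‖(A 0).eval ω₀‖ := by
        rw [norm_pos_iff]
        intro h0
        have := hω₀.2 ω₀ hω₀.1 h0
        rw [sub_self, norm_zero] at this
        linarith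
      set m := ‖(A 0).eval ω₀‖ with hm
      have hV : IsOpen {z | m / 2 < ‖(A 0).eval z‖} :=
        isOpen_lt continuous_const ((A 0).continuous.norm)
      have hsub : Far ⊆ {z | m / 2 < ‖(A 0).eval z‖} := fun ω hω => by
        have := isMinOn_iff.mp hmin ω hω
        simp only [Set.mem_ofPred_eq]; linarith
      obtain ⟨κ, hκ0, hκ⟩ := hFarC.exists_thickening_subset_open hV hsub
      refine ⟨m / 2, by positivity, κ, hκ0, fun z ω hω hz => ?_⟩
      have : z ∈ Metric.thickening κ Far := by
        rw [Metric.mem_thickening_iff]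
        exact ⟨ω, hω, by rw [dist_eq_norm]; exact hz⟩
      exact le_of_lt (hκ this)
  obtain ⟨c, hc0, hext⟩ := local_extension p A g hg hode μ hμ0
  let S : Set ℂ := {z₀ | ‖z₀‖ < 1 ∧ μ ≤ ‖(A 0).eval z₀‖}
  choose! Fl hFl1 hFl2 using fun z₀ (h : z₀ ∈ S) => hext z₀ h.1 h.2
  have hagree : ∀ z₀ ∈ S, ∀ z₁ ∈ S, ∀ w, w ∈ Metric.ball z₀ c → w ∈ Metric.ball z₁ c →
      Fl z₀ w = Fl z₁ w := by
    intro z₀ h0 z₁ h1 w hw0 hw1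
    have hU : IsOpen (Metric.ball z₀ c ∩ Metric.ball z₁ c) :=
      Metric.isOpen_ball.inter Metric.isOpen_ball
    have hconv : Convex ℝ (Metric.ball z₀ c ∩ Metric.ball z₁ c) :=
      (convex_ball _ _).inter (convex_ball _ _)
    have hdist : ‖z₀ - z₁‖ < 2 * c := by
      have e1 := mem_ball_iff_norm.mp hw0
      have e2 := mem_ball_iff_norm.mp hw1
      have : z₀ - z₁ = (w - z₁) - (w - z₀) := by ring
      rw [this]
      exact (norm_sub_le _ _).trans_lt (by linarith)
    set q : ℂ := (z₀ + z₁) / 2 with hq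
    have hq0 : q ∈ Metric.ball z₀ c := by
      rw [mem_ball_iff_norm, show q - z₀ = -(z₀ - z₁) / 2 by rw [hq]; ring, norm_div, norm_neg]
      norm_num; linarith
    have hq1 : q ∈ Metric.ball z₁ c := by
      rw [mem_ball_iff_norm, show q - z₁ = (z₀ - z₁) / 2 by rw [hq]; ring, norm_div]
      norm_num; linarith
    have hq2 : ‖q‖ < 1 := by
      rw [hq, norm_div]
      have := norm_add_le z₀ z₁
      have e1 := h0.1
      have e2 := h1.1
      norm_num; linarith
    have heq : Set.EqOn (Fl z₀) (Fl z₁) (Metric.ball z₀ c ∩ Metric.ball z₁ c) := by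
      refine AnalyticOnNhd.eqOn_of_preconnected_of_eventuallyEq
        (((hFl1 z₀ h0).mono Set.inter_subset_left).analyticOnNhd hU)
        (((hFl1 z₁ h1).mono Set.inter_subset_right).analyticOnNhd hU)
        hconv.isPreconnected ⟨hq0, hq1⟩ ?_
      filter_upwards [hU.mem_nhds ⟨hq0, hq1⟩,
        Metric.isOpen_ball.mem_nhds (show q ∈ Metric.ball (0 : ℂ) 1 by simpa using hq2)]
        with v hv hv'
      have hv1 : ‖v‖ < 1 := by simpa using hv'
      rw [hFl2 z₀ h0 v hv.1 hv1, hFl2 z₁ h1 v hv.2 hv1]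
    exact heq ⟨hw0, hw1⟩
  let F : ℂ → ℂ := fun z => if ‖z‖ < 1 then psSum g z else
    if h : ∃ z₀ ∈ S, z ∈ Metric.ball z₀ c then Fl h.choose z else 0
  have hFball : ∀ z₀ ∈ S, ∀ z ∈ Metric.ball z₀ c, F z = Fl z₀ z := by
    intro z₀ h0 z hz
    simp only [F]
    split_ifs with h1 h2
    · exact (hFl2 z₀ h0 z hz h1).symm
    · exact hagree _ h2.choose_spec.1 _ h0 z h2.choose_spec.2 hz
    · exact (h2 ⟨z₀, h0, hz⟩).elim
  have hFdisc : ∀ z, ‖z‖ < 1 → F z = psSum g z := fun z hz => by simp only [F, if_pos hz]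
  refine ⟨c / 2, by positivity, F, Metric.ball 0 1 ∪ ⋃ z₀ ∈ S, Metric.ball z₀ c,
    Metric.isOpen_ball.union (isOpen_biUnion fun _ _ => Metric.isOpen_ball), ?_,
    Set.subset_union_left, hFdisc, ?_⟩
  · intro z hz
    apply DifferentiableAt.differentiableWithinAt
    rcases hz with hz | hz
    · have e1 : DifferentiableAt ℂ (psSum g) z :=
        hg.differentiableOn.differentiableAt (Metric.isOpen_ball.mem_nhds hz)
      refine e1.congr_of_eventuallyEq ?_
      filter_upwards [Metric.isOpen_ball.mem_nhds hz] with w hw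
      exact hFdisc w (by simpa using hw)
    · simp only [Set.mem_iUnion, exists_prop] at hz
      obtain ⟨z₀, h0, hz⟩ := hz
      have e1 : DifferentiableAt ℂ (Fl z₀) z :=
        (hFl1 z₀ h0).differentiableAt (Metric.isOpen_ball.mem_nhds hz)
      refine e1.congr_of_eventuallyEq ?_
      filter_upwards [Metric.isOpen_ball.mem_nhds hz] with w hw
      exact hFball z₀ h0 w hw
  · intro ω hω hfar z hz
    right
    simp only [Set.mem_iUnion, exists_prop]
    set t : ℝ := min (min κ c / 4) (1 / 2) with ht
    have ht0 : 0 < t := by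
      rw [ht]; exact lt_min (by have := lt_min hκ0 hc0; positivity) (by norm_num)
    have ht1 : t ≤ min κ c / 4 := min_le_left _ _
    have ht2 : t ≤ 1 / 2 := min_le_right _ _
    have hz₀ : ‖((1 - t : ℝ) : ℂ) * ω - ω‖ = t := by
      rw [show ((1 - t : ℝ) : ℂ) * ω - ω = -((t : ℂ) * ω) by push_cast; ring, norm_neg, norm_mul,
        hω, mul_one, Complex.norm_of_nonneg ht0.le]
    have hκm := min_le_left κ c
    have hcm := min_le_right κ c
    have hm0 := lt_min hκ0 hc0
    refine ⟨((1 - t : ℝ) : ℂ) * ω, ⟨?_, ?_⟩, ?_⟩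
    · rw [norm_mul, hω, mul_one, Complex.norm_of_nonneg (by linarith)]; linarith
    · exact hκ _ ω ⟨hω, hfar⟩ (by rw [hz₀]; linarith)
    · rw [mem_ball_iff_norm] at hz ⊢
      have : z - ((1 - t : ℝ) : ℂ) * ω = (z - ω) - (((1 - t : ℝ) : ℂ) * ω - ω) := by ring
      rw [this]
      refine (norm_sub_le _ _).trans_lt ?_
      rw [hz₀]; linarith

end LocalExtension

/-! ### Contour estimate for sums against the coefficients of a D-finite series -/

/-- Cauchy's theorem on a cylinder: the left boundary of `[x₀, x₁] × ℝ/2πℤ` is pushed to the right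
over the arcs marked `far`, across which `G` is holomorphic. -/
lemma norm_integral_le_of_arcs (G : ℂ → ℂ) (L : ℕ) (hL : 0 < L) (δ : ℝ) (hδ : L * δ = 2 * Real.pi)
    (x₀ x₁ : ℝ) (hx : x₀ ≤ x₁) (far : ℤ → Prop) (hfar : far (-1) ↔ far (L - 1))
    (hper : ∀ ζ, G (ζ + 2 * Real.pi * Complex.I) = G ζ) (B : ℝ)
    (hdiff : ∀ j : ℤ, far j →
      DifferentiableOn ℂ G (Set.Icc x₀ x₁ ×ℂ Set.Icc (j * δ) ((j + 1) * δ)))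
    (hleft : Continuous fun y : ℝ => G (x₀ + y * Complex.I))
    (hnear : ∀ j : ℤ, ¬ far j → ∀ y ∈ Set.Icc (j * δ) ((j + 1) * δ),
      ‖G (x₀ + y * Complex.I)‖ ≤ B)
    (hright : ∀ j : ℤ, far j → ∀ y ∈ Set.Icc (j * δ) ((j + 1) * δ),
      ‖G (x₁ + y * Complex.I)‖ ≤ B)
    (hseg : ∀ j : ℤ, ¬ (far j ↔ far (j - 1)) → ∀ x ∈ Set.Icc x₀ x₁,
      ‖G (x + (j * δ : ℝ) * Complex.I)‖ ≤ B) :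
    ‖∫ y in (0 : ℝ)..2 * Real.pi, G (x₀ + y * Complex.I)‖ ≤ B * (2 * Real.pi + L * (x₁ - x₀)) := by
  classical
  have hδ0 : 0 < δ := by
    have : (0 : ℝ) < L := by exact_mod_cast hL
    have h2 := Real.two_pi_pos
    rw [← hδ] at h2
    exact pos_of_mul_pos_right h2 this.le
  let χ : ℤ → ℂ := fun j => if far j then 1 else 0
  let h : ℤ → ℂ := fun j => ∫ x in x₀..x₁, G (x + (j * δ : ℝ) * Complex.I)
  let I₀ : ℤ → ℂ := fun j => ∫ y in (j * δ)..((j + 1) * δ), G (x₀ + y * Complex.I)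
  let J : ℤ → ℂ := fun j => ∫ y in (j * δ)..((j + 1) * δ), G (x₁ + y * Complex.I)
  have hle (j : ℤ) : (j * δ : ℝ) ≤ (j + 1) * δ := by nlinarith
  have hrect : ∀ j, far j → Complex.I * I₀ j = Complex.I * J j + (h j - h (j + 1)) := by
    intro j hj
    have := Complex.integral_boundary_rect_eq_zero_of_differentiableOn G
      (⟨x₀, j * δ⟩ : ℂ) ⟨x₁, (j + 1) * δ⟩ (by
        simp only [Set.uIcc_of_le hx, Set.uIcc_of_le (hle j)]
        exact hdiff j hj)
    simp only [smul_eq_mul] at this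
    simp only [I₀, J, h]
    push_cast at this ⊢
    linear_combination -this
  have hI₀n : ∀ j, ¬ far j → ‖I₀ j‖ ≤ B * δ := by
    intro j hj
    have := intervalIntegral.norm_integral_le_of_norm_le_const (a := j * δ) (b := (j + 1) * δ)
      (f := fun y : ℝ => G (x₀ + y * Complex.I)) (C := B) (by
        intro y hy
        rw [Set.uIoc_of_le (hle j)] at hy
        exact hnear j hj y ⟨hy.1.le, hy.2⟩)
    refine this.trans_eq ?_
    rw [abs_of_nonneg (by linarith [hle j])]; ring
  have hJn : ∀ j, far j → ‖J j‖ ≤ B * δ := by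
    intro j hj
    have := intervalIntegral.norm_integral_le_of_norm_le_const (a := j * δ) (b := (j + 1) * δ)
      (f := fun y : ℝ => G (x₁ + y * Complex.I)) (C := B) (by
        intro y hy
        rw [Set.uIoc_of_le (hle j)] at hy
        exact hright j hj y ⟨hy.1.le, hy.2⟩)
    refine this.trans_eq ?_
    rw [abs_of_nonneg (by linarith [hle j])]; ring
  have hhn : ∀ j, ‖(χ j - χ (j - 1)) * h j‖ ≤ B * (x₁ - x₀) ∨ (χ j - χ (j - 1)) * h j = 0 := by
    intro j
    by_cases hj : far j ↔ far (j - 1)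
    · right
      have : χ j = χ (j - 1) := by simp only [χ, hj]
      rw [this]; ring
    · left
      have := intervalIntegral.norm_integral_le_of_norm_le_const (a := x₀) (b := x₁)
        (f := fun x : ℝ => G (x + (j * δ : ℝ) * Complex.I)) (C := B) (by
          intro y hy
          rw [Set.uIoc_of_le hx] at hy
          exact hseg j hj y ⟨hy.1.le, hy.2⟩)
      rw [abs_of_nonneg (by linarith)] at this
      have h1 : ‖χ j - χ (j - 1)‖ = 1 := by
        simp only [χ]
        by_cases h1 : far j <;> by_cases h2 : far (j - 1) <;> simp_all
      rw [norm_mul, h1, one_mul]; exact this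
  have htot : ∫ y in (0 : ℝ)..2 * Real.pi, G (x₀ + y * Complex.I)
      = ∑ k ∈ Finset.range L, I₀ k := by
    have := intervalIntegral.sum_integral_adjacent_intervals (μ := MeasureTheory.volume)
      (f := fun y : ℝ => G (x₀ + y * Complex.I)) (a := fun k : ℕ => k * δ) (n := L)
      (fun k _ => hleft.intervalIntegrable _ _)
    simp only [Nat.cast_zero, zero_mul, hδ] at this
    rw [← this]
    refine Finset.sum_congr rfl fun k _ => ?_
    simp only [I₀]; push_cast; rfl
  have hhL : h L = h 0 := by
    simp only [h]
    refine intervalIntegral.integral_congr fun x _ => ?_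
    rw [← hper (x + ((0 : ℤ) * δ : ℝ) * Complex.I)]
    congr 1
    have : ((L : ℤ) * δ : ℝ) = 2 * Real.pi := by exact_mod_cast hδ
    rw [this]; push_cast; ring
  -- summation by parts over the cyclically ordered arcs
  have hparts : ∑ k ∈ Finset.range L, χ k * (h k - h (k + 1))
      = ∑ k ∈ Finset.range L, (χ k - χ (k - 1)) * h k := by
    have h1 := Finset.sum_range_succ (fun k : ℕ => χ (k - 1) * h k) L
    have h2 := Finset.sum_range_succ' (fun k : ℕ => χ (k - 1) * h k) L
    have h3 : χ ((L : ℤ) - 1) * h L = χ (((0 : ℕ) : ℤ) - 1) * h ((0 : ℕ) : ℤ) := by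
      rw [hhL]
      simp only [χ, Nat.cast_zero, zero_sub, hfar]
    have h4 : ∑ k ∈ Finset.range L, χ (((k + 1 : ℕ) : ℤ) - 1) * h ((k + 1 : ℕ) : ℤ)
        = ∑ k ∈ Finset.range L, χ k * h (k + 1) := by
      refine Finset.sum_congr rfl fun k _ => ?_
      push_cast; rw [add_sub_cancel_right]
    rw [h4] at h2
    simp only [mul_sub, sub_mul, Finset.sum_sub_distrib]
    linear_combination h2 - h1 - h3
  have key : Complex.I * ∑ k ∈ Finset.range L, I₀ k
      = (∑ k ∈ Finset.range L, Complex.I * (if far k then J k else I₀ k))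
        + ∑ k ∈ Finset.range L, (χ k - χ (k - 1)) * h k := by
    rw [← hparts, Finset.mul_sum, ← Finset.sum_add_distrib]
    refine Finset.sum_congr rfl fun k _ => ?_
    by_cases hk : far k
    · simp only [χ, hk, if_true, one_mul]; exact hrect k hk
    · simp only [χ, hk, if_false, zero_mul, add_zero]
  have hB0 : 0 ≤ B := by
    by_cases h0 : far 0
    · exact (norm_nonneg _).trans (hright 0 h0 _ ⟨le_rfl, hle 0⟩)
    · exact (norm_nonneg _).trans (hnear 0 h0 _ ⟨le_rfl, hle 0⟩)
  rw [htot, ← one_mul ‖_‖, ← Complex.norm_I, ← norm_mul, key]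
  have e1 : ‖∑ k ∈ Finset.range L, Complex.I * (if far k then J k else I₀ k)‖
      ≤ ∑ k ∈ Finset.range L, B * δ := by
    refine norm_sum_le_of_le _ fun k _ => ?_
    rw [norm_mul, Complex.norm_I, one_mul]
    split_ifs with hk
    · exact hJn k hk
    · exact hI₀n k hk
  have e2 : ‖∑ k ∈ Finset.range L, (χ k - χ (k - 1)) * h k‖
      ≤ ∑ k ∈ Finset.range L, B * (x₁ - x₀) := by
    refine norm_sum_le_of_le _ fun k _ => ?_
    rcases hhn k with h1 | h1
    · exact h1
    · rw [h1, norm_zero]; exact mul_nonneg hB0 (by linarith)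
  rw [Finset.sum_const, Finset.card_range, nsmul_eq_mul] at e1 e2
  refine (norm_add_le _ _).trans ((add_le_add e1 e2).trans_eq ?_)
  rw [← hδ]; ring

/-- Cauchy's coefficient formula on `|z| = exp x₀`, in the logarithmic coordinate `x₀ + i y`. -/
lemma integral_psSum_mul_exp (g : PowerSeries ℂ) (hg : SubG g) (x₀ : ℝ) (hx₀ : x₀ < 0) (n : ℕ) :
    ∫ y in (0 : ℝ)..2 * Real.pi, psSum g (Complex.exp (x₀ + y * Complex.I)) *
      (Complex.exp (-(x₀ + y * Complex.I))) ^ n = 2 * Real.pi * PowerSeries.coeff n g := by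
  have hρ := hg (Real.exp x₀) (Real.exp_pos _).le (by simpa using hx₀)
  have hsum := intervalIntegral.hasSum_integral_of_dominated_convergence (a := 0)
    (b := 2 * Real.pi) (μ := MeasureTheory.volume)
    (F := fun (k : ℕ) (y : ℝ) => PowerSeries.coeff k g * Complex.exp (x₀ + y * Complex.I) ^ k *
      (Complex.exp (-(x₀ + y * Complex.I))) ^ n)
    (f := fun y : ℝ => psSum g (Complex.exp (x₀ + y * Complex.I)) *
      (Complex.exp (-(x₀ + y * Complex.I))) ^ n)
    (fun k _ => ‖PowerSeries.coeff k g‖ * Real.exp x₀ ^ k * Real.exp (-x₀) ^ n)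
    (fun k => (by fun_prop : Continuous _).aestronglyMeasurable)
    (fun k => Filter.Eventually.of_forall fun y _ => by
      simp [Complex.norm_exp])
    (Filter.Eventually.of_forall fun y _ => hρ.mul_right _)
    intervalIntegrable_const
    (Filter.Eventually.of_forall fun y _ => by
      refine HasSum.mul_right _ ?_
      refine Summable.hasSum (Summable.of_norm ?_)
      simpa [Complex.norm_exp] using hρ)
  have hterm : ∀ k : ℕ, ∫ y in (0 : ℝ)..2 * Real.pi,
      PowerSeries.coeff k g * Complex.exp (x₀ + y * Complex.I) ^ k *
      (Complex.exp (-(x₀ + y * Complex.I))) ^ n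
        = if k = n then 2 * Real.pi * PowerSeries.coeff n g else 0 := by
    intro k
    have e : ∀ y : ℝ, PowerSeries.coeff k g * Complex.exp (x₀ + y * Complex.I) ^ k *
      (Complex.exp (-(x₀ + y * Complex.I))) ^ n = PowerSeries.coeff k g *
        Complex.exp (((k : ℂ) - n) * x₀) * Complex.exp ((((k : ℂ) - n) * Complex.I) * y) := by
      intro y
      rw [← Complex.exp_nat_mul, ← Complex.exp_nat_mul, mul_assoc, ← Complex.exp_add, mul_assoc,
        ← Complex.exp_add]
      congr 2; ring
    simp only [e]
    rw [intervalIntegral.integral_const_mul]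
    split_ifs with hk
    · subst hk; simp; ring
    · have hne : ((k : ℂ) - n) ≠ 0 := by
        rw [sub_ne_zero]; exact_mod_cast hk
      rw [integral_exp_mul_complex (mul_ne_zero hne Complex.I_ne_zero)]
      have : Complex.exp (((k : ℂ) - n) * Complex.I * ((2 * Real.pi : ℝ) : ℂ)) = 1 := by
        rw [Complex.exp_eq_one_iff]
        exact ⟨(k : ℤ) - n, by push_cast; ring⟩
      rw [this]; simp
  simp only [hterm] at hsum
  exact hsum.unique (by simpa using hasSum_ite_eq n (2 * Real.pi * PowerSeries.coeff n g : ℂ))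

lemma integral_psSum_mul_eval (g : PowerSeries ℂ) (hg : SubG g) (x₀ : ℝ) (hx₀ : x₀ < 0)
    (H : ℂ[X]) :
    ∫ y in (0 : ℝ)..2 * Real.pi, psSum g (Complex.exp (x₀ + y * Complex.I)) *
      H.eval (Complex.exp (-(x₀ + y * Complex.I)))
      = 2 * Real.pi * H.sum fun n h => h * PowerSeries.coeff n g := by
  have hc : Continuous fun y : ℝ => psSum g (Complex.exp (x₀ + y * Complex.I)) := by
    refine hg.differentiableOn.continuousOn.comp_continuous (by fun_prop) fun y => ?_
    simpa [Complex.norm_exp] using hx₀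
  have e : ∀ y : ℝ, psSum g (Complex.exp (x₀ + y * Complex.I)) *
      H.eval (Complex.exp (-(x₀ + y * Complex.I))) = ∑ n ∈ H.support, H.coeff n *
        (psSum g (Complex.exp (x₀ + y * Complex.I)) * (Complex.exp (-(x₀ + y * Complex.I))) ^ n) := by
    intro y
    rw [Polynomial.eval_eq_sum, Polynomial.sum, Finset.mul_sum]
    exact Finset.sum_congr rfl fun _ _ => by ring
  simp only [e]
  rw [intervalIntegral.integral_finsetSum (fun n _ => by
    refine Continuous.intervalIntegrable ?_ _ _
    fun_prop)]
  rw [Polynomial.sum, Finset.mul_sum]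
  refine Finset.sum_congr rfl fun n _ => ?_
  rw [intervalIntegral.integral_const_mul, integral_psSum_mul_exp g hg x₀ hx₀ n]
  ring

lemma norm_exp_mul_I_sub_le (x y : ℝ) :
    ‖Complex.exp (x * Complex.I) - Complex.exp (y * Complex.I)‖ ≤ |x - y| := by
  have h : Complex.exp (x * Complex.I) - Complex.exp (y * Complex.I)
      = Complex.exp (y * Complex.I) * (Complex.exp (Complex.I * ((x - y : ℝ) : ℂ)) - 1) := by
    rw [mul_sub, ← Complex.exp_add, mul_one]
    congr 2; push_cast; ring
  rw [h, norm_mul, Complex.norm_exp_ofReal_mul_I, one_mul]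
  exact Real.norm_exp_I_mul_ofReal_sub_one_le

/-- A sum `∑ h_n g_n` against the coefficients of a solution `g` of a differential equation is
controlled by the size of `H = ∑ h_n wⁿ` on a disc of radius less than `1` and near the
reciprocals of the singular points on the unit circle. -/
lemma contour_bound (p : ℕ) (A : Fin (p + 1) → ℂ[X]) (g : PowerSeries ℂ) (hg : SubG g)
    (hode : ∑ i : Fin (p + 1), (A i : PowerSeries ℂ) * psDeriv^[p - i.val] g = 0)
    (η : ℝ) (hη : 0 < η) :
    ∃ c > 0, ∀ η₂ > 0, ∃ B : ℝ, ∀ (H : ℂ[X]) (S : ℝ),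
      (∀ w : ℂ, (‖w‖ ≤ Real.exp (-c) ∨ (‖w‖ ≤ Real.exp η₂ ∧
        ∃ ζ : ℂ, ‖ζ‖ = 1 ∧ (A 0).eval ζ = 0 ∧ ‖w - ζ⁻¹‖ ≤ η)) → ‖H.eval w‖ ≤ S) →
      ‖H.sum fun n h => h * PowerSeries.coeff n g‖ ≤ B * S := by
  set η₁ := η / 4 with hη₁
  have hη₁0 : 0 < η₁ := by positivity
  obtain ⟨c₀, hc₀, F, U, hU, hF, hball, hFg, hfar⟩ := global_extension p A g hg hode η₁ hη₁0
  set c := min 1 (min (η₁ / 2) (c₀ / 4)) with hc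
  have hc0 : 0 < c := by simp only [hc, lt_min_iff]; exact ⟨one_pos, by positivity, by positivity⟩
  have hc1 : c ≤ 1 := min_le_left _ _
  have hcη : 2 * c ≤ η₁ := by
    have := (min_le_right 1 (min (η₁ / 2) (c₀ / 4))).trans (min_le_left _ _)
    rw [← hc] at this; linarith
  have hcc : 2 * c < c₀ := by
    have := (min_le_right 1 (min (η₁ / 2) (c₀ / 4))).trans (min_le_right _ _)
    rw [← hc] at this; linarith
  refine ⟨c, hc0, fun η₂ hη₂ => ?_⟩
  set m := min η₂ c with hm
  have hm0 : 0 < m := lt_min hη₂ hc0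
  have hmη : m ≤ η₂ := min_le_left _ _
  have hmc : m ≤ c := min_le_right _ _
  obtain ⟨L, hL⟩ := exists_nat_gt (2 * Real.pi / η₁)
  have hL0' : (0 : ℝ) < L := lt_trans (by positivity) hL
  have hL0 : 0 < L := by exact_mod_cast hL0'
  set δ := 2 * Real.pi / L with hδ
  have hδL : L * δ = 2 * Real.pi := by rw [hδ]; field_simp
  have hδη : δ ≤ η₁ := by
    rw [hδ, div_le_iff₀ hL0']
    rw [div_lt_iff₀ hη₁0] at hL
    linarith
  have hexp : ∀ x ∈ Set.Icc (-m) c, |Real.exp x - 1| ≤ 2 * c ∧ |Real.exp (-x) - 1| ≤ 2 * c := by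
    intro x hx
    have h1 : |x| ≤ c := abs_le.mpr ⟨by linarith [hx.1], hx.2⟩
    have h2 := Real.abs_exp_sub_one_le (h1.trans hc1)
    have h3 := Real.abs_exp_sub_one_le (x := -x) (by rw [abs_neg]; exact h1.trans hc1)
    rw [abs_neg] at h3
    exact ⟨by linarith, by linarith⟩
  let Far : Set ℂ := {ω | ‖ω‖ = 1 ∧ ∀ ζ : ℂ, ‖ζ‖ = 1 → (A 0).eval ζ = 0 → η₁ ≤ ‖ω - ζ‖}
  have hFarC : IsCompact Far := by
    refine (isCompact_sphere (0 : ℂ) 1).of_isClosed_subset ?_ (fun ω hω => by simpa using hω.1)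
    have : Far = {ω | ‖ω‖ = 1} ∩ ⋂ (ζ : ℂ) (_ : ‖ζ‖ = 1) (_ : (A 0).eval ζ = 0),
        {ω | η₁ ≤ ‖ω - ζ‖} := by
      ext ω; simp [Far]
    rw [this]
    refine (isClosed_eq continuous_norm continuous_const).inter ?_
    refine isClosed_iInter fun ζ => isClosed_iInter fun _ => isClosed_iInter fun _ => ?_
    exact isClosed_le continuous_const (by fun_prop)
  have hin : ∀ x ∈ Set.Icc (-m) c, ∀ ω ∈ Far, (Real.exp x : ℂ) * ω ∈ U := by
    intro x hx ω hω
    refine hfar ω hω.1 hω.2 ?_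
    rw [Metric.mem_ball, dist_eq_norm]
    have : (Real.exp x : ℂ) * ω - ω = ((Real.exp x - 1 : ℝ) : ℂ) * ω := by push_cast; ring
    rw [this, norm_mul, hω.1, mul_one, Complex.norm_real]
    exact (hexp x hx).1.trans_lt hcc
  obtain ⟨M₁, hM₁⟩ := (isCompact_Icc.prod hFarC).exists_bound_of_continuousOn
    (f := fun q : ℝ × ℂ => F ((Real.exp q.1 : ℂ) * q.2))
    (hF.continuousOn.comp (by fun_prop) (fun q hq => hin q.1 hq.1 q.2 hq.2))
  have hleftU : ∀ ω : ℂ, ‖ω‖ = 1 → (Real.exp (-m) : ℂ) * ω ∈ Metric.ball (0 : ℂ) 1 := by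
    intro ω hω
    rw [mem_ball_zero_iff, norm_mul, hω, mul_one, Complex.norm_real, Real.norm_eq_abs,
      abs_of_pos (Real.exp_pos _), Real.exp_lt_one_iff]
    linarith
  obtain ⟨M₂, hM₂⟩ := (isCompact_sphere (0 : ℂ) 1).exists_bound_of_continuousOn
    (f := fun ω : ℂ => F ((Real.exp (-m) : ℂ) * ω))
    (hF.continuousOn.comp (by fun_prop) (fun ω hω => hball (hleftU ω (by simpa using hω))))
  set M := max M₁ M₂ with hM
  have hsplit : ∀ x y : ℝ, Complex.exp (x + y * Complex.I)
      = (Real.exp x : ℂ) * Complex.exp (y * Complex.I) := by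
    intro x y; rw [Complex.exp_add, Complex.ofReal_exp]
  -- arcs of length `δ` whose left endpoint keeps distance `2 η₁` from the singular points; over these
  -- the contour may be pushed beyond the unit circle
  let far : ℤ → Prop := fun j => ∀ ζ : ℂ, ‖ζ‖ = 1 → (A 0).eval ζ = 0 →
    2 * η₁ ≤ ‖Complex.exp ((j * δ : ℝ) * Complex.I) - ζ‖
  have hd : ∀ (j : ℤ), ∀ y ∈ Set.Icc (j * δ) ((j + 1) * δ),
      ‖Complex.exp ((j * δ : ℝ) * Complex.I) - Complex.exp (y * Complex.I)‖ ≤ η₁ := by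
    intro j y hy
    refine (norm_exp_mul_I_sub_le _ _).trans ?_
    rw [abs_le]; constructor <;> nlinarith [hy.1, hy.2]
  have hfarF : ∀ j, far j → ∀ y ∈ Set.Icc (j * δ) ((j + 1) * δ),
      Complex.exp (y * Complex.I) ∈ Far := by
    intro j hj y hy
    refine ⟨Complex.norm_exp_ofReal_mul_I y, fun ζ h1 h2 => ?_⟩
    have e1 := hj ζ h1 h2
    have e2 := hd j y hy
    have e3 := norm_sub_le_norm_sub_add_norm_sub (Complex.exp ((j * δ : ℝ) * Complex.I))
      (Complex.exp (y * Complex.I)) ζ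
    linarith
  have hnearF : ∀ j, ¬ far j → ∀ y ∈ Set.Icc (j * δ) ((j + 1) * δ),
      ∃ ζ : ℂ, ‖ζ‖ = 1 ∧ (A 0).eval ζ = 0 ∧ ‖Complex.exp (y * Complex.I) - ζ‖ ≤ 3 * η₁ := by
    intro j hj y hy
    simp only [far] at hj
    push Not at hj
    obtain ⟨ζ, h1, h2, h3⟩ := hj
    refine ⟨ζ, h1, h2, ?_⟩
    have e2 := hd j y hy
    rw [norm_sub_rev] at e2
    have e3 := norm_sub_le_norm_sub_add_norm_sub (Complex.exp (y * Complex.I))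
      (Complex.exp ((j * δ : ℝ) * Complex.I)) ζ
    linarith
  refine ⟨M * (2 * Real.pi + L * (c - -m)), fun H S hS => ?_⟩
  have hS0 : 0 ≤ S := (norm_nonneg _).trans (hS 0 (Or.inl (by simpa using (Real.exp_pos _).le)))
  have hHnear : ∀ x ∈ Set.Icc (-m) c, ∀ y : ℝ, (∃ ζ : ℂ, ‖ζ‖ = 1 ∧ (A 0).eval ζ = 0 ∧
      ‖Complex.exp (y * Complex.I) - ζ‖ ≤ 3 * η₁) →
      ‖H.eval (Complex.exp (-(x + y * Complex.I)))‖ ≤ S := by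
    rintro x hx y ⟨ζ, h1, h2, h3⟩
    refine hS _ (Or.inr ⟨?_, ζ, h1, h2, ?_⟩)
    · rw [Complex.norm_exp]
      refine Real.exp_le_exp.mpr ?_
      simp
      linarith [hx.1]
    · have hζ : ζ ≠ 0 := by rintro rfl; simp at h1
      have hω := Complex.exp_ne_zero (y * Complex.I)
      have hω1 := Complex.norm_exp_ofReal_mul_I y
      have e0 : Complex.exp (-(x + y * Complex.I))
          = (Real.exp (-x) : ℂ) * (Complex.exp (y * Complex.I))⁻¹ := by
        rw [← Complex.exp_neg, Complex.ofReal_exp, ← Complex.exp_add]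
        congr 1; push_cast; ring
      have e1 : Complex.exp (-(x + y * Complex.I)) - ζ⁻¹
          = ((Real.exp (-x) - 1 : ℝ) : ℂ) * (Complex.exp (y * Complex.I))⁻¹
            + (Complex.exp (y * Complex.I))⁻¹ * (ζ - Complex.exp (y * Complex.I)) * ζ⁻¹ := by
        rw [e0]; push_cast; field_simp; ring
      rw [e1]
      refine (norm_add_le _ _).trans ?_
      rw [norm_mul, norm_mul, norm_mul, norm_inv, norm_inv, hω1, h1, Complex.norm_real,
        norm_sub_rev ζ]
      have := (hexp x hx).2
      rw [Real.norm_eq_abs]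
      simp only [inv_one, mul_one, one_mul]
      linarith
  let G : ℂ → ℂ := fun z => F (Complex.exp z) * H.eval (Complex.exp (-z))
  have hGb : ∀ x ∈ Set.Icc (-m) c, ∀ y : ℝ, Complex.exp (y * Complex.I) ∈ Far →
      ‖H.eval (Complex.exp (-(x + y * Complex.I)))‖ ≤ S → ‖G (x + y * Complex.I)‖ ≤ M * S := by
    intro x hx y hy hH
    simp only [G]
    rw [norm_mul, hsplit]
    have := hM₁ (x, Complex.exp (y * Complex.I)) ⟨hx, hy⟩
    have h2 : ‖F ((Real.exp x : ℂ) * Complex.exp (y * Complex.I))‖ ≤ M :=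
      this.trans (le_max_left _ _)
    exact mul_le_mul h2 hH (norm_nonneg _) ((norm_nonneg _).trans h2)
  have hmain := norm_integral_le_of_arcs G L hL0 δ hδL (-m) c (by linarith) far
    (by
      have : Complex.exp ((((-1 : ℤ) : ℝ) * δ : ℝ) * Complex.I)
          = Complex.exp (((((L : ℤ) - 1 : ℤ) : ℝ) * δ : ℝ) * Complex.I) := by
        rw [Complex.exp_eq_exp_iff_exists_int]
        refine ⟨-1, ?_⟩
        have : ((((L : ℤ) - 1 : ℤ) : ℝ) * δ : ℝ) = 2 * Real.pi - δ := by
          push_cast; linarith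
        rw [this]; push_cast; ring
      simp only [far, this])
    (fun ζ => by
      simp only [G]
      rw [Complex.exp_periodic ζ, neg_add, ← sub_eq_add_neg, Complex.exp_periodic.sub_eq])
    (M * S)
    (by
      intro j hj z hz
      rw [Complex.mem_reProdIm] at hz
      have hz' : Complex.exp z ∈ U := by
        have := hin z.re hz.1 _ (hfarF j hj z.im hz.2)
        rwa [← hsplit, Complex.re_add_im] at this
      have h1 : DifferentiableAt ℂ F (Complex.exp z) := hF.differentiableAt (hU.mem_nhds hz')
      have h2 : DifferentiableAt ℂ (fun z => F (Complex.exp z)) z :=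
        h1.comp z Complex.differentiable_exp.differentiableAt
      have h3 : DifferentiableAt ℂ (fun z : ℂ => H.eval (Complex.exp (-z))) z :=
        H.differentiable.differentiableAt.comp z (by fun_prop)
      exact (h2.mul h3).differentiableWithinAt)
    (by
      simp only [G]
      refine Continuous.mul ?_ ?_
      · refine hF.continuousOn.comp_continuous (by fun_prop) fun y => ?_
        rw [hsplit]
        exact hball (hleftU _ (Complex.norm_exp_ofReal_mul_I y))
      · fun_prop)
    (by
      intro j hj y hy
      have hH := hHnear (-m) ⟨le_rfl, by linarith⟩ y (hnearF j hj y hy)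
      simp only [G]
      rw [norm_mul]
      have h2 : ‖F (Complex.exp (((-m : ℝ) : ℂ) + y * Complex.I))‖ ≤ M := by
        rw [hsplit]
        exact (hM₂ (Complex.exp (y * Complex.I))
          (by simp [Complex.norm_exp_ofReal_mul_I])).trans (le_max_right _ _)
      exact mul_le_mul h2 hH (norm_nonneg _) ((norm_nonneg _).trans h2))
    (by
      intro j hj y hy
      refine hGb c ⟨by linarith, le_rfl⟩ y (hfarF j hj y hy) (hS _ (Or.inl ?_))
      rw [Complex.norm_exp]; simp)
    (by
      intro j hj x hx
      have hδ0 : 0 < δ := by positivity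
      have m1 : (j * δ : ℝ) ∈ Set.Icc ((j : ℝ) * δ) ((j + 1) * δ) := ⟨le_rfl, by nlinarith⟩
      have m2 : (j * δ : ℝ) ∈ Set.Icc (((j - 1 : ℤ) : ℝ) * δ) ((((j - 1 : ℤ) : ℝ) + 1) * δ) := by
        push_cast; constructor <;> nlinarith
      by_cases h1 : far j
      · have h2 : ¬ far (j - 1) := fun h => hj ⟨fun _ => h, fun _ => h1⟩
        exact hGb x hx _ (hfarF j h1 _ m1) (hHnear x hx _ (hnearF _ h2 _ m2))
      · have h2 : far (j - 1) := by
          by_contra h2; exact hj ⟨fun h => (h1 h).elim, fun h => (h2 h).elim⟩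
        exact hGb x hx _ (hfarF _ h2 _ m2) (hHnear x hx _ (hnearF _ h1 _ m1)))
  have hcoef := integral_psSum_mul_eval g hg (-m) (by linarith) H
  have hGeq : ∫ y in (0 : ℝ)..2 * Real.pi, G (((-m : ℝ) : ℂ) + y * Complex.I)
      = 2 * Real.pi * H.sum fun n h => h * PowerSeries.coeff n g := by
    rw [← hcoef]
    refine intervalIntegral.integral_congr fun y _ => ?_
    simp only [G]
    rw [hFg]
    rw [hsplit, ← mem_ball_zero_iff]
    exact hleftU _ (Complex.norm_exp_ofReal_mul_I y)
  rw [hGeq, norm_mul] at hmain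
  have hpi : (1 : ℝ) ≤ ‖(2 * Real.pi : ℂ)‖ := by
    have : (2 * Real.pi : ℂ) = ((2 * Real.pi : ℝ) : ℂ) := by push_cast; ring
    rw [this, Complex.norm_real, Real.norm_eq_abs, abs_of_pos Real.two_pi_pos]
    linarith [Real.pi_gt_three]
  calc ‖H.sum fun n h => h * PowerSeries.coeff n g‖
      ≤ ‖(2 * Real.pi : ℂ)‖ * ‖H.sum fun n h => h * PowerSeries.coeff n g‖ :=
        le_mul_of_one_le_left (norm_nonneg _) hpi
    _ ≤ _ := hmain.trans_eq (by ring)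

/-! ### Smallness of the transformed sequence -/

lemma iteratedDeriv_polynomial (H : ℂ[X]) (k : ℕ) :
    iteratedDeriv k (fun z => H.eval z) = fun z => (Polynomial.derivative^[k] H).eval z := by
  induction k with
  | zero => simp
  | succ k ih =>
    rw [iteratedDeriv_succ, ih, Function.iterate_succ_apply']
    ext z
    exact Polynomial.deriv _

/-- Cauchy's estimate for the Hasse derivatives of a polynomial. -/
lemma norm_hasseDeriv_le (H : ℂ[X]) (w : ℂ) (τ S : ℝ) (hτ : 0 < τ)
    (hS : ∀ z, ‖z - w‖ ≤ τ → ‖H.eval z‖ ≤ S) (j : ℕ) :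
    ‖(Polynomial.hasseDeriv j H).eval w‖ ≤ S / τ ^ j := by
  have h := Complex.norm_iteratedDeriv_le_of_forall_mem_sphere_norm_le (c := w) (R := τ) (C := S)
    (f := fun z => H.eval z) j hτ H.differentiable.diffContOnCl
    (fun z hz => hS z (by rw [← dist_eq_norm]; exact (Metric.mem_sphere.mp hz).le))
  rw [iteratedDeriv_polynomial] at h
  have e : Polynomial.derivative^[j] H = (j.factorial : ℂ[X]) * Polynomial.hasseDeriv j H := by
    rw [← Polynomial.factorial_smul_hasseDeriv, ← nsmul_eq_mul]; rfl
  simp only [e, Polynomial.eval_mul, Polynomial.eval_natCast, norm_mul, Complex.norm_natCast] at h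
  have hf : (0 : ℝ) < (j.factorial : ℝ) := by exact_mod_cast j.factorial_pos
  rw [mul_div_assoc] at h
  exact le_of_mul_le_mul_left h hf

lemma coeff_X_pow_mul_hasseDeriv (f : ℂ[X]) (j n : ℕ) :
    (Polynomial.X ^ j * Polynomial.hasseDeriv j f).coeff n = (n.choose j : ℂ) * f.coeff n := by
  rw [Polynomial.coeff_X_pow_mul']
  split_ifs with h
  · rw [Polynomial.hasseDeriv_coeff, Nat.sub_add_cancel h]
  · rw [Nat.choose_eq_zero_of_lt (by omega)]; simp

/-- The transformed sequence `χ(E)^s (P a)` as a pairing of the coefficients of `g` with a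
polynomial that is small where `χ` is small. -/
lemma aeval_shiftE_eq_sum (χ : ℂ[X]) (g : PowerSeries ℂ) (pc : ℕ → ℂ) (t m : ℕ) :
    aeval (shiftE ℂ) χ (fun n => (∑ j ∈ Finset.range t, pc j * (n.choose j : ℂ)) *
        PowerSeries.coeff n g) m
      = (∑ j ∈ Finset.range t, Polynomial.C (pc j) * (Polynomial.X ^ j *
          Polynomial.hasseDeriv j (Polynomial.X ^ m * χ))).sum
          fun n h => h * PowerSeries.coeff n g := by
  set H := ∑ j ∈ Finset.range t, Polynomial.C (pc j) * (Polynomial.X ^ j *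
          Polynomial.hasseDeriv j (Polynomial.X ^ m * χ)) with hH
  have hc : ∀ n, H.coeff n = (∑ j ∈ Finset.range t, pc j * (n.choose j : ℂ)) *
      (Polynomial.X ^ m * χ : ℂ[X]).coeff n := by
    intro n
    rw [hH, Polynomial.finsetSum_coeff, Finset.sum_mul]
    refine Finset.sum_congr rfl fun j _ => ?_
    rw [Polynomial.coeff_C_mul, coeff_X_pow_mul_hasseDeriv]; ring
  set D := max χ.natDegree H.natDegree with hD
  rw [aeval_shiftE_apply' χ _ m D (le_max_left _ _),
    Polynomial.sum_over_range' H (by simp) (m + (D + 1))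
      (by have := le_max_right χ.natDegree H.natDegree; omega),
    Finset.sum_range_add (fun n => H.coeff n * _) m]
  rw [Finset.sum_eq_zero (s := Finset.range m), zero_add]
  · refine Finset.sum_congr rfl fun i _ => ?_
    rw [hc, add_comm m i, Polynomial.coeff_X_pow_mul]; ring
  · intro n hn
    rw [hc, Polynomial.coeff_X_pow_mul', if_neg (by simpa using hn)]; simp

/-- If `χ` vanishes at the reciprocals of the singular points on the unit circle, then `χ(E)^s`
makes the coefficient sequence of `g` multiplied by a polynomial of low degree exponentially small
in `s`. -/
lemma smallness (p : ℕ) (A : Fin (p + 1) → ℂ[X]) (g : PowerSeries ℂ) (hg : SubG g)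
    (hode : ∑ i : Fin (p + 1), (A i : PowerSeries ℂ) * psDeriv^[p - i.val] g = 0)
    (χ : ℂ[X]) (hχ : ∀ ζ : ℂ, ‖ζ‖ = 1 → (A 0).eval ζ = 0 → χ.eval ζ⁻¹ = 0)
    (lam : ℝ) (hl0 : 0 < lam) (hl1 : lam < 1) :
    ∃ θ₀ : ℝ, 0 < θ₀ ∧ ∀ θ : ℝ, 0 < θ → ∃ Cc : ℝ, 1 ≤ Cc ∧ ∀ m s t : ℕ, θ * m ≤ s → s ≤ θ₀ * m →
      ∀ pc : ℕ → ℂ, ‖aeval (shiftE ℂ) (χ ^ s) (fun n =>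
        (∑ j ∈ Finset.range t, pc j * (n.choose j : ℂ)) * PowerSeries.coeff n g) m‖
        ≤ Cc * (∑ j ∈ Finset.range t, ‖pc j‖) * Cc ^ t * lam ^ s := by
  have hcompact := isCompact_closedBall (0 : ℂ) 3
  obtain ⟨A₁, hA₁⟩ := hcompact.exists_bound_of_continuousOn (f := fun z => χ.eval z)
    χ.continuous.continuousOn
  set M := max A₁ 1 with hM
  have hM1 : 1 ≤ M := le_max_right _ _
  have hMb : ∀ z : ℂ, ‖z‖ ≤ 3 → ‖χ.eval z‖ ≤ M := fun z hz =>
    (hA₁ z (by simpa using hz)).trans (le_max_left _ _)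
  have huc := hcompact.uniformContinuousOn_of_continuous
    (f := fun z => χ.eval z) χ.continuous.continuousOn
  rw [Metric.uniformContinuousOn_iff] at huc
  obtain ⟨δ, hδ, hδχ⟩ := huc (lam / 2) (by positivity)
  have hsmall : ∀ w ζ : ℂ, ‖w‖ ≤ 3 → ‖ζ‖ = 1 → (A 0).eval ζ = 0 → ‖w - ζ⁻¹‖ < δ →
      ‖χ.eval w‖ ≤ lam / 2 := by
    intro w ζ hw h1 h2 h3
    have := hδχ w (by simpa using hw) ζ⁻¹ (by simp [h1]) (by rwa [dist_eq_norm])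
    rw [hχ ζ h1 h2, dist_zero_right] at this
    exact this.le
  obtain ⟨c, hc0, hcb⟩ := contour_bound p A g hg hode (δ / 4) (by positivity)
  have hlog : 0 < Real.log (M / lam) := Real.log_pos (by rw [one_lt_div hl0]; linarith)
  refine ⟨c / (2 * Real.log (M / lam)), by positivity, fun θ hθ => ?_⟩
  have hl2 : 0 < Real.log 2 := Real.log_pos one_lt_two
  set η₂ := min (θ * Real.log 2 / 2) (1 / 2) with hη₂
  have hη₂0 : 0 < η₂ := lt_min (by positivity) (by positivity)
  have hη₂θ : 2 * η₂ ≤ θ * Real.log 2 := by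
    have : η₂ ≤ _ := min_le_left _ _
    linarith
  have hη₂1 : 2 * η₂ ≤ 1 := by
    have : η₂ ≤ 1 / 2 := min_le_right _ _
    linarith
  obtain ⟨B, hB⟩ := hcb η₂ hη₂0
  set τ := min (δ / 4) (min (Real.exp (-(c / 2)) - Real.exp (-c))
    (Real.exp (2 * η₂) - Real.exp η₂)) with hτ
  have hτ0 : 0 < τ := by
    refine lt_min (by positivity) (lt_min ?_ ?_)
    · rw [sub_pos]; exact Real.exp_lt_exp.mpr (by linarith)
    · rw [sub_pos]; exact Real.exp_lt_exp.mpr (by linarith)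
  have hτ1 : τ ≤ δ / 4 := min_le_left _ _
  have hτ2 : Real.exp (-c) + τ ≤ Real.exp (-(c / 2)) := by
    have : τ ≤ _ := (min_le_right _ _).trans (min_le_left _ _)
    linarith
  have hτ3 : Real.exp η₂ + τ ≤ Real.exp (2 * η₂) := by
    have : τ ≤ _ := (min_le_right _ _).trans (min_le_right _ _)
    linarith
  have he3 : Real.exp (2 * η₂) ≤ 3 := by
    refine (Real.exp_le_exp.mpr hη₂1).trans ?_
    linarith [Real.exp_one_lt_d9]
  set Cc := max 1 (max B (3 / τ)) with hCc
  have hC1 : 1 ≤ Cc := le_max_left _ _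
  have hCB : B ≤ Cc := (le_max_left _ _).trans (le_max_right _ _)
  have hCτ : 3 / τ ≤ Cc := (le_max_right _ _).trans (le_max_right _ _)
  refine ⟨Cc, hC1, fun m s t hs1 hs2 pc => ?_⟩
  -- the two growth comparisons that fix the admissible range of `s`
  have hfarpow : Real.exp (-(c / 2)) ^ m * M ^ s ≤ lam ^ s := by
    have e1 : s * Real.log (M / lam) ≤ c / 2 * m := by
      have h2 : (s : ℝ) * (2 * Real.log (M / lam)) ≤ c * m := by
        have h3 : (s : ℝ) ≤ c * m / (2 * Real.log (M / lam)) := hs2.trans_eq (by ring)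
        rwa [le_div_iff₀ (by positivity)] at h3
      linarith
    rw [Real.log_div (by linarith) hl0.ne'] at e1
    rw [← Real.exp_nat_mul, ← Real.exp_log (show 0 < M by linarith), ← Real.exp_log hl0,
      ← Real.exp_nat_mul, ← Real.exp_nat_mul, ← Real.exp_add]
    exact Real.exp_le_exp.mpr (by linarith)
  have hnearpow : Real.exp (2 * η₂) ^ m * (lam / 2) ^ s ≤ lam ^ s := by
    have e1 : m * (2 * η₂) ≤ s * Real.log 2 := by nlinarith [(m.cast_nonneg : (0 : ℝ) ≤ m)]
    have e2 : Real.exp (2 * η₂) ^ m ≤ 2 ^ s := by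
      rw [← Real.exp_nat_mul]
      calc _ ≤ Real.exp (s * Real.log 2) := Real.exp_le_exp.mpr e1
        _ = 2 ^ s := by rw [Real.exp_nat_mul, Real.exp_log two_pos]
    calc _ ≤ (2 : ℝ) ^ s * (lam / 2) ^ s := by gcongr
      _ = lam ^ s := by rw [← mul_pow]; congr 1; ring
  set P := ∑ j ∈ Finset.range t, ‖pc j‖ with hP
  have hP0 : 0 ≤ P := Finset.sum_nonneg fun _ _ => norm_nonneg _
  rw [aeval_shiftE_eq_sum]
  have hS0 : 0 ≤ P * Cc ^ t * lam ^ s := by positivity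
  refine (hB _ (P * Cc ^ t * lam ^ s) ?_).trans
    ((mul_le_mul_of_nonneg_right hCB hS0).trans_eq (by ring))
  intro w hw
  have hw3 : ‖w‖ ≤ 3 := by
    rcases hw with h | ⟨h, -⟩
    · have : Real.exp (-c) ≤ 1 := by simpa using hc0.le
      linarith
    · linarith
  have hloc : ∀ z, ‖z - w‖ ≤ τ → ‖(Polynomial.X ^ m * χ ^ s : ℂ[X]).eval z‖ ≤ lam ^ s := by
    intro z hz
    have hzw : ‖z‖ ≤ ‖w‖ + τ := by
      have := norm_add_le w (z - w)
      rw [add_sub_cancel] at this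
      linarith
    rw [Polynomial.eval_mul, Polynomial.eval_pow, Polynomial.eval_X, Polynomial.eval_pow, norm_mul,
      norm_pow, norm_pow]
    rcases hw with h | ⟨h, ζ, h1, h2, h3⟩
    · have hz1 : ‖z‖ ≤ Real.exp (-(c / 2)) := by linarith
      have hz2 : Real.exp (-(c / 2)) ≤ 1 := by simpa using by linarith
      refine le_trans ?_ hfarpow
      gcongr
      exact hMb z (by linarith)
    · have hz1 : ‖z‖ ≤ Real.exp (2 * η₂) := by linarith
      refine le_trans ?_ hnearpow
      gcongr
      refine hsmall z ζ (by linarith) h1 h2 ?_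
      have := norm_sub_le_norm_sub_add_norm_sub z w ζ⁻¹
      linarith
  rw [Polynomial.eval_finsetSum, hP, Finset.sum_mul, Finset.sum_mul]
  refine norm_sum_le_of_le _ fun j hj => ?_
  rw [Finset.mem_range] at hj
  rw [Polynomial.eval_mul, Polynomial.eval_C, norm_mul, mul_assoc]
  refine mul_le_mul_of_nonneg_left ?_ (norm_nonneg _)
  rw [Polynomial.eval_mul, Polynomial.eval_pow, Polynomial.eval_X, norm_mul, norm_pow]
  have hh := norm_hasseDeriv_le _ w τ _ hτ0 hloc j
  calc ‖w‖ ^ j * ‖_‖ ≤ 3 ^ j * (lam ^ s / τ ^ j) := by gcongr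
    _ = (3 / τ) ^ j * lam ^ s := by rw [div_pow]; ring
    _ ≤ Cc ^ j * lam ^ s := by gcongr
    _ ≤ Cc ^ t * lam ^ s := by gcongr

/-! ### Elementary estimates -/

/-- The sum of the absolute values of the coefficients of a complex polynomial. -/
noncomputable def coeffNorm (p : ℂ[X]) : ℝ := ∑ i ∈ Finset.range (p.natDegree + 1), ‖p.coeff i‖

lemma coeffNorm_nonneg (p : ℂ[X]) : 0 ≤ coeffNorm p := Finset.sum_nonneg fun _ _ => norm_nonneg _

lemma norm_coeff_le_coeffNorm (p : ℂ[X]) (i : ℕ) : ‖p.coeff i‖ ≤ coeffNorm p := by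
  by_cases hi : i ≤ p.natDegree
  · exact Finset.single_le_sum (f := fun i => ‖p.coeff i‖) (fun _ _ => norm_nonneg _)
      (Finset.mem_range.mpr (by omega))
  · rw [Polynomial.coeff_eq_zero_of_natDegree_lt (by omega), norm_zero]
    exact coeffNorm_nonneg p

lemma sum_norm_coeff_pow_le (p : ℂ[X]) (s D : ℕ) :
    ∑ i ∈ Finset.range D, ‖(p ^ s).coeff i‖ ≤ coeffNorm p ^ s := by
  let P : Polynomial ℝ := ∑ i ∈ Finset.range (p.natDegree + 1), Polynomial.monomial i ‖p.coeff i‖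
  have hP : ∀ n, P.coeff n = ‖p.coeff n‖ := by
    intro n
    simp only [P, Polynomial.finsetSum_coeff, Polynomial.coeff_monomial, Finset.sum_ite_eq',
      Finset.mem_range]
    split_ifs with h
    · rfl
    · rw [Polynomial.coeff_eq_zero_of_natDegree_lt (by omega), norm_zero]
  have hdom : ∀ s n, ‖(p ^ s).coeff n‖ ≤ (P ^ s).coeff n := by
    intro s
    induction s with
    | zero =>
      intro n
      simp only [pow_zero, Polynomial.coeff_one]
      split_ifs <;> simp
    | succ s ih =>
      intro n
      rw [pow_succ, pow_succ, Polynomial.coeff_mul, Polynomial.coeff_mul]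
      refine norm_sum_le_of_le _ fun x _ => ?_
      rw [norm_mul, hP]
      exact mul_le_mul_of_nonneg_right (ih _) (norm_nonneg _)
  have heval : P.eval 1 = coeffNorm p := by
    simp [P, coeffNorm, Polynomial.eval_finsetSum]
  calc ∑ i ∈ Finset.range D, ‖(p ^ s).coeff i‖ ≤ ∑ i ∈ Finset.range D, (P ^ s).coeff i :=
        Finset.sum_le_sum fun i _ => hdom s i
    _ ≤ ∑ i ∈ Finset.range (max D ((P ^ s).natDegree + 1)), (P ^ s).coeff i :=
        Finset.sum_le_sum_of_subset_of_nonneg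
          (Finset.range_subset_range.mpr (le_max_left _ _))
          (fun i _ _ => (norm_nonneg _).trans (hdom s i))
    _ = (P ^ s).eval 1 := by
        rw [Polynomial.eval_eq_sum_range' (n := max D ((P ^ s).natDegree + 1))
          (lt_of_lt_of_le (Nat.lt_succ_self _) (le_max_right _ _))]
        simp
    _ = coeffNorm p ^ s := by rw [Polynomial.eval_pow, heval]

lemma factorial_card_le_prod (m : ℕ) (S : Finset ℕ) (hS : ∀ σ ∈ S, m < σ) :
    S.card.factorial ≤ ∏ σ ∈ S, (σ - m) := by
  induction S using Finset.induction_on_max with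
  | empty => simp
  | insert a S ha ih =>
    have hna : a ∉ S := fun h => lt_irrefl _ (ha a h)
    rw [Finset.card_insert_of_notMem hna, Finset.prod_insert hna, Nat.factorial_succ]
    refine Nat.mul_le_mul ?_ (ih fun σ hσ => hS σ (Finset.mem_insert_of_mem hσ))
    have hsub : insert a S ⊆ Finset.Ioc m a := by
      intro x hx
      rw [Finset.mem_Ioc]
      refine ⟨hS x hx, ?_⟩
      rcases Finset.mem_insert.mp hx with h | h
      · exact h.le
      · exact (ha x h).le
    have := Finset.card_le_card hsub
    rwa [Finset.card_insert_of_notMem hna, Nat.card_Ioc] at this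

/-- The product `∏ (σ - n)` in the basis of binomial coefficients. -/
lemma exists_binom_coeffs (S : Finset ℕ) (M T : ℕ) (hM : ∀ σ ∈ S, σ ≤ M) (hT : S.card ≤ T) :
    ∃ pc : ℕ → ℂ, (∀ j, S.card < j → pc j = 0) ∧
      (∀ n : ℕ, ∏ σ ∈ S, ((σ : ℂ) - n)
        = ∑ j ∈ Finset.range (S.card + 1), pc j * (n.choose j : ℂ)) ∧
      ∑ j ∈ Finset.range (S.card + 1), ‖pc j‖ ≤ ((M : ℝ) + 2 * T + 1) ^ S.card := by
  induction S using Finset.induction_on with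
  | empty =>
    refine ⟨fun j => if j = 0 then 1 else 0, fun j hj => if_neg (by simp at hj; omega), ?_, ?_⟩ <;>
      simp
  | insert a S ha ih =>
    rw [Finset.card_insert_of_notMem ha] at hT
    obtain ⟨pc, h0, h1, h2⟩ := ih (fun σ hσ => hM σ (Finset.mem_insert_of_mem hσ)) (by omega)
    have haM : a ≤ M := hM a (Finset.mem_insert_self _ _)
    rw [Finset.card_insert_of_notMem ha]
    set t := S.card with ht
    let up : ℕ → ℂ := fun j => match j with
      | 0 => 0
      | j + 1 => pc j * (j + 1)
    refine ⟨fun j => pc j * (a - j) - up j, ?_, ?_, ?_⟩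
    · intro j hj
      obtain ⟨i, rfl⟩ : ∃ i, j = i + 1 := ⟨j - 1, by omega⟩
      simp only [up]
      rw [h0 (i + 1) (by omega), h0 i (by omega)]; ring
    · intro n
      rw [Finset.prod_insert ha, h1]
      simp only [sub_mul, Finset.sum_sub_distrib]
      rw [Finset.sum_range_succ (fun j => pc j * ((a : ℂ) - j) * (n.choose j : ℂ)),
        h0 (t + 1) (by omega), Finset.sum_range_succ' (fun j => up j * (n.choose j : ℂ))]
      simp only [up]
      rw [Finset.mul_sum, zero_mul, zero_mul, zero_mul, add_zero, add_zero, Finset.mul_sum,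
        ← Finset.sum_sub_distrib, ← Finset.sum_sub_distrib]
      refine Finset.sum_congr rfl fun j _ => ?_
      have hb : (n : ℂ) * (n.choose j : ℂ)
          = j * (n.choose j : ℂ) + (j + 1) * (n.choose (j + 1) : ℂ) := by
        have h := Nat.choose_succ_right_eq n j
        by_cases hjn : j ≤ n
        · have h' : ((n.choose (j + 1) : ℂ)) * (j + 1) = (n.choose j : ℂ) * (n - j) := by
            have := congrArg (Nat.cast : ℕ → ℂ) h
            push_cast [Nat.cast_sub hjn] at this
            exact this
          linear_combination -h'
        · rw [Nat.choose_eq_zero_of_lt (by omega), Nat.choose_eq_zero_of_lt (by omega)]; simp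
      linear_combination -(pc j) * hb
    · have hle : ∀ j ∈ Finset.range (t + 1 + 1), ‖pc j * ((a : ℂ) - j) - up j‖
          ≤ ‖pc j‖ * (M + T) + ‖up j‖ := by
        intro j hj
        refine (norm_sub_le _ _).trans (add_le_add_left ?_ _)
        by_cases hjt : j ≤ t
        · rw [norm_mul]
          refine mul_le_mul_of_nonneg_left ?_ (norm_nonneg _)
          refine (norm_sub_le _ _).trans ?_
          rw [Complex.norm_natCast, Complex.norm_natCast]
          have h1 : (a : ℝ) ≤ M := by exact_mod_cast haM
          have h2 : (j : ℝ) ≤ T := by exact_mod_cast (by omega : j ≤ T)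
          linarith
        · rw [h0 j (by omega)]; simp
      refine (Finset.sum_le_sum hle).trans ?_
      rw [Finset.sum_add_distrib, Finset.sum_range_succ (fun j => ‖pc j‖ * ((M : ℝ) + T)),
        h0 (t + 1) (by omega), Finset.sum_range_succ' (fun j => ‖up j‖)]
      simp only [up, norm_zero, zero_mul, add_zero]
      have hup : ∑ j ∈ Finset.range (t + 1), ‖pc j * ((j : ℂ) + 1)‖
          ≤ ∑ j ∈ Finset.range (t + 1), ‖pc j‖ * (T + 1) := by
        refine Finset.sum_le_sum fun j hj => ?_
        rw [norm_mul]
        refine mul_le_mul_of_nonneg_left ?_ (norm_nonneg _)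
        have : ((j : ℂ) + 1) = ((j + 1 : ℕ) : ℂ) := by push_cast; ring
        rw [this, Complex.norm_natCast]
        rw [Finset.mem_range] at hj
        exact_mod_cast (by omega : j + 1 ≤ T + 1)
      rw [← Finset.sum_mul] at hup ⊢
      calc _ ≤ (∑ j ∈ Finset.range (t + 1), ‖pc j‖) * (M + T)
            + (∑ j ∈ Finset.range (t + 1), ‖pc j‖) * (T + 1) := by linarith
        _ = (∑ j ∈ Finset.range (t + 1), ‖pc j‖) * (M + 2 * T + 1) := by ring
        _ ≤ ((M : ℝ) + 2 * T + 1) ^ t * (M + 2 * T + 1) := by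
          refine mul_le_mul_of_nonneg_right h2 (by positivity)
        _ = _ := by rw [pow_succ]

lemma pow_div_factorial_le (x y : ℝ) (hx : 0 ≤ x) (hy : 0 < y) (T : ℕ) :
    x ^ T / T.factorial ≤ Real.exp (y * x) * (1 / y) ^ T := by
  have h := Real.pow_div_factorial_le_exp (y * x) (by positivity) T
  calc x ^ T / T.factorial = (y * x) ^ T / T.factorial * (1 / y) ^ T := by
        rw [mul_pow, div_pow, one_pow]; field_simp
    _ ≤ _ := mul_le_mul_of_nonneg_right h (by positivity)

/-! ### The radius of convergence is at least one -/

/-- The reversed polynomial vanishes at the reciprocals of the nonzero roots. -/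
lemma eval_reverse_inv_eq_zero (f : ℂ[X]) (ζ : ℂ) (hζ : ‖ζ‖ = 1) (h : f.eval ζ = 0) :
    f.reverse.eval ζ⁻¹ = 0 := by
  have hζ0 : ζ ≠ 0 := by rintro rfl; simp at hζ
  let _ : Invertible ζ := invertibleOfNonzero hζ0
  have h1 := Polynomial.eval₂_reverse_mul_pow (RingHom.id ℂ) ζ f
  rw [invOf_eq_inv] at h1
  have h2 : f.reverse.eval ζ⁻¹ * ζ ^ f.natDegree = f.eval ζ := h1
  rw [h] at h2
  exact (mul_eq_zero.mp h2).resolve_right (pow_ne_zero _ hζ0)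

set_option maxHeartbeats 2000000 in
/-- If the coefficients of a D-finite series are exponentially small outside a set of density
zero, then all of them are: a polynomial vanishing at the exceptional indices isolates each
coefficient in the transformed sequence. -/
lemma exp_decay (p : ℕ) (A : Fin (p + 1) → ℂ[X]) (g : PowerSeries ℂ) (hg : SubG g)
    (hode : ∑ i : Fin (p + 1), (A i : PowerSeries ℂ) * psDeriv^[p - i.val] g = 0)
    (hA : A 0 ≠ 0) (k : ℝ) (hk : 0 < k) (bad : ℕ → Prop) [DecidablePred bad]
    (hbad : ∀ δ : ℝ, 0 < δ → ∀ᶠ N : ℕ in atTop,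
      (((Finset.Icc 1 N).filter bad).card : ℝ) ≤ δ * N)
    (hgood : ∀ n, ¬ bad n → ‖PowerSeries.coeff n g‖ ≤ Real.exp (-(k * n))) :
    ∃ κ : ℝ, 0 < κ ∧ ∃ C : ℝ, ∀ᶠ m : ℕ in atTop,
      ‖PowerSeries.coeff m g‖ ≤ C * Real.exp (-(κ * m)) := by
  set χ := (A 0).reverse with hχ
  set q := χ.coeff 0 with hq
  have hq0 : q ≠ 0 := by
    rw [hq, hχ, Polynomial.coeff_zero_reverse]; exact Polynomial.leadingCoeff_ne_zero.mpr hA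
  set Q := ‖q‖ with hQ
  have hQ0 : 0 < Q := norm_pos_iff.mpr hq0
  set D := χ.natDegree with hD
  set Λ := coeffNorm χ with hΛ
  have hQΛ : Q ≤ Λ := norm_coeff_le_coeffNorm χ 0
  have hΛ0 : 0 < Λ := hQ0.trans_le hQΛ
  set lam := min Q 1 * Real.exp (-1) with hlam
  have hlam0 : 0 < lam := mul_pos (lt_min hQ0 one_pos) (Real.exp_pos _)
  have hlam1 : lam < 1 := by
    have h1 : Real.exp (-1) < 1 := by simp
    have h2 : min Q 1 ≤ 1 := min_le_right _ _
    have h3 := Real.exp_pos (-1)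
    nlinarith
  obtain ⟨θ₀, hθ₀, hsm⟩ := smallness p A g hg hode χ
    (fun ζ h1 h2 => eval_reverse_inv_eq_zero _ ζ h1 h2) lam hlam0 hlam1
  set R := Real.log (Λ / Q) + D with hR
  have hR0 : 0 ≤ R := add_nonneg (Real.log_nonneg (by rwa [one_le_div hQ0])) (Nat.cast_nonneg _)
  set θ := min (θ₀ / 2) (min (1 / (2 * ((D : ℝ) + 1))) (k / (4 * (R + 1)))) with hθ
  have hθ0 : 0 < θ := lt_min (by positivity) (lt_min (by positivity) (by positivity))
  have hθ1 : 2 * θ ≤ θ₀ := by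
    have : θ ≤ _ := min_le_left _ _
    linarith
  have hθ2 : 2 * θ * D ≤ 1 := by
    have : θ ≤ _ := (min_le_right _ _).trans (min_le_left _ _)
    rw [le_div_iff₀ (by positivity)] at this
    nlinarith
  have hθ3 : R * (2 * θ) ≤ k / 2 := by
    have : θ ≤ _ := (min_le_right _ _).trans (min_le_right _ _)
    rw [le_div_iff₀ (by positivity)] at this
    nlinarith
  have hθ4 : θ ≤ 1 / 2 := by
    have h1 : θ ≤ _ := (min_le_right _ _).trans (min_le_left _ _)
    rw [le_div_iff₀ (by positivity)] at h1
    nlinarith [(D.cast_nonneg : (0 : ℝ) ≤ D)]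
  obtain ⟨Cc, hCc, hX⟩ := hsm θ hθ0
  set y := θ / 16 with hy
  have hy0 : 0 < y := by positivity
  have hl : 0 < Real.log (Cc / y) := Real.log_pos (by rw [one_lt_div hy0]; linarith)
  set δ := y / (2 * (Real.log (Cc / y) + 1)) with hδ
  have hδ0 : 0 < δ := by positivity
  have htend : Tendsto (fun m : ℕ => 2 * m) atTop atTop :=
    tendsto_atTop_mono (fun m => (by omega : m ≤ 2 * m)) tendsto_id
  refine ⟨min (θ / 2) (k / 2), lt_min (by positivity) (by positivity), Cc ^ 2 + 1, ?_⟩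
  filter_upwards [htend.eventually (hbad δ hδ0), eventually_ge_atTop ⌈1 / θ⌉₊,
    eventually_ge_atTop 1] with m hm1 hm2 hm3
  have hm : (1 : ℝ) ≤ m := by exact_mod_cast hm3
  have hmθ : 1 ≤ θ * m := by
    have := Nat.ceil_le.mp hm2
    rw [div_le_iff₀ hθ0] at this
    linarith
  set s := ⌈θ * m⌉₊ with hs
  have hs1 : θ * m ≤ s := Nat.le_ceil _
  have hs2 : (s : ℝ) ≤ 2 * θ * m := by
    have := Nat.ceil_lt_add_one (show 0 ≤ θ * m by positivity)
    rw [← hs] at this; linarith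
  have hDs : D * s ≤ m := by
    have : (D * s : ℝ) ≤ m := by
      calc (D * s : ℝ) ≤ D * (2 * θ * m) := by gcongr
        _ = (2 * θ * D) * m := by ring
        _ ≤ 1 * m := by gcongr
        _ = m := one_mul _
    exact_mod_cast this
  -- the polynomial `∏ σ ∈ S, (σ - n)` kills the exceptional indices among `m < n ≤ m + D s` and is
  -- at least `T!` in absolute value at `n = m`
  set S := (Finset.Ioc m (m + D * s)).filter bad with hS
  set T := S.card with hT
  have hSm : ∀ σ ∈ S, m < σ ∧ σ ≤ m + D * s := fun σ hσ =>
    Finset.mem_Ioc.mp (Finset.mem_filter.mp hσ).1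
  have hTδ : (T : ℝ) ≤ δ * (2 * m) := by
    have h1 : S ⊆ (Finset.Icc 1 (2 * m)).filter bad := by
      intro σ hσ
      have := hSm σ hσ
      rw [Finset.mem_filter, Finset.mem_Icc]
      exact ⟨⟨by omega, by omega⟩, (Finset.mem_filter.mp hσ).2⟩
    have h2 : (T : ℝ) ≤ (((Finset.Icc 1 (2 * m)).filter bad).card : ℝ) := by
      exact_mod_cast Finset.card_le_card h1
    refine h2.trans (hm1.trans_eq ?_)
    push_cast; ring
  have hTm : T ≤ m := by
    have := Finset.card_le_card (Finset.filter_subset bad (Finset.Ioc m (m + D * s)))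
    rw [← hS, ← hT, Nat.card_Ioc] at this
    omega
  obtain ⟨pc, -, hpc, hpcn⟩ := exists_binom_coeffs S (2 * m) T
    (fun σ hσ => by have := hSm σ hσ; omega) le_rfl
  have hXm := hX m s (T + 1) hs1 (hs2.trans (mul_le_mul_of_nonneg_right hθ1 (by positivity))) pc
  have hfun : (fun n : ℕ => (∑ j ∈ Finset.range (T + 1), pc j * (n.choose j : ℂ)) *
      PowerSeries.coeff n g) = fun n : ℕ => (∏ σ ∈ S, ((σ : ℂ) - n)) * PowerSeries.coeff n g := by
    funext n; rw [hpc]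
  rw [hfun, aeval_shiftE_apply' (χ ^ s) _ m (D * s)
    (by rw [mul_comm]; exact Polynomial.natDegree_pow_le), Finset.sum_range_succ'] at hXm
  set W := ∏ σ ∈ S, ((σ : ℂ) - ((m + 0 : ℕ) : ℂ)) with hW
  have hWn : (T.factorial : ℝ) ≤ ‖W‖ := by
    have h1 : W = ((∏ σ ∈ S, (σ - m) : ℕ) : ℂ) := by
      rw [hW, Nat.cast_prod]
      refine Finset.prod_congr rfl fun σ hσ => ?_
      rw [Nat.cast_sub (hSm σ hσ).1.le, add_zero]
    rw [h1, Complex.norm_natCast]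
    exact_mod_cast factorial_card_le_prod m S fun σ hσ => (hSm σ hσ).1
  have hTf : (0 : ℝ) < T.factorial := by exact_mod_cast T.factorial_pos
  have hrest : ‖∑ i ∈ Finset.range (D * s), (χ ^ s).coeff (i + 1) *
      ((∏ σ ∈ S, ((σ : ℂ) - ((m + (i + 1) : ℕ) : ℂ))) * PowerSeries.coeff (m + (i + 1)) g)‖
      ≤ Λ ^ s * (((D * s : ℕ) : ℝ) ^ T * Real.exp (-(k * m))) := by
    have h1 : ∀ i ∈ Finset.range (D * s), ‖(χ ^ s).coeff (i + 1) *
      ((∏ σ ∈ S, ((σ : ℂ) - ((m + (i + 1) : ℕ) : ℂ))) * PowerSeries.coeff (m + (i + 1)) g)‖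
      ≤ ‖(χ ^ s).coeff (i + 1)‖ * (((D * s : ℕ) : ℝ) ^ T * Real.exp (-(k * m))) := by
      intro i hi
      rw [Finset.mem_range] at hi
      rw [norm_mul]
      refine mul_le_mul_of_nonneg_left ?_ (norm_nonneg _)
      by_cases hb : bad (m + (i + 1))
      · have hmem : m + (i + 1) ∈ S := by
          rw [hS, Finset.mem_filter, Finset.mem_Ioc]
          exact ⟨⟨by omega, by omega⟩, hb⟩
        rw [Finset.prod_eq_zero hmem (sub_self _), zero_mul, norm_zero]
        positivity
      · rw [norm_mul, norm_prod]
        refine mul_le_mul ?_ ?_ (norm_nonneg _) (by positivity)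
        · rw [hT, ← Finset.prod_const]
          refine Finset.prod_le_prod (fun _ _ => norm_nonneg _) fun σ hσ => ?_
          have h3 := hSm σ hσ
          have : ((σ : ℂ) - ((m + (i + 1) : ℕ) : ℂ))
              = (((σ : ℤ) - ((m + (i + 1) : ℕ) : ℤ) : ℤ) : ℂ) := by push_cast; ring
          rw [this, Complex.norm_intCast]
          have h4 : |(σ : ℤ) - ((m + (i + 1) : ℕ) : ℤ)| ≤ ((D * s : ℕ) : ℤ) := by
            rw [abs_le]; omega
          exact_mod_cast h4
        · refine (hgood _ hb).trans (Real.exp_le_exp.mpr ?_)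
          push_cast
          nlinarith [(i.cast_nonneg : (0 : ℝ) ≤ i)]
    refine (norm_sum_le_of_le _ h1).trans ?_
    rw [← Finset.sum_mul]
    refine mul_le_mul_of_nonneg_right ?_ (by positivity)
    refine le_trans ?_ (sum_norm_coeff_pow_le χ s (D * s + 1))
    rw [Finset.sum_range_succ' (fun i => ‖(χ ^ s).coeff i‖)]
    linarith [norm_nonneg ((χ ^ s).coeff 0)]
  have hc0 : (χ ^ s).coeff 0 = q ^ s := by
    rw [hq, Polynomial.coeff_zero_eq_eval_zero, Polynomial.coeff_zero_eq_eval_zero,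
      Polynomial.eval_pow]
  rw [hc0, add_zero] at hXm
  set Rest := ∑ i ∈ Finset.range (D * s), (χ ^ s).coeff (i + 1) *
      ((∏ σ ∈ S, ((σ : ℂ) - ((m + (i + 1) : ℕ) : ℂ))) * PowerSeries.coeff (m + (i + 1)) g)
  -- all terms of `χ(E)^s` at `m` except the one with index `m` are exponentially small
  have hiso : Q ^ s * (T.factorial * ‖PowerSeries.coeff m g‖)
      ≤ Cc * (∑ j ∈ Finset.range (T + 1), ‖pc j‖) * Cc ^ (T + 1) * lam ^ s
        + Λ ^ s * (((D * s : ℕ) : ℝ) ^ T * Real.exp (-(k * m))) := by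
    have e1 : q ^ s * (W * PowerSeries.coeff m g)
        = (Rest + q ^ s * (W * PowerSeries.coeff m g)) - Rest := by ring
    have e2 : ‖q ^ s * (W * PowerSeries.coeff m g)‖ = Q ^ s * (‖W‖ * ‖PowerSeries.coeff m g‖) := by
      rw [norm_mul, norm_pow, norm_mul]
    calc Q ^ s * (T.factorial * ‖PowerSeries.coeff m g‖)
        ≤ Q ^ s * (‖W‖ * ‖PowerSeries.coeff m g‖) := by gcongr
      _ = ‖(Rest + q ^ s * (W * PowerSeries.coeff m g)) - Rest‖ := by rw [← e2, ← e1]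
      _ ≤ _ := (norm_sub_le _ _).trans (add_le_add hXm hrest)
  -- division by `T!` compensates the size of the coefficients of the auxiliary polynomial
  have hpow1 : (∑ j ∈ Finset.range (T + 1), ‖pc j‖) / T.factorial
      ≤ Real.exp (y * (5 * m)) * (1 / y) ^ T := by
    refine le_trans ?_ (pow_div_factorial_le (5 * m) y (by positivity) hy0 T)
    refine div_le_div_of_nonneg_right (hpcn.trans ?_) hTf.le
    have : (T : ℝ) ≤ m := by exact_mod_cast hTm
    refine pow_le_pow_left₀ (by positivity) ?_ _
    push_cast; linarith
  have hpow2 : ((D * s : ℕ) : ℝ) ^ T / T.factorial ≤ Real.exp ((D * s : ℕ) : ℝ) :=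
    Real.pow_div_factorial_le_exp _ (by positivity) T
  have hCy : (Cc / y) ^ T ≤ Real.exp (y * m) := by
    rw [← Real.exp_log (show 0 < Cc / y by positivity), ← Real.exp_nat_mul]
    refine Real.exp_le_exp.mpr ?_
    have h1 : δ * (2 * (Real.log (Cc / y) + 1)) = y := by rw [hδ]; field_simp
    calc (T : ℝ) * Real.log (Cc / y) ≤ δ * (2 * m) * Real.log (Cc / y) := by gcongr
      _ ≤ δ * (2 * (Real.log (Cc / y) + 1)) * m := by
        have := mul_pos hδ0 (show (0 : ℝ) < m by linarith)
        linarith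
      _ = y * m := by rw [h1]
  have hlams : lam ^ s ≤ Q ^ s * Real.exp (-s) := by
    rw [hlam, mul_pow, ← Real.exp_nat_mul]
    have : (min Q 1) ^ s ≤ Q ^ s := by gcongr; exact min_le_left _ _
    refine mul_le_mul this (le_of_eq ?_) (Real.exp_pos _).le (by positivity)
    congr 1; ring
  have hfirst : Cc * ((∑ j ∈ Finset.range (T + 1), ‖pc j‖) / T.factorial) * Cc ^ (T + 1) * lam ^ s
      ≤ Q ^ s * (Cc ^ 2 * Real.exp (-(θ / 2 * m))) := by
    calc _ ≤ Cc * (Real.exp (y * (5 * m)) * (1 / y) ^ T) * Cc ^ (T + 1)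
            * (Q ^ s * Real.exp (-s)) := by gcongr
      _ = Q ^ s * (Cc ^ 2 * (Real.exp (y * (5 * m)) * (Cc / y) ^ T * Real.exp (-s))) := by
        rw [div_eq_mul_one_div Cc y, mul_pow, pow_succ Cc T]
        generalize (1 / y) ^ T = Z
        ring
      _ ≤ Q ^ s * (Cc ^ 2 * (Real.exp (y * (5 * m)) * Real.exp (y * m) * Real.exp (-s))) := by
        gcongr
      _ ≤ _ := by
        rw [← Real.exp_add, ← Real.exp_add]
        gcongr
        rw [hy]
        nlinarith
  have hsecond : Λ ^ s * (((D * s : ℕ) : ℝ) ^ T / T.factorial * Real.exp (-(k * m)))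
      ≤ Q ^ s * Real.exp (-(k / 2 * m)) := by
    have e1 : Λ ^ s * Real.exp ((D * s : ℕ) : ℝ) = Q ^ s * Real.exp (s * R) := by
      have : Λ = Q * Real.exp (Real.log (Λ / Q)) := by
        rw [Real.exp_log (by positivity)]; field_simp
      rw [hR, mul_add, Real.exp_add]
      nth_rewrite 1 [this]
      rw [mul_pow, ← Real.exp_nat_mul, mul_assoc]
      push_cast
      rw [mul_comm (D : ℝ)]
    calc _ ≤ Λ ^ s * (Real.exp ((D * s : ℕ) : ℝ) * Real.exp (-(k * m))) := by gcongr
      _ = Q ^ s * (Real.exp (s * R) * Real.exp (-(k * m))) := by rw [← mul_assoc, e1, mul_assoc]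
      _ ≤ _ := by
        rw [← Real.exp_add]
        gcongr
        have : s * R ≤ k / 2 * m := by
          calc s * R ≤ 2 * θ * m * R := by gcongr
            _ = R * (2 * θ) * m := by ring
            _ ≤ _ := by gcongr
        nlinarith
  have hfin : Q ^ s * ‖PowerSeries.coeff m g‖
      ≤ Q ^ s * (Cc ^ 2 * Real.exp (-(θ / 2 * m)) + Real.exp (-(k / 2 * m))) := by
    have h1 := div_le_div_of_nonneg_right hiso hTf.le
    have e1 : Q ^ s * (T.factorial * ‖PowerSeries.coeff m g‖) / T.factorial
        = Q ^ s * ‖PowerSeries.coeff m g‖ := by field_simp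
    rw [e1, add_div] at h1
    refine h1.trans ?_
    rw [mul_add]
    refine add_le_add (le_trans (le_of_eq ?_) hfirst) (le_trans (le_of_eq ?_) hsecond)
    · ring
    · ring
  have hfin2 := le_of_mul_le_mul_left hfin (by positivity)
  refine hfin2.trans ?_
  rw [add_mul, one_mul]
  have hk1 : Real.exp (-(θ / 2 * m)) ≤ Real.exp (-(min (θ / 2) (k / 2) * m)) := by
    gcongr; exact min_le_left _ _
  have hk2 : Real.exp (-(k / 2 * m)) ≤ Real.exp (-(min (θ / 2) (k / 2) * m)) := by
    gcongr; exact min_le_right _ _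
  gcongr

lemma psDeriv_map {K : Type*} [Field K] (ι : K →+* ℂ) (f : PowerSeries K) (k : ℕ) :
    psDeriv^[k] (PowerSeries.map ι f) = PowerSeries.map ι (psDeriv^[k] f) := by
  ext n
  simp [coeff_psDeriv_iter]

lemma ode_map {K : Type*} [Field K] (ι : K →+* ℂ) (a : ℕ → K) (p : ℕ) (A : Fin (p + 1) → K[X])
    (h : ∑ i : Fin (p + 1), (A i : PowerSeries K) * psDeriv^[p - i.val] (PowerSeries.mk a) = 0) :
    ∑ i : Fin (p + 1), (((A i).map ι : ℂ[X]) : PowerSeries ℂ) *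
      psDeriv^[p - i.val] (PowerSeries.mk fun n => ι (a n)) = 0 := by
  have e : PowerSeries.mk (fun n => ι (a n)) = PowerSeries.map ι (PowerSeries.mk a) := by
    ext n; simp
  rw [e]
  have := congrArg (PowerSeries.map ι) h
  rw [map_sum, map_zero] at this
  rw [← this]
  refine Finset.sum_congr rfl fun i _ => ?_
  rw [psDeriv_map, map_mul, Polynomial.polynomial_map_coe]

lemma psDeriv_rescale (r : ℂ) (f : PowerSeries ℂ) (k : ℕ) :
    psDeriv^[k] (PowerSeries.rescale r f)
      = PowerSeries.C (r ^ k) * PowerSeries.rescale r (psDeriv^[k] f) := by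
  ext n
  rw [PowerSeries.coeff_C_mul, PowerSeries.coeff_rescale, coeff_psDeriv_iter, coeff_psDeriv_iter,
    PowerSeries.coeff_rescale, pow_add]
  ring

lemma rescale_coe (r : ℂ) (P : ℂ[X]) :
    ((P.comp (Polynomial.C r * Polynomial.X) : ℂ[X]) : PowerSeries ℂ)
      = PowerSeries.rescale r (P : PowerSeries ℂ) := by
  ext n
  rw [Polynomial.coeff_coe, Polynomial.comp_C_mul_X_coeff, PowerSeries.coeff_rescale,
    Polynomial.coeff_coe, mul_comm]

lemma ode_rescale (r : ℂ) (hr : r ≠ 0) (g : PowerSeries ℂ) (p : ℕ) (A : Fin (p + 1) → ℂ[X])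
    (hA : A 0 ≠ 0)
    (h : ∑ i : Fin (p + 1), (A i : PowerSeries ℂ) * psDeriv^[p - i.val] g = 0) :
    ∃ B : Fin (p + 1) → ℂ[X], B 0 ≠ 0 ∧ ∑ i : Fin (p + 1), (B i : PowerSeries ℂ) *
      psDeriv^[p - i.val] (PowerSeries.rescale r g) = 0 := by
  refine ⟨fun i => Polynomial.C (r ^ i.val) * (A i).comp (Polynomial.C r * Polynomial.X), ?_, ?_⟩
  · intro h0
    apply hA
    ext n
    have := congrArg (fun P : ℂ[X] => P.coeff n) h0
    simp only [Fin.val_zero, pow_zero, Polynomial.C_1, one_mul, Polynomial.comp_C_mul_X_coeff,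
      Polynomial.coeff_zero] at this
    rw [Polynomial.coeff_zero]
    exact (mul_eq_zero.mp this).resolve_right (pow_ne_zero _ hr)
  · have h1 : ∀ i : Fin (p + 1), ((Polynomial.C (r ^ i.val) *
        (A i).comp (Polynomial.C r * Polynomial.X) : ℂ[X]) : PowerSeries ℂ) *
        psDeriv^[p - i.val] (PowerSeries.rescale r g)
        = PowerSeries.C (r ^ p) *
          PowerSeries.rescale r ((A i : PowerSeries ℂ) * psDeriv^[p - i.val] g) := by
      intro i
      have e : r ^ p = r ^ i.val * r ^ (p - i.val) := by
        rw [← pow_add]; congr 1; omega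
      rw [Polynomial.coe_mul, Polynomial.coe_C, rescale_coe, psDeriv_rescale, map_mul, e, map_mul]
      ring
    simp only [h1]
    rw [← Finset.mul_sum, ← map_sum, h, map_zero, mul_zero]

/-- Rescaling by a radius not exceeding the radius of convergence gives a series whose
coefficients grow subexponentially. -/
lemma subG_of_radius (α : ℕ → ℂ) (r : ℝ) (hr : 0 < r)
    (h : ENNReal.ofReal r ≤ seriesRadius α) :
    SubG (PowerSeries.rescale (r : ℂ) (PowerSeries.mk α)) := by
  intro ρ hρ0 hρ1
  have hlt : ENNReal.ofReal (r * ρ) < seriesRadius α :=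
    lt_of_lt_of_le ((ENNReal.ofReal_lt_ofReal_iff hr).mpr (by nlinarith)) h
  obtain ⟨r', hlt⟩ := lt_iSup_iff.mp hlt
  obtain ⟨⟨C, hC⟩, hlt⟩ := lt_iSup_iff.mp hlt
  have hlt' : r * ρ < r' := by
    rwa [ENNReal.ofReal, ENNReal.coe_lt_coe, Real.toNNReal_lt_iff_lt_coe (by positivity)] at hlt
  have hr' : (0 : ℝ) < r' := lt_of_le_of_lt (by positivity) hlt'
  refine Summable.of_nonneg_of_le (fun n => by positivity) (fun n => ?_)
    ((summable_geometric_of_lt_one (r := r * ρ / r') (by positivity)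
      ((div_lt_one hr').mpr hlt')).mul_left C)
  rw [PowerSeries.coeff_rescale, PowerSeries.coeff_mk, norm_mul, norm_pow, Complex.norm_real,
    Real.norm_of_nonneg hr.le]
  calc r ^ n * ‖α n‖ * ρ ^ n = (‖α n‖ * r' ^ n) * (r * ρ / r') ^ n := by
        rw [div_pow, mul_pow]; field_simp
    _ ≤ _ := mul_le_mul_of_nonneg_right (hC n) (by positivity)

lemma le_seriesRadius (α : ℕ → ℂ) (r : ℝ) (hr : 0 ≤ r) (C : ℝ)
    (h : ∀ᶠ n in atTop, ‖α n‖ * r ^ n ≤ C) : ENNReal.ofReal r ≤ seriesRadius α := by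
  obtain ⟨N, hN⟩ := eventually_atTop.mp h
  refine le_iSup₂_of_le (f := fun (r : NNReal) (_ : ∃ C : ℝ, ∀ n, ‖α n‖ * (r : ℝ) ^ n ≤ C) =>
    (r : ENNReal)) r.toNNReal ⟨max C (∑ n ∈ Finset.range N, ‖α n‖ * r ^ n), fun n => ?_⟩ le_rfl
  rw [Real.coe_toNNReal _ hr]
  rcases le_or_gt N n with hn | hn
  · exact (hN n hn).trans (le_max_left _ _)
  · exact (Finset.single_le_sum (f := fun n => ‖α n‖ * r ^ n) (fun _ _ => by positivity)
      (Finset.mem_range.mpr hn)).trans (le_max_right _ _)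

/-- A D-finite series with mostly tame coefficients has radius of convergence at least one. -/
lemma one_le_radius {K : Type*} [Field K] [NumberField K] (ι : K →+* ℂ) (a : ℕ → K)
    (hDF : IsDFinite (PowerSeries.mk a)) (hT : MostlyTame K a)
    (hr0 : seriesRadius (fun n => ι (a n)) ≠ 0)
    (hrtop : seriesRadius (fun n => ι (a n)) ≠ ⊤) :
    1 ≤ seriesRadius (fun n => ι (a n)) := by
  classical
  -- if the radius were less than one, the rescaled coefficients `r ^ n * a n` would be exponentially
  -- small at tame indices, hence everywhere, and the radius would be larger than `r`
  by_contra hlt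
  push Not at hlt
  set ρ := seriesRadius (fun n => ι (a n)) with hρ
  set r := ρ.toReal with hr
  have hr0' : 0 < r := ENNReal.toReal_pos hr0 hrtop
  have hρr : ρ = ENNReal.ofReal r := (ENNReal.ofReal_toReal hrtop).symm
  have hr1 : r < 1 := by
    rw [hρr, ← ENNReal.ofReal_one, ENNReal.ofReal_lt_ofReal_iff one_pos] at hlt
    exact hlt
  set k := -Real.log r / 2 with hk
  have hk0 : 0 < k := by have := Real.log_neg hr0' hr1; rw [hk]; linarith
  have hrk : r = Real.exp (-(2 * k)) := by
    rw [hk, ← Real.exp_log hr0']; congr 1; rw [Real.exp_log hr0']; ring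
  obtain ⟨p, A, hA, hode⟩ := hDF
  have hA' : (A 0).map ι ≠ 0 := (Polynomial.map_ne_zero_iff ι.injective).mpr hA
  obtain ⟨B, hB, hode'⟩ := ode_rescale (r : ℂ) (by exact_mod_cast hr0'.ne') _ p
    (fun i => (A i).map ι) hA' (ode_map ι a p A hode)
  have hg := subG_of_radius (fun n => ι (a n)) r hr0' (by rw [← hρ, ← hρr])
  obtain ⟨κ, hκ, C, hC⟩ := exp_decay p B _ hg hode' hB k hk0 (fun n => ¬ Tame K k n (a n))
    (fun δ hδ => hT k hk0 δ hδ) (by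
      intro n hn
      push Not at hn
      rw [PowerSeries.coeff_rescale, PowerSeries.coeff_mk, norm_mul, norm_pow, Complex.norm_real,
        Real.norm_of_nonneg hr0'.le]
      calc r ^ n * ‖ι (a n)‖ ≤ r ^ n * Real.exp (k * n) := by gcongr; exact hn.2 ι
        _ = _ := by rw [hrk, ← Real.exp_nat_mul, ← Real.exp_add]; congr 1; ring)
  have hle : ENNReal.ofReal (r * Real.exp κ) ≤ ρ := by
    refine le_seriesRadius _ _ (by positivity) C (hC.mono fun m hm => ?_)
    rw [PowerSeries.coeff_rescale, PowerSeries.coeff_mk, norm_mul, norm_pow, Complex.norm_real,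
        Real.norm_of_nonneg hr0'.le] at hm
    rw [mul_pow, ← Real.exp_nat_mul]
    calc ‖ι (a m)‖ * (r ^ m * Real.exp (m * κ)) = (r ^ m * ‖ι (a m)‖) * Real.exp (m * κ) := by ring
      _ ≤ (C * Real.exp (-(κ * m))) * Real.exp (m * κ) := by gcongr
      _ = C := by rw [mul_assoc, ← Real.exp_add, mul_comm κ]; simp
  rw [hρr, ENNReal.ofReal_le_ofReal_iff hr0'.le] at hle
  have : 1 < Real.exp κ := Real.one_lt_exp_iff.mpr hκ
  nlinarith

/-! ### Auxiliary polynomials from the Thue-Siegel lemma -/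

/-- A small nonzero integer combination of the first `2 * T` binomial coefficients vanishing on a
given set of at most `T` natural numbers. -/
lemma siegel_binom (S : Finset ℕ) (T : ℕ) (hT : 1 ≤ T) (hST : S.card ≤ T) (B : ℝ) (hB1 : 1 ≤ B)
    (hB : ∀ n ∈ S, ∀ j < 2 * T, (n.choose j : ℝ) ≤ B) :
    ∃ p : ℕ → ℤ, (∃ j < 2 * T, p j ≠ 0) ∧
      (∀ n ∈ S, ∑ j ∈ Finset.range (2 * T), p j * (n.choose j : ℤ) = 0) ∧
      ∀ j < 2 * T, |(p j : ℝ)| ≤ 2 * T * B := by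
  have h1 : ((2 * T : ℕ) : ℝ) * 1 ≤ 2 * T * B := by
    push_cast
    exact mul_le_mul_of_nonneg_left hB1 (by positivity)
  have hT' : (1 : ℝ) ≤ T := by exact_mod_cast hT
  rcases S.eq_empty_or_nonempty with rfl | hS
  · refine ⟨fun _ => 1, ⟨0, by omega, one_ne_zero⟩, by simp, fun j _ => ?_⟩
    simp only [Int.cast_one, abs_one]
    nlinarith
  let A : Matrix S (Fin (2 * T)) ℤ := fun n j => (n.1.choose j.1 : ℤ)
  have hc : 0 < S.card := hS.card_pos
  obtain ⟨t, ht0, htA, htn⟩ := Int.Matrix.exists_ne_zero_int_vec_norm_le A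
    (by rw [Fintype.card_coe, Fintype.card_fin]; omega) (by rw [Fintype.card_coe]; omega)
  rw [Fintype.card_coe, Fintype.card_fin] at htn
  have hmax : max 1 (@norm _ (Matrix.seminormedAddCommGroup).toNorm A) ≤ B := by
    refine max_le hB1 ((Matrix.norm_le_iff (by linarith)).mpr fun n j => ?_)
    rw [Int.norm_eq_abs]
    simp only [A, Int.cast_natCast, Nat.abs_cast]
    exact hB n.1 n.2 j.1 j.2
  have hbound : ‖t‖ ≤ 2 * T * B := by
    refine htn.trans ?_
    have hbase : (1 : ℝ) ≤ ((2 * T : ℕ) : ℝ) *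
        max 1 (@norm _ (Matrix.seminormedAddCommGroup).toNorm A) := by
      have h3 := le_max_left 1 (@norm _ (Matrix.seminormedAddCommGroup).toNorm A)
      push_cast
      nlinarith
    have hST' : (S.card : ℝ) ≤ T := by exact_mod_cast hST
    refine (Real.rpow_le_rpow_of_exponent_le hbase (y := _) (z := 1) ?_).trans ?_
    · push_cast
      rw [div_le_one (by linarith)]
      linarith
    · rw [Real.rpow_one]
      push_cast
      exact mul_le_mul_of_nonneg_left hmax (by positivity)
  let p : ℕ → ℤ := fun j => if h : j < 2 * T then t ⟨j, h⟩ else 0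
  refine ⟨p, ?_, fun n hn => ?_, fun j hj => ?_⟩
  · obtain ⟨j, hj⟩ := Function.ne_iff.mp ht0
    exact ⟨j.1, j.2, by simpa [p] using hj⟩
  · have := congrFun htA ⟨n, hn⟩
    rw [Matrix.mulVec, dotProduct] at this
    rw [Finset.sum_range, ← this.trans (by rfl : _ = (0 : ℤ))]
    refine Finset.sum_congr rfl fun j _ => ?_
    simp only [p, A, dif_pos j.2]
    ring
  · have h3 := norm_le_pi_norm t ⟨j, hj⟩
    rw [Int.norm_eq_abs] at h3
    simp only [p, dif_pos hj]
    exact h3.trans hbound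

lemma exists_poly_of_binom (K : Type*) [Field K] [CharZero K] (p : ℕ → ℤ) (t : ℕ) :
    ∃ P : K[X], P.natDegree ≤ t ∧
      (∀ n : ℕ, P.eval (n : K) = ((∑ j ∈ Finset.range t, p j * (n.choose j : ℤ) : ℤ) : K)) ∧
      ((∃ j < t, p j ≠ 0) → P ≠ 0) := by
  have hev : ∀ n : ℕ, (∑ j ∈ Finset.range t,
      Polynomial.C ((p j : K) / j.factorial) * descPochhammer K j : K[X]).eval (n : K)
      = ((∑ j ∈ Finset.range t, p j * (n.choose j : ℤ) : ℤ) : K) := by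
    intro n
    rw [Polynomial.eval_finsetSum]
    push_cast
    refine Finset.sum_congr rfl fun j _ => ?_
    rw [Polynomial.eval_mul, Polynomial.eval_C, descPochhammer_eval_eq_descFactorial,
      Nat.descFactorial_eq_factorial_mul_choose]
    have : (j.factorial : K) ≠ 0 := by exact_mod_cast j.factorial_ne_zero
    push_cast
    field_simp
  refine ⟨_, ?_, hev, ?_⟩
  · refine Polynomial.natDegree_sum_le_of_forall_le _ _ fun j hj => ?_
    refine (Polynomial.natDegree_C_mul_le _ _).trans ?_
    rw [descPochhammer_natDegree]
    exact (Finset.mem_range.mp hj).le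
  · intro hex h0
    classical
    -- at the least index with nonzero coefficient only one term of the sum survives
    have hmin := Nat.find_spec hex
    set j := Nat.find hex with hj
    have h1 := hev j
    rw [h0, Polynomial.eval_zero] at h1
    have h2 : ∑ i ∈ Finset.range t, p i * (j.choose i : ℤ) = p j := by
      rw [Finset.sum_eq_single_of_mem j (Finset.mem_range.mpr hmin.1)]
      · simp
      · intro i hi hij
        rcases lt_or_gt_of_ne hij with h | h
        · have := Nat.find_min hex (m := i) (by rw [← hj]; exact h)
          push Not at this
          rw [this (Finset.mem_range.mp hi), zero_mul]
        · rw [Nat.choose_eq_zero_of_lt h]; simp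
    rw [h2] at h1
    exact hmin.2 (by exact_mod_cast h1.symm)

lemma choose_le_exp (n j N t : ℕ) (hn : n ≤ N) (hj : j ≤ t) (y : ℝ) (hy : 0 < y) (hy1 : y ≤ 1) :
    (n.choose j : ℝ) ≤ Real.exp (y * N) * (1 / y) ^ t := by
  have hone : 1 ≤ 1 / y := by rwa [one_le_div hy]
  rcases lt_or_ge n j with h | h
  · rw [Nat.choose_eq_zero_of_lt h]; simp only [Nat.cast_zero]; positivity
  have h1 : (n.choose j : ℝ) * y ^ j ≤ (y + 1) ^ n := by
    rw [add_pow]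
    have := Finset.single_le_sum (f := fun m => y ^ m * 1 ^ (n - m) * (n.choose m : ℝ))
      (s := Finset.range (n + 1)) (fun _ _ => by positivity) (Finset.mem_range.mpr (by omega : j < n + 1))
    simp only [one_pow, mul_one] at this ⊢
    linarith
  calc (n.choose j : ℝ) = (n.choose j : ℝ) * y ^ j * (1 / y) ^ j := by
        rw [mul_assoc, ← mul_pow]; field_simp; simp
    _ ≤ (y + 1) ^ n * (1 / y) ^ j := by gcongr
    _ ≤ (y + 1) ^ N * (1 / y) ^ t := by
        have hone' : 1 ≤ y + 1 := by linarith
        gcongr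
    _ ≤ _ := by
        gcongr
        rw [mul_comm, Real.exp_nat_mul]
        exact pow_le_pow_left₀ (by positivity) (Real.add_one_le_exp y) _

/-! ### Integrality and vanishing -/

section
variable {K : Type*} [Field K] [NumberField K]

/-- The Liouville inequality: a nonzero algebraic integer has norm at least one. -/
lemma eq_zero_of_small (ι : K →+* ℂ) (x : K) (D : ℕ) (hD : 0 < D)
    (hint : IsIntegral ℤ ((D : K) * x)) (U u : ℝ)
    (hU : ∀ σ : K →+* ℂ, ‖σ x‖ ≤ U) (hu : ‖ι x‖ ≤ u)
    (h : (D : ℝ) ^ Module.finrank ℚ K * (U ^ (Module.finrank ℚ K - 1) * u) < 1) : x = 0 := by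
  classical
  by_contra hx
  have hDx : (D : K) * x ≠ 0 := mul_ne_zero (by exact_mod_cast hD.ne') hx
  set ν := Algebra.norm ℚ ((D : K) * x) with hν
  have hν0 : ν ≠ 0 := Algebra.norm_ne_zero_iff.mpr hDx
  have hνi : IsIntegral ℤ ν := Algebra.isIntegral_norm ℚ hint
  obtain ⟨z, hz⟩ := IsIntegrallyClosed.isIntegral_iff.mp hνi
  have hz0 : z ≠ 0 := by
    rintro rfl
    exact hν0 (by rw [← hz]; simp)
  have hprod : ((ν : ℚ) : ℂ) = ∏ σ : K →+* ℂ, σ ((D : K) * x) := by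
    have h1 := Algebra.norm_eq_prod_embeddings ℚ ℂ ((D : K) * x)
    rw [← hν] at h1
    have h2 : ((ν : ℚ) : ℂ) = algebraMap ℚ ℂ ν := by simp
    rw [h2, h1]
    exact (Fintype.prod_equiv (RingHom.equivRatAlgHom K ℂ) _ _ fun σ => rfl).symm
  have hge : 1 ≤ ‖((ν : ℚ) : ℂ)‖ := by
    rw [← hz]
    simp only [algebraMap_int_eq, eq_intCast, Rat.cast_intCast, Complex.norm_intCast]
    exact_mod_cast Int.one_le_abs hz0
  rw [hprod, norm_prod] at hge
  have hle : ∏ σ : K →+* ℂ, ‖σ ((D : K) * x)‖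
      ≤ (D : ℝ) ^ Module.finrank ℚ K * (U ^ (Module.finrank ℚ K - 1) * u) := by
    have e : ∀ σ : K →+* ℂ, ‖σ ((D : K) * x)‖ = D * ‖σ x‖ := by
      intro σ; rw [map_mul, map_natCast, norm_mul, Complex.norm_natCast]
    simp only [e]
    rw [Finset.prod_mul_distrib, Finset.prod_const, Finset.card_univ, NumberField.Embeddings.card]
    refine mul_le_mul_of_nonneg_left ?_ (by positivity)
    rw [← Finset.prod_erase_mul _ _ (Finset.mem_univ ι)]
    refine mul_le_mul ?_ hu (norm_nonneg _) (pow_nonneg ((norm_nonneg _).trans (hU ι)) _)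
    refine (Finset.prod_le_prod (fun _ _ => norm_nonneg _) fun σ _ => hU σ).trans_eq ?_
    rw [Finset.prod_const, Finset.card_erase_of_mem (Finset.mem_univ _), Finset.card_univ,
      NumberField.Embeddings.card]
  linarith

lemma map_aeval_shiftE (σ : K →+* ℂ) (c : K[X]) (y : ℕ → K) (m : ℕ) :
    σ (aeval (shiftE K) c y m) = aeval (shiftE ℂ) (c.map σ) (fun n => σ (y n)) m := by
  rw [aeval_shiftE_apply' c y m _ le_rfl,
    aeval_shiftE_apply' (c.map σ) _ m c.natDegree Polynomial.natDegree_map_le, map_sum]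
  refine Finset.sum_congr rfl fun i _ => ?_
  rw [map_mul, Polynomial.coeff_map]

lemma norm_aeval_shiftE_le (σ : K →+* ℂ) (χ : K[X]) (s m : ℕ) (y : ℕ → K) (Λ V : ℝ) (hV : 0 ≤ V)
    (hΛ : coeffNorm (χ.map σ) ≤ Λ)
    (hy : ∀ i ≤ s * χ.natDegree, ‖σ (y (m + i))‖ ≤ V) :
    ‖σ (aeval (shiftE K) (χ ^ s) y m)‖ ≤ Λ ^ s * V := by
  rw [aeval_shiftE_apply' (χ ^ s) y m (s * χ.natDegree) Polynomial.natDegree_pow_le, map_sum]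
  have h1 : ∀ i ∈ Finset.range (s * χ.natDegree + 1), ‖σ ((χ ^ s).coeff i * y (m + i))‖
      ≤ ‖((χ.map σ) ^ s).coeff i‖ * V := by
    intro i hi
    rw [map_mul, norm_mul, ← Polynomial.map_pow, Polynomial.coeff_map]
    exact mul_le_mul_of_nonneg_left (hy i (by rw [Finset.mem_range] at hi; omega)) (norm_nonneg _)
  refine (norm_sum_le_of_le _ h1).trans ?_
  rw [← Finset.sum_mul]
  refine mul_le_mul_of_nonneg_right ?_ hV
  exact (sum_norm_coeff_pow_le _ _ _).trans (pow_le_pow_left₀ (coeffNorm_nonneg _) hΛ _)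

lemma isIntegral_coeff_pow {K : Type*} [Field K] (χ : K[X]) (hχ : ∀ i, IsIntegral ℤ (χ.coeff i)) (s i : ℕ) :
    IsIntegral ℤ ((χ ^ s).coeff i) := by
  induction s generalizing i with
  | zero =>
    rw [pow_zero, Polynomial.coeff_one]
    split_ifs
    · exact isIntegral_one
    · exact isIntegral_zero
  | succ s ih =>
    rw [pow_succ, Polynomial.coeff_mul]
    exact IsIntegral.sum _ fun x _ => (ih _).mul (hχ _)

lemma isIntegral_aeval_shiftE {K : Type*} [Field K] (χ : K[X]) (hχ : ∀ i, IsIntegral ℤ (χ.coeff i)) (s m D : ℕ)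
    (y : ℕ → K) (hy : ∀ i ≤ s * χ.natDegree, IsIntegral ℤ ((D : K) * y (m + i))) :
    IsIntegral ℤ ((D : K) * aeval (shiftE K) (χ ^ s) y m) := by
  rw [aeval_shiftE_apply' (χ ^ s) y m (s * χ.natDegree) Polynomial.natDegree_pow_le,
    Finset.mul_sum]
  refine IsIntegral.sum _ fun i hi => ?_
  rw [mul_left_comm]
  exact (isIntegral_coeff_pow χ hχ s i).mul (hy i (by rw [Finset.mem_range] at hi; omega))

lemma isIntegral_lcmUpto_mul (α : K) (R : ℕ) (h : den K α ≤ R) :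
    IsIntegral ℤ (((Nat.lcmUpto R : ℕ) : K) * α) := by
  obtain ⟨h0, h1⟩ := den_spec K α
  obtain ⟨c, hc⟩ : den K α ∣ Nat.lcmUpto R := by
    unfold Nat.lcmUpto
    exact Finset.dvd_lcm (f := id) (Finset.mem_Icc.mpr ⟨h0, h⟩)
  rw [hc, Nat.cast_mul, mul_comm ((den K α : K)), mul_assoc]
  exact (isIntegral_natCast (R := ℤ) c).mul h1

lemma lcmUpto_le_exp (R : ℕ) : ((Nat.lcmUpto R : ℕ) : ℝ) ≤ Real.exp (6 * R) := by
  have h0 : (0 : ℝ) < (Nat.lcmUpto R : ℕ) := by exact_mod_cast Nat.lcmUpto_pos R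
  rw [← Real.log_le_iff_le_exp h0, ← Chebyshev.psi_eq_log_lcmUpto]
  refine (Chebyshev.psi_le_const_mul_self (Nat.cast_nonneg R)).trans ?_
  have : Real.log 4 ≤ 2 := by
    rw [show (4 : ℝ) = 2 ^ 2 by norm_num, Real.log_pow]
    have := Real.log_two_lt_d9
    push_cast; linarith
  refine mul_le_mul_of_nonneg_right (by linarith) (Nat.cast_nonneg _)
end

/-! ### Vanishing on windows -/

/-- The numerical inequality that closes the product formula: the gain `2 ^ (-d s)` at the given
embedding outweighs the denominator and the sizes at the other embeddings. -/
lemma prod_lt_one (d s T : ℕ) (hd : 1 ≤ d) (D l lc g v w : ℝ) (hl : 0 ≤ l) (hgv : g ≤ v)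
    (hD0 : 0 ≤ D) (hD : D ≤ Real.exp w)
    (hfin : d * w + d * v + (2 * T + 1) * lc < s * (d * Real.log 2)) :
    D ^ d * ((Real.exp l ^ s * Real.exp v) ^ (d - 1) *
      (Real.exp lc * Real.exp g * Real.exp lc ^ (2 * T) *
        Real.exp (-(d * (Real.log 2 + l))) ^ s)) < 1 := by
  obtain ⟨e, rfl⟩ : ∃ e, d = e + 1 := ⟨d - 1, by omega⟩
  rw [Nat.add_sub_cancel]
  refine lt_of_le_of_lt (mul_le_mul_of_nonneg_right (pow_le_pow_left₀ hD0 hD _) (by positivity)) ?_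
  simp only [← Real.exp_nat_mul, ← Real.exp_add]
  rw [Real.exp_lt_one_iff]
  push_cast at hfin ⊢
  nlinarith [mul_nonneg (s.cast_nonneg : (0 : ℝ) ≤ s) hl]

set_option maxHeartbeats 2000000 in
/-- For a D-finite series with mostly tame coefficients, convergent in the unit disc, a suitable
nonzero polynomial multiple of the coefficient sequence is annihilated on a long window by a power
of the operator attached to the singularities: each term of the transformed sequence has small
denominator and conjugates, and is tiny at the given embedding, so it vanishes. -/
lemma key_window {K : Type*} [Field K] [NumberField K] (ι : K →+* ℂ) (a : ℕ → K)
    (p : ℕ) (A : Fin (p + 1) → ℂ[X]) (hg : SubG (PowerSeries.mk fun n => ι (a n)))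
    (hode : ∑ i : Fin (p + 1), (A i : PowerSeries ℂ) *
      psDeriv^[p - i.val] (PowerSeries.mk fun n => ι (a n)) = 0)
    (hT : MostlyTame K a) (χ : K[X]) (hχi : ∀ i, IsIntegral ℤ (χ.coeff i))
    (hχ : ∀ ζ : ℂ, ‖ζ‖ = 1 → (A 0).eval ζ = 0 → (χ.map ι).eval ζ⁻¹ = 0) (q : ℕ) :
    ∀ᶠ N : ℕ in atTop, ∃ (P : K[X]) (s : ℕ), P ≠ 0 ∧ q * P.natDegree ≤ N ∧ q * s ≤ N ∧
      ∀ m, N ≤ m → m ≤ 3 * N → aeval (shiftE K) (χ ^ s) (polyMul P a) m = 0 := by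
  classical
  set d := Module.finrank ℚ K with hd
  have hd1 : 1 ≤ d := Module.finrank_pos
  have hd1' : (1 : ℝ) ≤ d := by exact_mod_cast hd1
  -- `Λ` bounds `χ(E)` at every embedding, including the given one
  set Λ := 1 + ∑ σ : K →+* ℂ, coeffNorm (χ.map σ) with hΛ
  have hΛσ : ∀ σ : K →+* ℂ, coeffNorm (χ.map σ) ≤ Λ := fun σ => by
    have := Finset.single_le_sum (f := fun σ : K →+* ℂ => coeffNorm (χ.map σ))
      (fun σ _ => coeffNorm_nonneg _) (Finset.mem_univ σ)
    rw [hΛ]; linarith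
  have hΛ1 : 1 ≤ Λ := by
    have := Finset.sum_nonneg (s := Finset.univ) (f := fun σ : K →+* ℂ => coeffNorm (χ.map σ))
      (fun σ _ => coeffNorm_nonneg _)
    rw [hΛ]; linarith
  set l := Real.log Λ with hl
  have hl0 : 0 ≤ l := Real.log_nonneg hΛ1
  have hΛe : Real.exp l = Λ := Real.exp_log (by linarith)
  have hlog2 : 1 / 2 < Real.log 2 := by have := Real.log_two_gt_d9; linarith
  obtain ⟨θ₀, hθ₀, hsm⟩ := smallness p A _ hg hode (χ.map ι) hχ
    (Real.exp (-(d * (Real.log 2 + l)))) (Real.exp_pos _)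
    (Real.exp_lt_one_iff.mpr (by
      have : 0 < (d : ℝ) * (Real.log 2 + l) := by
        apply mul_pos <;> linarith
      linarith))
  set Δ := χ.natDegree with hΔ
  set θ₁ := min (θ₀ / 2) (1 / (2 * ((q : ℝ) + Δ + 1))) with hθ₁
  have hθ0 : 0 < θ₁ := lt_min (by positivity) (by positivity)
  have hθa : 2 * θ₁ ≤ θ₀ := by have : θ₁ ≤ _ := min_le_left _ _; linarith
  have hθb : 2 * θ₁ * (q + Δ + 1) ≤ 1 := by
    have : θ₁ ≤ _ := min_le_right _ _
    rw [le_div_iff₀ (by positivity)] at this; linarith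
  obtain ⟨Cc, hCc, hX⟩ := hsm (θ₁ / 3) (by positivity)
  set lc := Real.log Cc with hlc
  have hlc0 : 0 ≤ lc := Real.log_nonneg hCc
  have hCce : Real.exp lc = Cc := Real.exp_log (by linarith)
  -- `y`, `ε` and `δ` are chosen so that each loss (binomial sizes, denominators and heights, number
  -- of exceptional indices) is a small fraction of the gain, which is of order `θ₁ N`
  set y := min 1 (θ₁ / (80 * d)) with hy
  have hy0 : 0 < y := lt_min one_pos (by positivity)
  have hy1 : y ≤ 1 := min_le_left _ _
  have hyd : y * (80 * d) ≤ θ₁ := by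
    have : y ≤ _ := min_le_right _ _
    rwa [le_div_iff₀ (by positivity)] at this
  set ly := Real.log (1 / y) with hly
  have hly0 : 0 ≤ ly := Real.log_nonneg (by rwa [one_le_div hy0])
  have hye : Real.exp ly = 1 / y := Real.exp_log (by positivity)
  set ε := θ₁ / (280 * d) with hε
  have hε0 : 0 < ε := by positivity
  have hεd : ε * (280 * d) = θ₁ := by rw [hε]; field_simp
  set Z := 4 * (d : ℝ) + 4 * d * ly + 3 * lc + 1 with hZ
  have hZ0 : 0 < Z := by positivity
  set δ := min (θ₁ / (10 * Z)) (1 / (4 * ((q : ℝ) + 1))) with hδ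
  have hδ0 : 0 < δ := lt_min (by positivity) (by positivity)
  have hδZ : δ * (10 * Z) ≤ θ₁ := by
    have : δ ≤ _ := min_le_left _ _
    rwa [le_div_iff₀ (by positivity)] at this
  have hδq : δ * (4 * (q + 1)) ≤ 1 := by
    have : δ ≤ _ := min_le_right _ _
    rwa [le_div_iff₀ (by positivity)] at this
  have htend : Tendsto (fun m : ℕ => 4 * m) atTop atTop :=
    tendsto_atTop_mono (fun m => (by omega : m ≤ 4 * m)) tendsto_id
  filter_upwards [htend.eventually (hT ε hε0 (δ / 4) (by positivity)),
    eventually_ge_atTop ⌈1 / θ₁⌉₊, eventually_ge_atTop ⌈1 / δ⌉₊, eventually_ge_atTop 1]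
    with N hN1 hN2 hN3 hN4
  have hN : (1 : ℝ) ≤ N := by exact_mod_cast hN4
  have hNθ : 1 ≤ θ₁ * N := by
    have := Nat.ceil_le.mp hN2
    rw [div_le_iff₀ hθ0] at this; linarith
  have hNδ : 1 ≤ δ * N := by
    have := Nat.ceil_le.mp hN3
    rw [div_le_iff₀ hδ0] at this; linarith
  set S := (Finset.Icc 1 (4 * N)).filter fun n => ¬ Tame K ε n (a n) with hS
  set T := max 1 S.card with hTdef
  have hT1 : 1 ≤ T := le_max_left _ _
  have hST : S.card ≤ T := le_max_right _ _
  have hT1' : (1 : ℝ) ≤ T := by exact_mod_cast hT1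
  have hTδ : (T : ℝ) ≤ δ * N := by
    rw [hTdef, Nat.cast_max]
    refine max_le (by simpa using hNδ) (hN1.trans_eq ?_)
    push_cast; ring
  set B := Real.exp (y * (4 * N : ℕ)) * (1 / y) ^ (2 * T) with hB
  have hBch : ∀ n ≤ 4 * N, ∀ j < 2 * T, (n.choose j : ℝ) ≤ B := fun n hn j hj =>
    choose_le_exp n j (4 * N) (2 * T) hn hj.le y hy0 hy1
  have hB1 : 1 ≤ B := by
    have := hBch 0 (by omega) 0 (by omega)
    simpa using this
  -- the auxiliary polynomial vanishes at all non-tame indices up to `4 N`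
  obtain ⟨pz, hpz, hpzS, hpzB⟩ := siegel_binom S T hT1 hST B hB1 fun n hn j hj =>
    hBch n (Finset.mem_Icc.mp (Finset.mem_filter.mp hn).1).2 j hj
  obtain ⟨P, hPdeg, hPev, hP0⟩ := exists_poly_of_binom K pz (2 * T)
  set s := ⌈θ₁ * N⌉₊ with hs
  have hs1 : θ₁ * N ≤ s := Nat.le_ceil _
  have hs2 : (s : ℝ) ≤ 2 * θ₁ * N := by
    have := Nat.ceil_lt_add_one (show 0 ≤ θ₁ * N by positivity)
    rw [← hs] at this; linarith
  have hsq : ((q : ℝ) + Δ + 1) * s ≤ N := by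
    calc ((q : ℝ) + Δ + 1) * s ≤ (q + Δ + 1) * (2 * θ₁ * N) := by gcongr
      _ = 2 * θ₁ * (q + Δ + 1) * N := by ring
      _ ≤ 1 * N := by gcongr
      _ = N := one_mul _
  have hsq' : (q + Δ + 1) * s ≤ N := by exact_mod_cast hsq
  have hqs : q * s ≤ N := le_trans (Nat.mul_le_mul_right s (by omega)) hsq'
  have hΔs : s * Δ ≤ N := by
    rw [mul_comm]; exact le_trans (Nat.mul_le_mul_right s (by omega)) hsq'
  have hqT : q * (2 * T) ≤ N := by
    have : (q : ℝ) * (2 * T) ≤ N := by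
      calc (q : ℝ) * (2 * T) ≤ q * (2 * (δ * N)) := by gcongr
        _ ≤ (δ * (4 * (q + 1))) * N := by nlinarith [mul_pos hδ0 (show (0 : ℝ) < N by linarith)]
        _ ≤ 1 * N := by gcongr
        _ = N := one_mul _
    exact_mod_cast this
  refine ⟨P, s, hP0 hpz, (Nat.mul_le_mul_left q hPdeg).trans hqT, hqs, fun m hm1 hm2 => ?_⟩
  -- sizes of the values of the auxiliary polynomial
  set g := 2 * Real.log (2 * T) + 2 * (y * (4 * N : ℕ) + (2 * T : ℕ) * ly) with hgdef
  have hGe : Real.exp g = (2 * T * B) ^ 2 := by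
    have e1 : Real.exp (y * (4 * N : ℕ) + (2 * T : ℕ) * ly) = B := by
      rw [Real.exp_add, Real.exp_nat_mul, hye]
    have e2 : g = (2 : ℕ) * (Real.log (2 * T) + (y * (4 * N : ℕ) + (2 * T : ℕ) * ly)) := by
      rw [hgdef]; push_cast; ring
    rw [e2, Real.exp_nat_mul, Real.exp_add, e1, Real.exp_log (by positivity)]
  have hsum : ∑ j ∈ Finset.range (2 * T), |(pz j : ℝ)| ≤ 2 * T * (2 * T * B) := by
    refine (Finset.sum_le_card_nsmul _ _ _ fun j hj => hpzB j (Finset.mem_range.mp hj)).trans_eq ?_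
    rw [Finset.card_range, nsmul_eq_mul]; push_cast; ring
  have hG0 : (0 : ℝ) ≤ 2 * T * (2 * T * B) := by positivity
  have hG1 : 2 * T * (2 * T * B) ≤ Real.exp g := by
    rw [hGe]
    calc 2 * T * (2 * T * B) = 2 * T * (2 * T * B) * 1 := by ring
      _ ≤ 2 * T * (2 * T * B) * B := by gcongr
      _ = _ := by ring
  have hPsize : ∀ (σ : K →+* ℂ) (n : ℕ), n ≤ 4 * N → ‖σ (P.eval (n : K))‖ ≤ Real.exp g := by
    intro σ n hn
    rw [hPev, map_intCast, Complex.norm_intCast]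
    push_cast
    calc |∑ j ∈ Finset.range (2 * T), (pz j : ℝ) * (n.choose j : ℝ)|
        ≤ ∑ j ∈ Finset.range (2 * T), |(pz j : ℝ)| * B := by
          refine (Finset.abs_sum_le_sum_abs _ _).trans (Finset.sum_le_sum fun j hj => ?_)
          rw [abs_mul, Nat.abs_cast]
          exact mul_le_mul_of_nonneg_left (hBch n hn j (Finset.mem_range.mp hj)) (abs_nonneg _)
      _ ≤ (2 * T * (2 * T * B)) * B := by
          rw [← Finset.sum_mul]
          exact mul_le_mul_of_nonneg_right hsum (by linarith)
      _ = _ := by rw [hGe]; ring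
  have hbadP : ∀ n ∈ S, P.eval (n : K) = 0 := fun n hn => by
    rw [hPev, hpzS n hn, Int.cast_zero]
  set v := g + ε * (4 * N : ℕ) with hv
  set R := ⌊ε * (4 * N : ℕ)⌋₊ with hR
  -- one multiplier of size `exp (O(ε N))` clears every tame denominator up to `ε (4 N)`
  set D := Nat.lcmUpto R with hD
  have hDpos : 0 < D := Nat.lcmUpto_pos R
  have hDle : (D : ℝ) ≤ Real.exp (6 * (ε * (4 * N : ℕ))) := by
    refine (lcmUpto_le_exp R).trans (Real.exp_le_exp.mpr ?_)
    have := Nat.floor_le (show 0 ≤ ε * (4 * N : ℕ) by positivity)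
    rw [← hR] at this
    linarith
  have hcase : ∀ n, 1 ≤ n → n ≤ 4 * N → P.eval (n : K) = 0 ∨ Tame K ε n (a n) := by
    intro n hn1 hn2
    by_cases hb : Tame K ε n (a n)
    · exact Or.inr hb
    · exact Or.inl (hbadP n (Finset.mem_filter.mpr ⟨Finset.mem_Icc.mpr ⟨hn1, hn2⟩, hb⟩))
  have hεn : ∀ n ≤ 4 * N, ε * (n : ℝ) ≤ ε * (4 * N : ℕ) := fun n hn => by
    have : (n : ℝ) ≤ (4 * N : ℕ) := by exact_mod_cast hn
    gcongr
  have hint : ∀ n, 1 ≤ n → n ≤ 4 * N → IsIntegral ℤ ((D : K) * polyMul P a n) := by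
    intro n hn1 hn2
    unfold polyMul
    rcases hcase n hn1 hn2 with h | h
    · rw [h, zero_mul, mul_zero]; exact isIntegral_zero
    · rw [mul_left_comm]
      refine IsIntegral.mul ?_ (isIntegral_lcmUpto_mul (a n) R ?_)
      · rw [hPev]; exact isIntegral_intCast (R := ℤ) _
      · exact Nat.le_floor (h.1.trans (hεn n hn2))
  have hnorm : ∀ (σ : K →+* ℂ) n, 1 ≤ n → n ≤ 4 * N → ‖σ (polyMul P a n)‖ ≤ Real.exp v := by
    intro σ n hn1 hn2
    unfold polyMul
    rcases hcase n hn1 hn2 with h | h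
    · rw [h, zero_mul, map_zero, norm_zero]; positivity
    · rw [map_mul, norm_mul, hv, Real.exp_add]
      exact mul_le_mul (hPsize σ n hn2) ((h.2 σ).trans (Real.exp_le_exp.mpr (hεn n hn2)))
        (norm_nonneg _) (Real.exp_pos _).le
  refine eq_zero_of_small ι _ D hDpos
    (isIntegral_aeval_shiftE χ hχi s m D _ fun i hi => by
      have hi' : i ≤ N := le_trans hi hΔs
      exact hint _ (by omega) (by omega))
    (Real.exp l ^ s * Real.exp v)
    (Real.exp lc * Real.exp g * Real.exp lc ^ (2 * T) * Real.exp (-(d * (Real.log 2 + l))) ^ s)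
    (fun σ => ?_) ?_ ?_
  · exact norm_aeval_shiftE_le σ χ s m _ _ _ (Real.exp_pos _).le (by rw [hΛe]; exact hΛσ σ)
      fun i hi => by
        have hi' : i ≤ N := le_trans hi hΔs
        exact hnorm σ _ (by omega) (by omega)
  · have hmN1 : (N : ℝ) ≤ m := by exact_mod_cast hm1
    have hmN2 : (m : ℝ) ≤ 3 * N := by exact_mod_cast hm2
    have h1 := hX m s (2 * T) (by nlinarith) (by nlinarith) fun j => (pz j : ℂ)
    rw [map_aeval_shiftE, Polynomial.map_pow]
    have hfun : (fun n => ι (polyMul P a n)) = fun n =>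
        (∑ j ∈ Finset.range (2 * T), (pz j : ℂ) * (n.choose j : ℂ)) *
          PowerSeries.coeff n (PowerSeries.mk fun n => ι (a n)) := by
      funext n
      unfold polyMul
      rw [map_mul, hPev, PowerSeries.coeff_mk, map_intCast]
      push_cast
      rfl
    rw [hfun]
    refine h1.trans ?_
    rw [hCce]
    simp only [Complex.norm_intCast]
    have := hsum.trans hG1
    gcongr
  · refine prod_lt_one d s T hd1 D l lc g v (6 * (ε * (4 * N : ℕ))) hl0 ?_ (Nat.cast_nonneg _)
      hDle ?_
    · rw [hv]
      have : 0 ≤ ε * (4 * N : ℕ) := by positivity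
      linarith
    · have hlogT : Real.log (2 * T) ≤ 2 * T := by
        have := Real.log_le_sub_one_of_pos (show (0 : ℝ) < 2 * T by positivity)
        linarith
      have hg' : g ≤ 4 * T + 8 * y * N + 4 * T * ly := by
        rw [hgdef]; push_cast; linarith
      have e0 : (d : ℝ) * g ≤ d * (4 * T + 8 * y * N + 4 * T * ly) := by gcongr
      have e1 : (d : ℝ) * (6 * (ε * (4 * N : ℕ))) + d * v = 28 * (ε * d) * N + d * g := by
        rw [hv]; push_cast; ring
      have e2 : (2 * (T : ℝ) + 1) * lc ≤ 3 * T * lc := by gcongr; linarith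
      have e3 : (T : ℝ) * Z ≤ θ₁ / 10 * N := by
        calc (T : ℝ) * Z ≤ δ * N * Z := by gcongr
          _ = δ * (10 * Z) / 10 * N := by ring
          _ ≤ _ := by gcongr
      have e4 : 28 * (ε * d) * N = θ₁ / 10 * N := by rw [← hεd]; ring
      have e5 : 8 * (y * d) * N ≤ θ₁ / 10 * N := by
        have : 8 * (y * d) ≤ θ₁ / 10 := by linarith
        gcongr
      have e6 : θ₁ * N * (1 / 2) ≤ s * (d * Real.log 2) := by
        have : 1 / 2 ≤ (d : ℝ) * Real.log 2 := by nlinarith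
        gcongr
      have e7 : (T : ℝ) * Z = 4 * d * T + 4 * d * ly * T + 3 * lc * T + T := by rw [hZ]; ring
      rw [e1]
      have e8 : (d : ℝ) * (4 * T + 8 * y * N + 4 * T * ly)
        = 4 * d * T + 8 * (y * d) * N + 4 * d * ly * T := by ring
      have e9 : 3 * (T : ℝ) * lc = 3 * lc * T := by ring
      have e10 : 0 < θ₁ * N := by positivity
      linarith

/-! ### Sequences with tame windows -/

section Roots

/-- A set of density zero cannot meet every window of a fixed length. -/
lemma exists_tame_window {K : Type*} [Field K] [NumberField K] (a : ℕ → K) (hT : MostlyTame K a)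
    (W : ℕ) (ε : ℝ) (hε : 0 < ε) (N : ℕ) :
    ∃ n ≥ N, ∀ i ≤ W, Tame K ε (n + i) (a (n + i)) := by
  classical
  by_contra! hcon
  have hW : (0 : ℝ) < W + 1 := by positivity
  have hev := hT ε hε (1 / (2 * (W + 1))) (by positivity)
  rw [eventually_atTop] at hev
  obtain ⟨N₁, hN₁⟩ := hev
  choose! i hi hbad using hcon
  have hlow : ∀ T : ℕ, (T : ℝ) ≤ (1 / (2 * ((W : ℝ) + 1))) * ((N + N₁ + 1 + T * (W + 1) : ℕ) : ℝ) := by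
    intro T
    refine le_trans ?_ (hN₁ (N + N₁ + 1 + T * (W + 1)) (by omega))
    set g : ℕ → ℕ := fun k => (N + 1 + k * (W + 1)) + i (N + 1 + k * (W + 1)) with hg
    have hgi : ∀ k, i (N + 1 + k * (W + 1)) ≤ W := fun k => hi _ (by omega)
    have hinj : Set.InjOn g (Finset.range T : Set ℕ) := by
      intro k _ l _ hkl
      by_contra hne
      have h1 := hgi k
      have h2 := hgi l
      simp only [hg] at hkl
      rcases Nat.lt_or_gt_of_ne hne with h | h
      · have := Nat.mul_le_mul_right (W + 1) (Nat.succ_le_of_lt h)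
        rw [Nat.succ_mul] at this
        omega
      · have := Nat.mul_le_mul_right (W + 1) (Nat.succ_le_of_lt h)
        rw [Nat.succ_mul] at this
        omega
    have hsub : (Finset.range T).image g ⊆ (Finset.Icc 1 (N + N₁ + 1 + T * (W + 1))).filter
        fun n => ¬ Tame K ε n (a n) := by
      intro x hx
      obtain ⟨k, hk, rfl⟩ := Finset.mem_image.mp hx
      rw [Finset.mem_range] at hk
      rw [Finset.mem_filter, Finset.mem_Icc]
      have h1 := hgi k
      have h2 := Nat.mul_le_mul_right (W + 1) (Nat.succ_le_of_lt hk)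
      rw [Nat.succ_mul] at h2
      refine ⟨⟨by simp only [hg]; omega, by simp only [hg]; omega⟩, hbad _ (by omega)⟩
    have := Finset.card_le_card hsub
    rw [Finset.card_image_of_injOn hinj, Finset.card_range] at this
    exact_mod_cast this
  have h := hlow (N + N₁ + 2)
  rw [div_mul_eq_mul_div, le_div_iff₀ (by positivity)] at h
  push_cast at h
  nlinarith [(Nat.cast_nonneg N : (0:ℝ) ≤ N), (Nat.cast_nonneg N₁ : (0:ℝ) ≤ N₁), (Nat.cast_nonneg W : (0:ℝ) ≤ W), mul_nonneg (Nat.cast_nonneg W : (0:ℝ) ≤ W) (Nat.cast_nonneg N : (0:ℝ) ≤ N), mul_nonneg (Nat.cast_nonneg W : (0:ℝ) ≤ W) (Nat.cast_nonneg N₁ : (0:ℝ) ≤ N₁)]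

lemma ringHom_aeval_shiftE {K L : Type*} [Field K] [Field L] (σ : K →+* L) (c : K[X]) (y : ℕ → K) (m : ℕ) :
    σ (aeval (shiftE K) c y m) = aeval (shiftE L) (c.map σ) (fun n => σ (y n)) m := by
  rw [aeval_shiftE_apply' c y m _ le_rfl,
    aeval_shiftE_apply' (c.map σ) _ m c.natDegree Polynomial.natDegree_map_le, map_sum]
  refine Finset.sum_congr rfl fun i _ => ?_
  rw [map_mul, Polynomial.coeff_map]

/-- Infinitely often, long windows of `u` have a common denominator and conjugates of
subexponential size. -/
def TameWindows (L : Type*) [Field L] (u : ℕ → L) : Prop :=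
  ∀ (W : ℕ) (ε : ℝ), 0 < ε → ∀ N : ℕ, ∃ n ≥ N, ∃ D : ℕ, 0 < D ∧ (D : ℝ) ≤ Real.exp (ε * n) ∧
    ∀ i ≤ W, IsIntegral ℤ ((D : L) * u (n + i)) ∧
      ∀ τ : L →+* ℂ, ‖τ (u (n + i))‖ ≤ Real.exp (ε * n)

/-- A common denominator for finitely many algebraic numbers. -/
lemma exists_common_den {L : Type*} [Field L] [NumberField L] (c : ℕ → L) (n : ℕ) :
    ∃ D : ℕ, 0 < D ∧ ∀ i < n, IsIntegral ℤ ((D : L) * c i) := by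
  refine ⟨∏ i ∈ Finset.range n, den L (c i), Finset.prod_pos fun i _ => (den_spec L _).1,
    fun i hi => ?_⟩
  obtain ⟨e, he⟩ := Finset.dvd_prod_of_mem (fun i => den L (c i)) (Finset.mem_range.mpr hi)
  rw [he, Nat.cast_mul, mul_right_comm, mul_comm]
  exact (isIntegral_natCast (R := ℤ) e).mul (den_spec L (c i)).2

/-- A common bound for the conjugates of finitely many algebraic numbers. -/
lemma exists_common_bound {L : Type*} [Field L] [NumberField L] (c : ℕ → L) (n : ℕ) :
    ∃ B : ℝ, 1 ≤ B ∧ ∀ i < n, ∀ τ : L →+* ℂ, ‖τ (c i)‖ ≤ B := by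
  refine ⟨1 + ∑ i ∈ Finset.range n, ∑ τ : L →+* ℂ, ‖τ (c i)‖, ?_, fun i hi τ => ?_⟩
  · have : 0 ≤ ∑ i ∈ Finset.range n, ∑ τ : L →+* ℂ, ‖τ (c i)‖ := by positivity
    linarith
  · have h1 : ‖τ (c i)‖ ≤ ∑ τ : L →+* ℂ, ‖τ (c i)‖ :=
      Finset.single_le_sum (f := fun τ : L →+* ℂ => ‖τ (c i)‖) (fun _ _ => norm_nonneg _)
        (Finset.mem_univ τ)
    have h2 := Finset.single_le_sum (f := fun i => ∑ τ : L →+* ℂ, ‖τ (c i)‖)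
      (fun _ _ => by positivity) (Finset.mem_range.mpr hi)
    linarith

lemma eventually_le_exp (B ε : ℝ) (hε : 0 < ε) : ∃ N : ℕ, ∀ n : ℕ, N ≤ n → B ≤ Real.exp (ε * n) := by
  have : Tendsto (fun n : ℕ => Real.exp (ε * n)) atTop atTop :=
    Real.tendsto_exp_atTop.comp (tendsto_natCast_atTop_atTop.const_mul_atTop hε)
  obtain ⟨N, hN⟩ := eventually_atTop.mp (this.eventually_ge_atTop B)
  exact ⟨N, hN⟩

lemma TameWindows.aeval {L : Type*} [Field L] [NumberField L] {u : ℕ → L} (hu : TameWindows L u)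
    (c : L[X]) (ε : ℝ) (hε : 0 < ε) (N : ℕ) : ∃ n ≥ N, ∃ D : ℕ, 0 < D ∧
      (D : ℝ) ≤ Real.exp (ε * n) ∧ IsIntegral ℤ ((D : L) * Polynomial.aeval (shiftE L) c u n) ∧
      ∀ τ : L →+* ℂ, ‖τ (Polynomial.aeval (shiftE L) c u n)‖ ≤ Real.exp (ε * n) := by
  obtain ⟨D₀, hD₀, hD₀i⟩ := exists_common_den c.coeff (c.natDegree + 1)
  obtain ⟨B, hB1, hB⟩ := exists_common_bound c.coeff (c.natDegree + 1)
  obtain ⟨N₁, hN₁⟩ := eventually_le_exp D₀ (ε / 2) (by positivity)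
  obtain ⟨N₂, hN₂⟩ := eventually_le_exp ((c.natDegree + 1) * B) (ε / 2) (by positivity)
  obtain ⟨n, hn, D, hD, hDe, hw⟩ := hu c.natDegree (ε / 2) (by positivity) (N + N₁ + N₂)
  refine ⟨n, by omega, D₀ * D, by positivity, ?_, ?_, fun τ => ?_⟩
  · rw [show ε * n = ε / 2 * n + ε / 2 * n by ring, Real.exp_add]
    push_cast
    exact mul_le_mul (hN₁ n (by omega)) hDe (by positivity) (by positivity)
  · rw [aeval_shiftE_apply, Finset.mul_sum]
    refine IsIntegral.sum _ fun i hi => ?_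
    rw [Finset.mem_range] at hi
    have := (hD₀i i hi).mul (hw i (by omega)).1
    push_cast
    rwa [mul_mul_mul_comm] at this
  · rw [aeval_shiftE_apply, map_sum]
    refine (norm_sum_le _ _).trans ?_
    have h1 : ∀ i ∈ Finset.range (c.natDegree + 1), ‖τ (c.coeff i * u (n + i))‖ ≤
        B * Real.exp (ε / 2 * n) := by
      intro i hi
      rw [Finset.mem_range] at hi
      rw [map_mul, norm_mul]
      exact mul_le_mul (hB i hi τ) ((hw i (by omega)).2 τ) (norm_nonneg _) (by linarith)
    refine (Finset.sum_le_sum h1).trans ?_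
    rw [Finset.sum_const, Finset.card_range, nsmul_eq_mul]
    rw [show ε * n = ε / 2 * n + ε / 2 * n by ring, Real.exp_add, ← mul_assoc]
    refine mul_le_mul_of_nonneg_right ?_ (Real.exp_pos _).le
    push_cast
    exact hN₂ n (by omega)

/-- Polynomial multiples of mostly tame sequences, pushed to a larger field, have tame windows. -/
lemma tameWindows_of_mostlyTame {K L : Type*} [Field K] [NumberField K] [Field L] [NumberField L]
    (φ : K →+* L) (a : ℕ → K) (hT : MostlyTame K a) (P : K[X]) (N₀ : ℕ) :
    TameWindows L (fun n => φ (polyMul P a (n + N₀))) := by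
  intro W ε hε N
  obtain ⟨D₀, hD₀, hD₀i⟩ := exists_common_den P.coeff (P.natDegree + 1)
  obtain ⟨B, hB1, hB⟩ := exists_common_bound P.coeff (P.natDegree + 1)
  set δ := ε / 24 with hδ
  have hδ0 : 0 < δ := by positivity
  obtain ⟨N₁, hN₁⟩ := eventually_le_exp D₀ (ε / 2) (by positivity)
  obtain ⟨N₂, hN₂⟩ := eventually_le_exp ((P.natDegree + 1) * B) (ε / 4) (by positivity)
  obtain ⟨N₃, hN₃⟩ : ∃ N₃ : ℕ, ∀ n : ℕ, N₃ ≤ n → ((2 * n : ℝ)) ^ P.natDegree ≤ Real.exp (ε / 4 * n) := by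
    have h := (isLittleO_pow_exp_pos_mul_atTop P.natDegree (b := ε / 8) (by positivity)).bound
      (c := 1) one_pos
    have h2 := (tendsto_natCast_atTop_atTop (R := ℝ)).const_mul_atTop (show (0 : ℝ) < 2 by norm_num)
    obtain ⟨N₃, hN₃⟩ := eventually_atTop.mp (h2.eventually h)
    refine ⟨N₃, fun n hn => ?_⟩
    have := hN₃ n hn
    rw [Real.norm_of_nonneg (by positivity), Real.norm_of_nonneg (by positivity)] at this
    rw [show ε / 4 * n = ε / 8 * (2 * n) by ring]; linarith
  obtain ⟨n', hn', hw⟩ := exists_tame_window a hT W δ hδ0 (N + N₁ + N₂ + N₃ + 2 * N₀ + W + 1)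
  obtain ⟨n, rfl⟩ : ∃ n, n' = n + N₀ := ⟨n' - N₀, by omega⟩
  have hnW : ∀ i ≤ W, ((n + N₀ + i : ℕ) : ℝ) ≤ 2 * n := by
    intro i hi
    have : n + N₀ + i ≤ 2 * n := by omega
    exact_mod_cast this
  have hn0 : (0 : ℝ) ≤ n := Nat.cast_nonneg n
  set R := ⌊2 * δ * n⌋₊ with hR
  have hRle : (R : ℝ) ≤ 2 * δ * n := Nat.floor_le (by positivity)
  have hden : ∀ i ≤ W, den K (a (n + N₀ + i)) ≤ R := by
    intro i hi
    rw [hR]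
    refine Nat.le_floor ((hw i hi).1.trans ?_)
    nlinarith [hnW i hi]
  have hintP : ∀ m : ℕ, IsIntegral ℤ ((D₀ : K) * P.eval (m : K)) := by
    intro m
    rw [eval_eq_sum_range, Finset.mul_sum]
    refine IsIntegral.sum _ fun i hi => ?_
    rw [← mul_assoc]
    exact (hD₀i i (Finset.mem_range.mp hi)).mul ((isIntegral_natCast (R := ℤ) m).pow i)
  refine ⟨n, by omega, D₀ * Nat.lcmUpto R, Nat.mul_pos hD₀ (Nat.lcmUpto_pos R), ?_, fun i hi => ⟨?_, ?_⟩⟩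
  · rw [show ε * n = ε / 2 * n + ε / 2 * n by ring, Real.exp_add]
    push_cast
    refine mul_le_mul (hN₁ n (by omega)) ((lcmUpto_le_exp R).trans (Real.exp_le_exp.mpr ?_))
      (by positivity) (by positivity)
    rw [hδ] at hRle; linarith
  · have h1 := (hintP (n + N₀ + i)).mul (isIntegral_lcmUpto_mul (a (n + N₀ + i)) R (hden i hi))
    have h2 := map_isIntegral_int φ h1
    convert h2 using 1
    beta_reduce
    rw [show n + i + N₀ = n + N₀ + i by ring]
    simp only [polyMul, map_mul, map_natCast]
    push_cast; ring
  · intro τ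
    beta_reduce
    rw [show n + i + N₀ = n + N₀ + i by ring]
    simp only [polyMul, map_mul, norm_mul]
    have h1 : ‖τ (φ (a (n + N₀ + i)))‖ ≤ Real.exp (ε / 2 * n) := by
      refine ((hw i hi).2 (τ.comp φ)).trans (Real.exp_le_exp.mpr ?_)
      have := mul_le_mul_of_nonneg_left (hnW i hi) hδ0.le
      rw [hδ] at this ⊢
      nlinarith
    have h2 : ‖τ (φ (P.eval ((n + N₀ + i : ℕ) : K)))‖ ≤ Real.exp (ε / 4 * n) * Real.exp (ε / 4 * n) := by
      rw [eval_eq_sum_range, map_sum, map_sum]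
      refine (norm_sum_le _ _).trans ?_
      have h3 : ∀ j ∈ Finset.range (P.natDegree + 1),
          ‖τ (φ (P.coeff j * ((n + N₀ + i : ℕ) : K) ^ j))‖ ≤ B * Real.exp (ε / 4 * n) := by
        intro j hj
        rw [map_mul, map_mul, norm_mul, map_pow, map_pow, map_natCast, map_natCast, norm_pow,
          Complex.norm_natCast]
        rw [Finset.mem_range] at hj
        refine mul_le_mul (hB j hj (τ.comp φ)) (le_trans ?_ (hN₃ n (by omega))) (by positivity) (by linarith)
        have h5 : (1 : ℝ) ≤ 2 * n := by
          have : 1 ≤ n := by omega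
          have : (1 : ℝ) ≤ n := by exact_mod_cast this
          linarith
        exact (pow_le_pow_left₀ (by positivity) (hnW i hi) j).trans
          (pow_le_pow_right₀ h5 (by omega))
      refine (Finset.sum_le_sum h3).trans ?_
      rw [Finset.sum_const, Finset.card_range, nsmul_eq_mul, ← mul_assoc]
      refine mul_le_mul_of_nonneg_right ?_ (Real.exp_pos _).le
      push_cast
      exact hN₂ n (by omega)
    refine (mul_le_mul h2 h1 (norm_nonneg _) (by positivity)).trans ?_
    rw [← Real.exp_add, ← Real.exp_add]
    apply le_of_eq; congr 1; ring

end Roots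

/-! ### Characteristic roots are roots of unity -/

section RootsOfUnity

/-- The height of an algebraic integer is controlled by its conjugates. -/
lemma logHeight_le_of_isIntegral {L : Type*} [Field L] [NumberField L] (x : L) (hx : IsIntegral ℤ x)
    (B : ℝ) (hB0 : 0 ≤ B) (hB : ∀ τ : L →+* ℂ, ‖τ x‖ ≤ Real.exp B) :
    Height.logHeight₁ x ≤
      (∑ v : NumberField.InfinitePlace L, (v.mult : ℝ)) * B := by
  rw [NumberField.logHeight₁_eq]
  have h1 : ∀ v : NumberField.FinitePlace L, Real.posLog (v x) = 0 := by
    intro v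
    rw [Real.posLog_eq_zero_iff, abs_of_nonneg (apply_nonneg v x), ← NumberField.FinitePlace.norm_embedding_eq]
    exact NumberField.FinitePlace.norm_le_one L v.maximalIdeal (⟨x, hx⟩ : NumberField.RingOfIntegers L)
  rw [finsum_congr h1, finsum_zero, add_zero, Finset.sum_mul]
  refine Finset.sum_le_sum fun v _ => mul_le_mul_of_nonneg_left ?_ (Nat.cast_nonneg _)
  rw [Real.posLog_def]
  change max 0 (Real.log (v x)) ≤ B
  refine max_le hB0 ?_
  rw [← NumberField.InfinitePlace.norm_embedding_eq]
  rcases (norm_nonneg (v.embedding x)).eq_or_lt with h | h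
  · rw [← h, Real.log_zero]; exact hB0
  · exact (Real.log_le_iff_le_exp h).mpr (hB _)

/-- Northcott: a nonzero number of height zero is a root of unity. -/
lemma root_of_unity_of_height_zero {L : Type*} [Field L] [NumberField L] (α : L) (hα : α ≠ 0)
    (h : Height.logHeight₁ α ≤ 0) : ∃ k : ℕ, 0 < k ∧ α ^ k = 1 := by
  have hfin := NumberField.finite_setOfPred_logHeight₁_le L 0
  have hmaps : Set.MapsTo (fun n : ℕ => α ^ n) Set.univ {x | Height.logHeight₁ x ≤ 0} := by
    intro n _
    rw [Set.mem_ofPred_eq, Height.logHeight₁_pow]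
    exact mul_nonpos_of_nonneg_of_nonpos (Nat.cast_nonneg n) h
  obtain ⟨i, _, j, _, hij, he⟩ := Set.infinite_univ.exists_ne_map_eq_of_mapsTo hmaps hfin
  wlog hlt : i < j generalizing i j
  · exact this j trivial i trivial hij.symm he.symm (by omega)
  refine ⟨j - i, by omega, ?_⟩
  have : α ^ i * α ^ (j - i) = α ^ i * 1 := by
    rw [← pow_add, Nat.add_sub_cancel' hlt.le, mul_one]; exact he.symm
  exact mul_left_cancel₀ (pow_ne_zero _ hα) this

/-- If `c(E)u` is a nonzero geometric sequence, the tameness of `u` forces the ratio to be a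
root of unity. -/
lemma ratio_root_of_unity {L : Type*} [Field L] [NumberField L] {u : ℕ → L} (hu : TameWindows L u)
    (c : L[X]) (α : L) (hα : α ≠ 0) (h0 : aeval (shiftE L) c u ≠ 0)
    (h1 : aeval (shiftE L) ((Polynomial.X - Polynomial.C α) * c) u = 0) :
    ∃ k : ℕ, 0 < k ∧ α ^ k = 1 := by
  set x : ℕ → L := aeval (shiftE L) c u with hx
  have hrec : ∀ n, x (n + 1) = α * x n := by
    intro n
    rw [map_mul, Module.End.mul_apply, ← hx] at h1
    have := congrFun h1 n
    rw [map_sub, aeval_X, aeval_C] at this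
    simp only [LinearMap.sub_apply, Pi.sub_apply, Module.algebraMap_end_apply, Pi.smul_apply,
      smul_eq_mul, Pi.zero_apply] at this
    exact sub_eq_zero.mp this
  have hgeo : ∀ n, x n = α ^ n * x 0 := by
    intro n
    induction n with
    | zero => simp
    | succ n ih => rw [hrec, ih]; ring
  have hx0 : x 0 ≠ 0 := fun h => h0 (funext fun n => by rw [hgeo, h, mul_zero]; rfl)
  apply root_of_unity_of_height_zero α hα
  -- if `h(α) > 0`, the height of `x n = α ^ n * x 0` grows at the linear rate `h(α)`, whereas tame
  -- windows make it smaller than any linear function infinitely often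
  by_contra! hpos
  set S : ℝ := ∑ v : NumberField.InfinitePlace L, (v.mult : ℝ) with hS
  have hS0 : 0 ≤ S := by positivity
  set H := Height.logHeight₁ α with hH
  obtain ⟨N, hN⟩ := exists_nat_gt (2 * Height.logHeight₁ (x 0) / H)
  obtain ⟨n, hn, D, hD, hDe, hint, hnorm⟩ := hu.aeval c (H / (6 * (S + 1))) (by positivity) (N + 1)
  set ε := H / (6 * (S + 1)) with hε
  have hε0 : 0 < ε := by positivity
  rw [← hx] at hint hnorm
  have hDL : (D : L) ≠ 0 := by exact_mod_cast hD.ne'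
  have b1 : Height.logHeight₁ ((D : L) * x n) ≤ S * (2 * ε * n) := by
    refine logHeight_le_of_isIntegral _ hint _ (by positivity) fun τ => ?_
    rw [map_mul, norm_mul, map_natCast, Complex.norm_natCast,
      show 2 * ε * n = ε * n + ε * n by ring, Real.exp_add]
    exact mul_le_mul hDe (hnorm τ) (norm_nonneg _) (Real.exp_pos _).le
  have b2 : Height.logHeight₁ (D : L) ≤ S * (ε * n) := by
    refine logHeight_le_of_isIntegral _ (isIntegral_natCast (R := ℤ) D) _ (by positivity) fun τ => ?_
    rw [map_natCast, Complex.norm_natCast]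
    exact hDe
  have b3 : Height.logHeight₁ (x n) ≤ S * (3 * ε * n) := by
    have : x n = ((D : L) * x n) * (D : L)⁻¹ := by field_simp
    rw [this]
    refine (Height.logHeight₁_mul_le _ _).trans ?_
    rw [Height.logHeight₁_inv]
    linarith
  have b4 : n * H ≤ Height.logHeight₁ (x n) + Height.logHeight₁ (x 0) := by
    rw [hH, ← Height.logHeight₁_pow]
    have : α ^ n = x n * (x 0)⁻¹ := by rw [hgeo n]; field_simp
    rw [this]
    refine (Height.logHeight₁_mul_le _ _).trans ?_
    rw [Height.logHeight₁_inv]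
  have hn1 : (N : ℝ) ≤ n := by exact_mod_cast (by omega : N ≤ n)
  have b5 : 2 * Height.logHeight₁ (x 0) < n * H := by
    have := hN.trans_le hn1
    rwa [div_lt_iff₀ hpos] at this
  have b6 : S * (3 * ε * n) ≤ n * H / 2 := by
    have : ε * (6 * (S + 1)) = H := by rw [hε]; field_simp
    have hn0 : (0 : ℝ) ≤ n := Nat.cast_nonneg n
    rw [← this]
    nlinarith [mul_nonneg hε0.le hn0]
  linarith

/-- A multiset of characteristic roots annihilating `u` may be shrunk until no root can be removed. -/
lemma exists_minimal_multiset {L : Type*} [Field L] [DecidableEq L] (u : ℕ → L) (m : Multiset L)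
    (h : aeval (shiftE L) (m.map fun α => Polynomial.X - Polynomial.C α).prod u = 0) :
    ∃ m' ≤ m, aeval (shiftE L) (m'.map fun α => Polynomial.X - Polynomial.C α).prod u = 0 ∧
      ∀ α ∈ m', aeval (shiftE L) ((m'.erase α).map fun α => Polynomial.X - Polynomial.C α).prod u ≠ 0 := by
  induction m using Multiset.strongInductionOn with
  | _ m ih =>
    by_cases hm : ∀ α ∈ m, aeval (shiftE L)
        ((m.erase α).map fun α => Polynomial.X - Polynomial.C α).prod u ≠ 0
    · exact ⟨m, le_rfl, h, hm⟩
    · push Not at hm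
      obtain ⟨α, hα, h0⟩ := hm
      obtain ⟨m', hle, h1, h2⟩ := ih _ (Multiset.erase_lt.mpr hα) h0
      exact ⟨m', hle.trans (Multiset.erase_le α m), h1, h2⟩

/-- All characteristic roots of a tame constant coefficient recurrence can be taken to be roots of
unity. -/
lemma roots_of_unity {K : Type*} [Field K] [NumberField K] (a : ℕ → K) (hT : MostlyTame K a)
    (P : K[X]) (N₀ : ℕ) (c : K[X]) (hc : c.coeff 0 ≠ 0)
    (h : ∀ m ≥ N₀, aeval (shiftE K) c (polyMul P a) m = 0) :
    ∃ M k : ℕ, 0 < M ∧ aeval (shiftE K) (((Polynomial.X : K[X]) ^ M - 1) ^ k)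
      (fun n => polyMul P a (n + N₀)) = 0 := by
  classical
  have hc0 : c ≠ 0 := by rintro rfl; simp at hc
  let L := c.SplittingField
  have : NumberField L := NumberField.of_module_finite K L
  set φ : K →+* L := algebraMap K L with hφ
  set u : ℕ → L := fun n => φ (polyMul P a (n + N₀)) with hu
  have hT' : TameWindows L u := tameWindows_of_mostlyTame φ a hT P N₀
  have hcu : aeval (shiftE L) (c.map φ) u = 0 := by
    funext n
    rw [hu, ← ringHom_aeval_shiftE φ c (fun n => polyMul P a (n + N₀)) n, Pi.zero_apply]
    have := h (n + N₀) (by omega)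
    rw [aeval_shiftE_apply] at this ⊢
    rw [← map_zero φ]
    congr 1
    rw [← this]
    refine Finset.sum_congr rfl fun i _ => ?_
    rw [show n + i + N₀ = n + N₀ + i by ring]
  have hfac := (Polynomial.SplittingField.splits c).eq_prod_roots
  rw [← hφ] at hfac
  set m := (c.map φ).roots with hm
  have hlead : (c.map φ).leadingCoeff ≠ 0 := by
    rw [Polynomial.leadingCoeff_ne_zero]
    exact (Polynomial.map_ne_zero_iff φ.injective).mpr hc0
  have hm0 : aeval (shiftE L) (m.map fun α => Polynomial.X - Polynomial.C α).prod u = 0 := by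
    rw [hfac, map_mul, Module.End.mul_apply, aeval_C, Module.algebraMap_end_apply] at hcu
    exact (smul_eq_zero.mp hcu).resolve_left hlead
  have hne : ∀ α ∈ m, α ≠ 0 := by
    rintro α hα rfl
    have := (Polynomial.mem_roots'.mp hα).2
    rw [Polynomial.IsRoot.def, ← Polynomial.coeff_zero_eq_eval_zero, Polynomial.coeff_map] at this
    exact hc ((map_eq_zero φ).mp this)
  obtain ⟨m', hle, h1, h2⟩ := exists_minimal_multiset u m hm0
  have hroot : ∀ α ∈ m', ∃ k : ℕ, 0 < k ∧ α ^ k = 1 := by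
    intro α hα
    refine ratio_root_of_unity hT' _ α (hne α (Multiset.mem_of_le hle hα)) (h2 α hα) ?_
    rw [← Multiset.prod_cons, ← Multiset.map_cons (fun α => Polynomial.X - Polynomial.C α),
      Multiset.cons_erase hα]
    exact h1
  choose! e he0 he1 using hroot
  have hM : ∀ α ∈ m', e α ∣ ∏ β ∈ m'.toFinset, e β := fun α hα =>
    Finset.dvd_prod_of_mem e (Multiset.mem_toFinset.mpr hα)
  refine ⟨∏ β ∈ m'.toFinset, e β, Multiset.card m',
    Finset.prod_pos fun β hβ => he0 β (Multiset.mem_toFinset.mp hβ), ?_⟩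
  set M := ∏ β ∈ m'.toFinset, e β with hMdef
  have hdvd : (m'.map fun α => Polynomial.X - Polynomial.C α).prod ∣
      ((Polynomial.X : L[X]) ^ M - 1) ^ Multiset.card m' := by
    have : ∀ s : Multiset L, (∀ α ∈ s, α ∈ m') →
        (s.map fun α => Polynomial.X - Polynomial.C α).prod ∣
          ((Polynomial.X : L[X]) ^ M - 1) ^ Multiset.card s := by
      intro s
      induction s using Multiset.induction_on with
      | empty => intro _; simp
      | cons α s ih =>
        intro hs
        rw [Multiset.map_cons, Multiset.prod_cons, Multiset.card_cons, pow_succ']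
        refine mul_dvd_mul ?_ (ih fun β hβ => hs β (Multiset.mem_cons_of_mem hβ))
        rw [Polynomial.dvd_iff_isRoot, Polynomial.IsRoot.def]
        obtain ⟨t, ht⟩ := hM α (hs α (Multiset.mem_cons_self α s))
        rw [eval_sub, eval_pow, eval_X, eval_one, ht, pow_mul, he1 α (hs α (Multiset.mem_cons_self α s)), one_pow, sub_self]
    exact this m' fun _ h => h
  have hfin := aeval_dvd_apply_zero hdvd h1
  funext n
  have := congrFun hfin n
  rw [Pi.zero_apply] at this ⊢
  apply φ.injective
  rw [ringHom_aeval_shiftE, map_zero, ← this]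
  simp [hu]

end RootsOfUnity

/-! ### Polynomiality along residue classes -/

section QuasiPolynomial

lemma fwdDiff_iter_eq {K : Type*} [Field K] (g : ℕ → K) (i : ℕ) :
    (fwdDiff 1)^[i] g = aeval (shiftE K) ((Polynomial.X - 1) ^ i : K[X]) g := by
  induction i with
  | zero => simp
  | succ i ih =>
    rw [Function.iterate_succ_apply', ih, pow_succ', map_mul, Module.End.mul_apply]
    funext n
    simp [fwdDiff, shiftE]

/-- A sequence killed by a power of the difference operator is polynomial (Newton's formula). -/
lemma exists_poly_of_diff {K : Type*} [Field K] [CharZero K] (g : ℕ → K) (k : ℕ)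
    (h : aeval (shiftE K) ((Polynomial.X - 1) ^ k : K[X]) g = 0) :
    ∃ U : K[X], ∀ n : ℕ, g n = U.eval (n : K) := by
  refine ⟨∑ i ∈ Finset.range k,
    Polynomial.C (aeval (shiftE K) ((Polynomial.X - 1) ^ i : K[X]) g 0 / i.factorial) *
      descPochhammer K i, fun n => ?_⟩
  have h1 := shift_eq_sum_fwdDiff_iter 1 g n 0
  rw [zero_add, smul_eq_mul, mul_one] at h1
  rw [h1, Polynomial.eval_finsetSum]
  have h2 : ∀ i, Polynomial.eval (n : K) (Polynomial.C
      (aeval (shiftE K) ((Polynomial.X - 1) ^ i : K[X]) g 0 / i.factorial) * descPochhammer K i) =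
      n.choose i • (fwdDiff 1)^[i] g 0 := by
    intro i
    rw [Polynomial.eval_mul, Polynomial.eval_C, descPochhammer_eval_eq_descFactorial,
      Nat.descFactorial_eq_factorial_mul_choose, fwdDiff_iter_eq, nsmul_eq_mul]
    have : (i.factorial : K) ≠ 0 := by exact_mod_cast i.factorial_ne_zero
    push_cast
    field_simp
  rw [Finset.sum_congr rfl fun i _ => h2 i]
  rw [Finset.sum_subset (Finset.range_mono (Nat.le_add_right (n + 1) k))]
  · rw [Finset.sum_subset (Finset.range_mono (Nat.le_add_left k (n + 1)))]
    intro i _ hi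
    rw [fwdDiff_iter_eq, aeval_dvd_apply_zero (pow_dvd_pow _ (by simpa using hi)) h]
    simp
  · intro i _ hi
    rw [Nat.choose_eq_zero_of_lt (by simpa using hi), zero_smul]

/-- Restriction to a residue class modulo `M` turns `E ^ M` into `E`. -/
lemma aeval_restrict {K : Type*} [Field K] (y : ℕ → K) (M j k n : ℕ) :
    aeval (shiftE K) ((Polynomial.X - 1) ^ k : K[X]) (fun n => y (M * n + j)) n =
      aeval (shiftE K) ((Polynomial.X ^ M - 1) ^ k : K[X]) y (M * n + j) := by
  induction k generalizing n with
  | zero => simp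
  | succ k ih =>
    rw [pow_succ', pow_succ', map_mul, map_mul, Module.End.mul_apply, Module.End.mul_apply]
    simp only [map_sub, aeval_X, map_one, map_pow, LinearMap.sub_apply, Pi.sub_apply,
      Module.End.one_apply, shiftE_pow_apply] at ih ⊢
    rw [← ih n, show M * n + j + M = M * (n + 1) + j by ring, ← ih (n + 1)]
    rfl

lemma poly_norm_le (q : ℂ[X]) (e : ℕ) (he : q.natDegree ≤ e) :
    ∃ C : ℝ, 0 ≤ C ∧ ∀ n : ℕ, 1 ≤ n → ‖q.eval (n : ℂ)‖ ≤ C * (n : ℝ) ^ e := by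
  refine ⟨∑ i ∈ Finset.range (q.natDegree + 1), ‖q.coeff i‖, by positivity, fun n hn => ?_⟩
  rw [eval_eq_sum_range, Finset.sum_mul]
  refine (norm_sum_le _ _).trans (Finset.sum_le_sum fun i hi => ?_)
  rw [norm_mul, norm_pow, Complex.norm_natCast]
  refine mul_le_mul_of_nonneg_left (pow_le_pow_right₀ (by exact_mod_cast hn) ?_) (norm_nonneg _)
  rw [Finset.mem_range] at hi; omega

/-- A proper rational function is `O(1/n)`. -/
lemma proper_norm_le (R V : ℂ[X]) (h : R.degree < V.degree) :
    ∃ C : ℝ, 0 ≤ C ∧ ∃ N : ℕ, ∀ n ≥ N, ‖R.eval (n : ℂ) / V.eval (n : ℂ)‖ ≤ C / n := by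
  have hV : V ≠ 0 := by rintro rfl; simp at h
  by_cases hR : R = 0
  · exact ⟨0, le_rfl, 0, fun n _ => by simp [hR]⟩
  obtain ⟨e, he⟩ : ∃ e, V.natDegree = e + 1 :=
    ⟨V.natDegree - 1, by have := Polynomial.natDegree_lt_natDegree hR h; omega⟩
  obtain ⟨C₁, hC₁, h₁⟩ := poly_norm_le R e
    (by have := Polynomial.natDegree_lt_natDegree hR h; omega)
  obtain ⟨C₂, hC₂, h₂⟩ := poly_norm_le V.eraseLead e
    ((Polynomial.eraseLead_natDegree_le V).trans (by omega))
  have hl : 0 < ‖V.leadingCoeff‖ := norm_pos_iff.mpr (Polynomial.leadingCoeff_ne_zero.mpr hV)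
  set l := ‖V.leadingCoeff‖ with hldef
  obtain ⟨N, hN⟩ := exists_nat_gt (2 * C₂ / l)
  refine ⟨2 * C₁ / l, by positivity, N + 1, fun n hn => ?_⟩
  have hn1 : 1 ≤ n := by omega
  have hn0 : (0 : ℝ) < n := by exact_mod_cast hn1
  have hnN : 2 * C₂ / l < n := hN.trans (by exact_mod_cast (by omega : N < n))
  rw [div_lt_iff₀ hl] at hnN
  have hp : (0 : ℝ) < (n : ℝ) ^ e := by positivity
  have hVn : l / 2 * (n * (n : ℝ) ^ e) ≤ ‖V.eval (n : ℂ)‖ := by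
    have h3 := congrArg (Polynomial.eval (n : ℂ)) V.eraseLead_add_C_mul_X_pow
    rw [Polynomial.eval_add, Polynomial.eval_mul, Polynomial.eval_C, Polynomial.eval_pow,
      Polynomial.eval_X, he] at h3
    rw [← h3, add_comm]
    have h4 : ‖V.leadingCoeff * (n : ℂ) ^ (e + 1)‖ = l * (n * (n : ℝ) ^ e) := by
      rw [norm_mul, norm_pow, Complex.norm_natCast, pow_succ']
    have h5 := norm_sub_le_norm_add (V.leadingCoeff * (n : ℂ) ^ (e + 1)) (V.eraseLead.eval (n : ℂ))
    have h6 := h₂ n hn1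
    have h7 := mul_lt_mul_of_pos_right hnN hp
    rw [h4] at h5
    nlinarith
  have hpos : 0 < ‖V.eval (n : ℂ)‖ := lt_of_lt_of_le (by positivity) hVn
  rw [norm_div, div_le_div_iff₀ hpos hn0]
  calc ‖R.eval (n : ℂ)‖ * n ≤ C₁ * (n : ℝ) ^ e * n := mul_le_mul_of_nonneg_right (h₁ n hn1) hn0.le
    _ = 2 * C₁ / l * (l / 2 * (n * (n : ℝ) ^ e)) := by field_simp
    _ ≤ _ := mul_le_mul_of_nonneg_left hVn (by positivity)

lemma isIntegral_eval_of_coeff {K : Type*} [Field K] (P : K[X]) (D : ℕ)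
    (h : ∀ i < P.natDegree + 1, IsIntegral ℤ ((D : K) * P.coeff i)) (m : ℕ) :
    IsIntegral ℤ ((D : K) * P.eval (m : K)) := by
  rw [eval_eq_sum_range, Finset.mul_sum]
  refine IsIntegral.sum _ fun i hi => ?_
  rw [← mul_assoc]
  exact (h i (Finset.mem_range.mp hi)).mul ((isIntegral_natCast (R := ℤ) m).pow i)

/-- Rational values along a progression with denominators `o(n)` come from a polynomial: the
proper part of `U / V` has all conjugates `O(1/n)` and denominator `o(n)`, so its norm is less than
one. -/
lemma dvd_of_tame {K : Type*} [Field K] [NumberField K] (a : ℕ → K) (hT : MostlyTame K a)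
    (ι : K →+* ℂ) (M j : ℕ) (hM : 0 < M) (U V : K[X]) (hV : V ≠ 0)
    (h : ∀ n : ℕ, V.eval (n : K) * a (M * n + j) = U.eval (n : K)) : V ∣ U := by
  rw [← EuclideanDomain.mod_eq_zero]
  by_contra hR
  set R := U % V with hRdef
  set W := U / V with hWdef
  have hUVR : V * W + R = U := EuclideanDomain.div_add_mod U V
  have hdeg : R.degree < V.degree := Polynomial.degree_mod_lt U hV
  have hσ : ∀ σ : K →+* ℂ, ∃ C : ℝ, 0 ≤ C ∧ ∃ N : ℕ, ∀ n ≥ N,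
      ‖(R.map σ).eval (n : ℂ) / (V.map σ).eval (n : ℂ)‖ ≤ C / n := fun σ =>
    proper_norm_le _ _ (by rwa [Polynomial.degree_map, Polynomial.degree_map])
  choose Cσ hCσ Nσ hNσ using hσ
  obtain ⟨D, hD, hDi⟩ := exists_common_den W.coeff (W.natDegree + 1)
  obtain ⟨N₁, hN₁⟩ := eventually_eval_ne_zero R hR
  obtain ⟨N₂, hN₂⟩ := eventually_eval_ne_zero V hV
  set C := ∑ σ, Cσ σ with hC
  have hC0 : 0 ≤ C := Finset.sum_nonneg fun σ _ => hCσ σ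
  set ε : ℝ := 1 / (4 * D * M * (C + 1)) with hε
  have hDr : (0 : ℝ) < D := by exact_mod_cast hD
  have hMr : (0 : ℝ) < M := by exact_mod_cast hM
  have hε0 : 0 < ε := by positivity
  set T := N₁ + N₂ + (∑ σ, Nσ σ) + j + 1 with hTdef
  obtain ⟨n', hn', hw⟩ := exists_tame_window a hT M ε hε0 (M * T + j)
  -- a window of length `M` meets every residue class modulo `M`
  obtain ⟨n, hnT, i, hi, hni⟩ : ∃ n ≥ T, ∃ i ≤ M, n' + i = M * n + j := by
    refine ⟨(n' - j) / M + 1, ?_, M - (n' - j) % M, Nat.sub_le _ _, ?_⟩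
    · have : T ≤ (n' - j) / M := by
        rw [Nat.le_div_iff_mul_le hM, mul_comm]; omega
      omega
    · have h1 := Nat.div_add_mod (n' - j) M
      have h2 := Nat.mod_lt (n' - j) hM
      rw [mul_add]; omega
  obtain ⟨hden, -⟩ := hw i hi
  rw [hni] at hden
  have hn0 : (0 : ℝ) < n := by exact_mod_cast (by omega : 0 < n)
  have hVn : V.eval (n : K) ≠ 0 := hN₂ n (by omega)
  set x : K := R.eval (n : K) / V.eval (n : K) with hx
  have hxa : x = a (M * n + j) - W.eval (n : K) := by
    rw [hx, div_eq_iff hVn]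
    have h1 := h n
    rw [← hUVR, Polynomial.eval_add, Polynomial.eval_mul] at h1
    linear_combination -h1
  have hx0 : x ≠ 0 := div_ne_zero (hN₁ n (by omega)) hVn
  apply hx0
  obtain ⟨hd0, hdi⟩ := den_spec K (a (M * n + j))
  have hbound : ∀ σ : K →+* ℂ, ‖σ x‖ ≤ C / n := by
    intro σ
    have h1 := hNσ σ n (by
      have := Finset.single_le_sum (f := Nσ) (fun _ _ => Nat.zero_le _) (Finset.mem_univ σ)
      omega)
    have h2 : σ x = (R.map σ).eval (n : ℂ) / (V.map σ).eval (n : ℂ) := by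
      rw [hx, map_div₀, ← map_natCast σ n, Polynomial.eval_map_apply, Polynomial.eval_map_apply]
    rw [h2]
    refine h1.trans (div_le_div_of_nonneg_right ?_ hn0.le)
    exact Finset.single_le_sum (f := Cσ) (fun σ _ => hCσ σ) (Finset.mem_univ σ)
  refine eq_zero_of_small ι x (D * den K (a (M * n + j))) (Nat.mul_pos hD hd0) ?_ (C / n) (C / n)
    hbound (hbound ι) ?_
  · rw [hxa, mul_sub]
    refine IsIntegral.sub ?_ ?_
    · push_cast
      rw [mul_assoc]
      exact (isIntegral_natCast (R := ℤ) D).mul hdi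
    · push_cast
      rw [mul_right_comm, mul_comm]
      exact (isIntegral_natCast (R := ℤ) (den K (a (M * n + j)))).mul
        (isIntegral_eval_of_coeff W D hDi n)
  · have hd1 : Module.finrank ℚ K - 1 + 1 = Module.finrank ℚ K :=
      Nat.sub_add_cancel Module.finrank_pos
    rw [← pow_succ, hd1, ← mul_pow]
    refine pow_lt_one₀ (by positivity) ?_ Module.finrank_pos.ne'
    have hm : ((M * n + j : ℕ) : ℝ) ≤ 2 * M * n := by
      have : M * n + j ≤ 2 * M * n := by
        have h3 : j ≤ n := by omega
        have h4 : n ≤ M * n := Nat.le_mul_of_pos_left n hM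
        rw [mul_assoc, two_mul]; omega
      exact_mod_cast this
    have h1 : (den K (a (M * n + j)) : ℝ) ≤ n / (2 * D * (C + 1)) := by
      refine hden.trans ((mul_le_mul_of_nonneg_left hm hε0.le).trans (le_of_eq ?_))
      rw [hε]; field_simp; norm_num
    push_cast
    calc (D : ℝ) * den K (a (M * n + j)) * (C / n) ≤ D * (n / (2 * D * (C + 1))) * (C / n) := by
          gcongr
      _ = C / (2 * (C + 1)) := by field_simp
      _ < 1 := by rw [div_lt_one (by positivity)]; linarith

/-- Multiplication by `(1 - z ^ M) ^ k` acts on coefficients as `(E ^ M - 1) ^ k`, up to the index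
shift by `M k`. -/
lemma coeff_pow_mul_mk {K : Type*} [Field K] (a : ℕ → K) (M k n : ℕ) :
    PowerSeries.coeff (n + M * k) (((1 : PowerSeries K) - PowerSeries.X ^ M) ^ k * PowerSeries.mk a)
      = aeval (shiftE K) ((Polynomial.X ^ M - 1) ^ k : K[X]) a n := by
  induction k generalizing n with
  | zero => simp
  | succ k ih =>
    rw [pow_succ', pow_succ', mul_assoc, sub_mul, one_mul, map_sub,
      show n + M * (k + 1) = (n + M * k) + M by ring, PowerSeries.coeff_X_pow_mul, ih n,
      show n + M * k + M = (n + M) + M * k by ring, ih (n + M)]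
    rw [map_mul, Module.End.mul_apply]
    simp [shiftE_pow_apply]

/-- The sequence of values of a polynomial is killed by a higher power of the difference operator. -/
lemma ann_of_poly {K : Type*} [Field K] (W : K[X]) (k : ℕ) (hk : W.natDegree < k) :
    aeval (shiftE K) ((Polynomial.X - 1) ^ k : K[X]) (fun n : ℕ => W.eval (n : K)) = 0 := by
  have h1 : aeval (shiftE K) ((Polynomial.X - 1) ^ 1 : K[X]) (fun _ => 1) = 0 := by
    funext n
    simp [shiftE]
  have h2 := ann_polyMul (Polynomial.X - 1) 1 W.natDegree W le_rfl _ h1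
  have h3 : polyMul W (fun _ => (1 : K)) = fun n : ℕ => W.eval (n : K) := by
    funext n; simp [polyMul]
  rw [h3] at h2
  exact aeval_dvd_apply_zero (pow_dvd_pow _ (by omega)) h2

/-- A mostly tame sequence whose polynomial multiple is killed by `(E ^ M - 1) ^ k` has rational
generating function with poles at roots of unity. -/
lemma rational_of_ann {K : Type*} [Field K] [NumberField K] (a : ℕ → K) (hT : MostlyTame K a)
    (ι : K →+* ℂ) (P : K[X]) (hP : P ≠ 0) (N₀ M k : ℕ) (hM : 0 < M)
    (h : aeval (shiftE K) ((Polynomial.X ^ M - 1) ^ k : K[X])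
      (fun n => polyMul P a (n + N₀)) = 0) :
    ∃ N : ℕ, ∃ Q : K[X],
      ((1 : PowerSeries K) - PowerSeries.X ^ M) ^ N * PowerSeries.mk a = (Q : PowerSeries K) := by
  -- along each residue class modulo `M`, `P a` is a polynomial sequence, hence so is `a` by tameness
  have hres : ∀ j : ℕ, ∃ W : K[X], ∃ T : ℕ, ∀ n ≥ T, a (M * n + (j + N₀)) = W.eval (n : K) := by
    intro j
    obtain ⟨U, hU⟩ := exists_poly_of_diff (fun n => polyMul P a (M * n + j + N₀)) k (by
      funext n
      rw [aeval_restrict (fun n => polyMul P a (n + N₀)) M j k n, h]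
      rfl)
    set V : K[X] := P.comp (Polynomial.C (M : K) * Polynomial.X + Polynomial.C ((j + N₀ : ℕ) : K))
      with hVdef
    have hMK : (M : K) ≠ 0 := by exact_mod_cast hM.ne'
    have hV : V ≠ 0 := by
      intro h0
      rw [hVdef, Polynomial.comp_eq_zero_iff] at h0
      rcases h0 with h0 | ⟨-, h0⟩
      · exact hP h0
      · have := congrArg (fun q : K[X] => q.coeff 1) h0
        simp [Polynomial.coeff_X] at this
        exact hM.ne' this
    have hVe : ∀ n : ℕ, V.eval (n : K) = P.eval ((M * n + (j + N₀) : ℕ) : K) := by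
      intro n; rw [hVdef]; simp
    obtain ⟨W, hW⟩ := dvd_of_tame a hT ι M (j + N₀) hM U V hV fun n => by
      rw [hVe, ← hU n]; simp only [polyMul, add_assoc]
    obtain ⟨T, hTT⟩ := eventually_eval_ne_zero V hV
    refine ⟨W, T, fun n hn => mul_left_cancel₀ (hTT n hn) ?_⟩
    rw [← Polynomial.eval_mul, ← hW, ← hU n, hVe]
    simp only [polyMul, add_assoc]
  choose W T hWT using hres
  set S := ∑ j ∈ Finset.range M, T j with hS
  set N := ∑ j ∈ Finset.range M, (W j).natDegree + 1 with hN
  set N₁ := M * S + N₀ with hN₁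
  have hann : aeval (shiftE K) ((Polynomial.X ^ M - 1) ^ N : K[X]) (fun n => a (n + N₁)) = 0 := by
    funext m
    have hj := Nat.mod_lt m hM
    rw [← Nat.div_add_mod m M, ← aeval_restrict]
    set j := m % M with hjdef
    have hTS : T j ≤ S := Finset.single_le_sum (f := T) (fun _ _ => Nat.zero_le _)
      (Finset.mem_range.mpr hj)
    have hWN : (W j).natDegree < N := Nat.lt_succ_of_le
      (Finset.single_le_sum (f := fun j => (W j).natDegree) (fun _ _ => Nat.zero_le _)
        (Finset.mem_range.mpr hj))
    have e : (fun n => a (M * n + j + N₁)) =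
        fun n : ℕ => ((W j).comp (Polynomial.X + Polynomial.C (S : K))).eval (n : K) := by
      funext n
      rw [Polynomial.eval_comp, Polynomial.eval_add, Polynomial.eval_X, Polynomial.eval_C,
        ← Nat.cast_add, ← hWT j (n + S) (by omega), hN₁]
      congr 1; ring
    rw [e, ann_of_poly]
    · rfl
    · rw [Polynomial.natDegree_comp, Polynomial.natDegree_X_add_C, mul_one]; exact hWN
  -- the coefficients of the product vanish from index `N₁ + M N` on
  refine ⟨N, PowerSeries.trunc (N₁ + M * N)
    (((1 : PowerSeries K) - PowerSeries.X ^ M) ^ N * PowerSeries.mk a), ?_⟩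
  ext n
  rw [Polynomial.coeff_coe, PowerSeries.coeff_trunc]
  split_ifs with hn
  · rfl
  · obtain ⟨i, rfl⟩ : ∃ i, n = (i + N₁) + M * N := ⟨n - N₁ - M * N, by omega⟩
    rw [coeff_pow_mul_mk]
    have := congrFun hann i
    rw [aeval_shiftE_apply] at this ⊢
    rw [Pi.zero_apply] at this
    rw [← this]
    refine Finset.sum_congr rfl fun l _ => ?_
    rw [show i + l + N₁ = i + N₁ + l by ring]

end QuasiPolynomial

/-! ### Rationality of mostly tame D-finite series -/

/-- The dichotomy behind the theorem: a D-finite series with mostly tame coefficients is rational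
with poles at roots of unity. -/
lemma rational_of_mostlyTame
    (K : Type*) [Field K] [NumberField K] (ι : K →+* ℂ) (a : ℕ → K)
    (hDF : IsDFinite (PowerSeries.mk a))
    (hr0 : seriesRadius (fun n => ι (a n)) ≠ 0)
    (hrtop : seriesRadius (fun n => ι (a n)) ≠ ⊤) (hT : MostlyTame K a) :
    ∃ M N : ℕ, 0 < M ∧ ∃ P : Polynomial K,
      ((1 : PowerSeries K) - PowerSeries.X ^ M) ^ N * PowerSeries.mk a
        = (P : PowerSeries K) := by
  have hrad := one_le_radius ι a hDF hT hr0 hrtop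
  obtain ⟨p, A, hA, hode⟩ := hDF
  obtain ⟨d, Q, hQ, hrec⟩ := recurrence_of_ode a p A hA hode
  have hG : SubG (PowerSeries.mk fun n => ι (a n)) := by
    have := subG_of_radius (fun n => ι (a n)) 1 one_pos (by simpa using hrad)
    simpa using this
  obtain ⟨D, hD, hDi⟩ := exists_common_den (A 0).reverse.coeff ((A 0).reverse.natDegree + 1)
  have hDK : (D : K) ≠ 0 := by exact_mod_cast hD.ne'
  set χ : K[X] := Polynomial.C (D : K) * (A 0).reverse with hχ
  have hχi : ∀ i, IsIntegral ℤ (χ.coeff i) := by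
    intro i
    rw [hχ, Polynomial.coeff_C_mul]
    by_cases hi : i < (A 0).reverse.natDegree + 1
    · exact hDi i hi
    · rw [Polynomial.coeff_eq_zero_of_natDegree_lt (by omega), mul_zero]
      exact isIntegral_zero
  have hχ0 : χ.coeff 0 ≠ 0 := by
    rw [hχ, Polynomial.coeff_C_mul, Polynomial.coeff_zero_reverse]
    exact mul_ne_zero hDK (Polynomial.leadingCoeff_ne_zero.mpr hA)
  have hroot : ∀ ζ : ℂ, ‖ζ‖ = 1 → ((A 0).map ι).eval ζ = 0 → (χ.map ι).eval ζ⁻¹ = 0 := by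
    intro ζ hζ h0
    have h1 := eval_reverse_inv_eq_zero _ ζ hζ h0
    have h2 : ((A 0).map ι).reverse = (A 0).reverse.map ι := by
      rw [Polynomial.reverse, Polynomial.reverse, Polynomial.natDegree_map, Polynomial.reflect_map]
    rw [hχ, Polynomial.map_mul, Polynomial.eval_mul, ← h2, h1, mul_zero]
  obtain ⟨P, s, N₀, hP, hann⟩ := endgame a χ hχ0 d Q hQ hrec
    (key_window ι a p (fun i => (A i).map ι) hG (ode_map ι a p A hode) hT χ hχi hroot)
  obtain ⟨M, k, hM, h⟩ := roots_of_unity a hT P N₀ (χ ^ s) (coeff_zero_pow_ne hχ0 s) hann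
  obtain ⟨N, R, hR⟩ := rational_of_ann a hT ι P hP N₀ M k hM h
  exact ⟨M, N, hM, R, hR⟩

/-- Let `f = ∑ aₙ zⁿ ∈ K[[z]]` be D-finite over a number field `K`, with
radius of convergence `r` of the complex series satisfying `0 < r < ∞`. Then either
(i) `h(aₙ) ≥ c n` on a set of positive upper density, or
(ii) `den(aₙ) ≥ c n` on a set of positive upper density and
`h(aₙ) > (1/[K:ℚ]) log n − C` on a set of positive upper density, or
(iii) `(1 − z^M)^N f` is a polynomial for some `M ≥ 1`, `N ≥ 0`, i.e. `f` is rational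
with all finite poles roots of unity. -/
theorem dfinite_height_trichotomy
    (K : Type*) [Field K] [NumberField K] (ι : K →+* ℂ) (a : ℕ → K)
    (hDF : IsDFinite (PowerSeries.mk a))
    (hr0 : seriesRadius (fun n => ι (a n)) ≠ 0)
    (hrtop : seriesRadius (fun n => ι (a n)) ≠ ⊤) :
    (∃ c : ℝ, 0 < c ∧ HasPosUpperDensity {n : ℕ | c * n ≤ weilHeight K (a n)}) ∨
    ((∃ c : ℝ, 0 < c ∧ HasPosUpperDensity {n : ℕ | c * n ≤ (den K (a n) : ℝ)}) ∧
      ∃ C : ℝ, HasPosUpperDensity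
        {n : ℕ | (1 / (Module.finrank ℚ K : ℝ)) * Real.log n - C < weilHeight K (a n)}) ∨
    (∃ M N : ℕ, 0 < M ∧ ∃ P : Polynomial K,
      ((1 : PowerSeries K) - PowerSeries.X ^ M) ^ N * PowerSeries.mk a
        = (P : PowerSeries K)) := by
  by_cases h1 : ∃ c : ℝ, 0 < c ∧ HasPosUpperDensity {n : ℕ | c * n ≤ weilHeight K (a n)}
  · exact Or.inl h1
  by_cases h2 : ∃ c : ℝ, 0 < c ∧ HasPosUpperDensity {n : ℕ | c * n ≤ (den K (a n) : ℝ)}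
  · exact Or.inr (Or.inl ⟨h2, height_of_den K a h2⟩)
  · exact Or.inr (Or.inr (rational_of_mostlyTame K ι a hDF hr0 hrtop
      (mostlyTame_of_not_pos K a h1 h2)))
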